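/- Fix k ∈ ℕ (k ≥ 1) and α > 0, and let φ : ℝ → ℂ be a Schwartz function with φ̂ real-valued, 0 ≤ φ̂(ξ) ≤ 1 for all ξ, supp(φ̂) ⊆ [−1, 1] and φ̂(ξ) = 1 for ξ ∈ [−1/2, 1/2]. For a trigonometric polynomial f(x) = Σ_{n=1}^N c_n e^{iλ_n x} with distinct real exponents and j ∈ ℕ, define S_j f(x) := Σ_{n : |λ_n| ≤ 2^j} c_n e^{iλ_n x} and R_j f(x) := Σ_{n=1}^N φ̂(2^{−j} λ_n) c_n e^{iλ_n x}. Then there exists a constant C = C(k, α, φ) > 0 such that for every α-separated trigonometric polynomial f, ‖(Σ_{j=1}^∞ |S_j f − R_j f|²)^{1/2}‖_{S^{2^k}} ≤ C ‖f‖_{S^{2^k}}. -/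

import Mathlib

open MeasureTheory

/-- A trigonometric polynomial `x ↦ Σ_{n<N} c_n e^{iλ_n x}` with strictly increasing real
exponents. -/
structure TrigPoly where
  N : ℕ
  c : ℕ → ℂ
  Λ : ℕ → ℝ
  mono : ∀ n, n + 1 < N → Λ n < Λ (n + 1)

/-- Evaluation of a trigonometric polynomial. -/
noncomputable def TrigPoly.eval (P : TrigPoly) (x : ℝ) : ℂ :=
  ∑ n ∈ Finset.range P.N, P.c n * Complex.exp (Complex.I * (P.Λ n : ℂ) * (x : ℂ))

/-- `α`-separation of the exponents: `λ_{n+1} - λ_n > α`. -/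
def TrigPoly.sep (P : TrigPoly) (α : ℝ) : Prop :=
  ∀ n, n + 1 < P.N → α < P.Λ (n + 1) - P.Λ n

/-- The Stepanov norm `‖f‖_{S^p} = (sup_{x ∈ ℝ} ∫_x^{x+1} |f(s)|^p ds)^{1/p}` of a function
`f : ℝ → ℝ`. -/
noncomputable def stepanovNorm (p : ℝ) (f : ℝ → ℝ) : ℝ :=
  (⨆ x : ℝ, ∫ s in x..(x + 1), |f s| ^ p) ^ (1 / p)

/-- The Fourier transform `φ̂(ξ) = ∫ φ(t) e^{-itξ} dt`. -/
noncomputable def myFourier (φ : ℝ → ℂ) (ξ : ℝ) : ℂ :=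
  ∫ t : ℝ, φ t * Complex.exp (-Complex.I * (t : ℂ) * (ξ : ℂ))

/-- The sharp dyadic partial sum `S_j f(x) = Σ_{|λ_n| ≤ 2^j} c_n e^{iλ_n x}`. -/
noncomputable def TrigPoly.sharpSum (P : TrigPoly) (j : ℕ) (x : ℝ) : ℂ :=
  ∑ n ∈ Finset.range P.N,
    if |P.Λ n| ≤ (2 : ℝ) ^ j then P.c n * Complex.exp (Complex.I * (P.Λ n : ℂ) * (x : ℂ)) else 0

/-- The smoothed dyadic partial sum `R_j f(x) = Σ_n φ̂(2^{-j} λ_n) c_n e^{iλ_n x}`. -/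
noncomputable def TrigPoly.smoothSum (φ : ℝ → ℂ) (P : TrigPoly) (j : ℕ) (x : ℝ) : ℂ :=
  ∑ n ∈ Finset.range P.N,
    myFourier φ (((2 : ℝ) ^ j)⁻¹ * P.Λ n) * P.c n * Complex.exp (Complex.I * (P.Λ n : ℂ) * (x : ℂ))

/-!
By the support properties of `φ̂`, the difference `S_j f - R_j f` is the truncation to `|λ| ≤ 2ʲ` of
the Littlewood–Paley piece of `f` attached to the bump `2 φ(2 ·) - φ`, whose transform lives in an
annulus. There are two steps, both for averages against a weight adapted to a unit interval.

The truncations are removed by an `ℓ²`-valued bound for the Hilbert transform in `L^{2^{m+1}}(μ)`,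
where `μ` is a measure whose characteristic function is supported so close to the origin that
`α`-separated characters are orthogonal in `L²(μ)`. Then Cotlar's identity
`|HG|² = |G|² - H (HG conj G - G conj HG)` doubles the exponent, starting from the isometry in `L²`;
summed over a family, its last term is again a single exponential sum.

The square function of the Littlewood–Paley pieces themselves needs no separation. In a window of
length `2⁻ⁿ` the pieces of scale `2⁻ʲ`, `j ≥ n`, are almost orthogonal in `L²`. In an integral power
of the square function, expand and integrate with the coarsest scale last: the product
of the remaining factors is dominated by averages that are almost constant at that scale, so the
local `L²` bound applies, and a maximal inequality closes the estimate.
-/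

section TrigSums

variable {ι κ : Type*} (s : Finset ι) (t : Finset κ)

/-- The character `x ↦ e^{ilx}` of frequency `l`. -/
noncomputable def charExp (l x : ℝ) : ℂ := Complex.exp (Complex.I * l * x)

/-- The exponential sum `Σ_{i ∈ s} c_i e^{i l_i x}`; the frequencies need not be distinct. -/
noncomputable def trigSum (c : ι → ℂ) (l : ι → ℝ) (x : ℝ) : ℂ := ∑ i ∈ s, c i * charExp (l i) x

/-- The square of the `ℓ²`-valued norm, `Σ_{j ∈ t} |f_j|²`. -/
noncomputable def squareSum (f : κ → ℝ → ℂ) (x : ℝ) : ℝ := ∑ j ∈ t, ‖f j x‖ ^ 2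

lemma norm_charExp (l x : ℝ) : ‖charExp l x‖ = 1 := by
  rw [charExp, show Complex.I * l * x = ((l * x : ℝ) : ℂ) * Complex.I by push_cast; ring,
    Complex.norm_exp_ofReal_mul_I]

lemma charExp_add (a b x : ℝ) : charExp (a + b) x = charExp a x * charExp b x := by
  rw [charExp, charExp, charExp, ← Complex.exp_add]
  push_cast
  ring_nf

lemma charExp_conj (l x : ℝ) : (starRingEnd ℂ) (charExp l x) = charExp (-l) x := by
  simp [charExp, ← Complex.exp_conj]

lemma charExp_sub (a b x : ℝ) :
    charExp (a - b) x = charExp a x * (starRingEnd ℂ) (charExp b x) := by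
  rw [sub_eq_add_neg, charExp_add, charExp_conj]

lemma continuous_charExp (l : ℝ) : Continuous (charExp l) := by
  unfold charExp
  fun_prop

lemma continuous_trigSum (c : ι → ℂ) (l : ι → ℝ) : Continuous (trigSum s c l) :=
  continuous_finsetSum _ fun _ _ => continuous_const.mul (continuous_charExp _)

lemma norm_trigSum_le (c : ι → ℂ) (l : ι → ℝ) (x : ℝ) : ‖trigSum s c l x‖ ≤ ∑ i ∈ s, ‖c i‖ :=
  norm_sum_le_of_le _ fun i _ => by rw [norm_mul, norm_charExp, mul_one]

lemma squareSum_nonneg (f : κ → ℝ → ℂ) (x : ℝ) : 0 ≤ squareSum t f x :=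
  Finset.sum_nonneg fun _ _ => sq_nonneg _

lemma continuous_squareSum {f : κ → ℝ → ℂ} (hf : ∀ j ∈ t, Continuous (f j)) :
    Continuous (squareSum t f) :=
  continuous_finsetSum _ fun j hj => (hf j hj).norm.pow 2

lemma squareSum_trigSum_le (s : κ → Finset ι) (c : κ → ι → ℂ) (l : κ → ι → ℝ) (x : ℝ) :
    squareSum t (fun j => trigSum (s j) (c j) (l j)) x ≤ ∑ j ∈ t, (∑ i ∈ s j, ‖c j i‖) ^ 2 :=
  Finset.sum_le_sum fun _ _ => pow_le_pow_left₀ (norm_nonneg _) (norm_trigSum_le _ _ _ _) 2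

lemma trigSum_add_freq (c : ι → ℂ) (l : ι → ℝ) (a x : ℝ) :
    trigSum s c (fun i => l i + a) x = trigSum s c l x * charExp a x := by
  simp only [trigSum, Finset.sum_mul, charExp_add, mul_assoc]

lemma normSq_trigSum (c : ι → ℂ) (l : ι → ℝ) (x : ℝ) :
    ((‖trigSum s c l x‖ ^ 2 : ℝ) : ℂ) = ∑ p ∈ s ×ˢ s,
      c p.1 * (starRingEnd ℂ) (c p.2) * charExp (l p.1 - l p.2) x := by
  rw [Complex.ofReal_pow, ← Complex.mul_conj', trigSum, map_sum, Finset.sum_mul_sum,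
    Finset.sum_product]
  refine Finset.sum_congr rfl fun i _ => Finset.sum_congr rfl fun j _ => ?_
  rw [charExp_sub, map_mul]
  ring

end TrigSums

section Cotlar

variable {ι κ : Type*} (s : Finset ι) (t : Finset κ) (c : κ → ι → ℂ) (l : κ → ι → ℝ)

/-- The (discrete) Hilbert transform of an exponential sum, up to the factor `-i`: every
coefficient is multiplied by the sign of its frequency. -/
noncomputable def hilbertSum {ι : Type*} (s : Finset ι) (c : ι → ℂ) (l : ι → ℝ) : ℝ → ℂ :=
  trigSum s (fun i => Real.sign (l i) * c i) l

/-- The pairs of frequencies of opposite sign within one member of a family of exponential sums. -/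
noncomputable def crossPairs : Finset (κ × ι × ι) :=
  {p ∈ t ×ˢ s ×ˢ s | Real.sign (l p.1 p.2.1) ≠ Real.sign (l p.1 p.2.2)}

/-- The coefficients of `Σ_j (F_j conj G_j - G_j conj F_j)`, where `G_j` is an exponential sum and
`F_j` its Hilbert transform. -/
noncomputable def crossCoeff (p : κ × ι × ι) : ℂ :=
  (Real.sign (l p.1 p.2.1) - Real.sign (l p.1 p.2.2) : ℝ)
    * (c p.1 p.2.1 * (starRingEnd ℂ) (c p.1 p.2.2))

/-- The frequency attached to a pair of frequencies in an expanded square. -/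
def crossFreq (p : κ × ι × ι) : ℝ := l p.1 p.2.1 - l p.1 p.2.2

lemma sign_mul_sign_eq {a b : ℝ} (ha : a ≠ 0) (hb : b ≠ 0) :
    a.sign * b.sign = 1 - (a - b).sign * (a.sign - b.sign) := by
  rcases ha.lt_or_gt with ha | ha <;> rcases hb.lt_or_gt with hb | hb
  · simp [Real.sign_of_neg ha, Real.sign_of_neg hb]
  · norm_num [Real.sign_of_neg ha, Real.sign_of_pos hb, Real.sign_of_neg (sub_neg.2 (ha.trans hb))]
  · norm_num [Real.sign_of_pos ha, Real.sign_of_neg hb, Real.sign_of_pos (sub_pos.2 (hb.trans ha))]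
  · simp [Real.sign_of_pos ha, Real.sign_of_pos hb]

lemma le_abs_sub_of_sign_ne {a b δ : ℝ} (hδ : 0 < δ) (ha : δ ≤ |a|) (hb : δ ≤ |b|)
    (hab : a.sign ≠ b.sign) : δ ≤ |a - b| := by
  have ha0 : a ≠ 0 := abs_pos.1 (hδ.trans_le ha)
  have hb0 : b ≠ 0 := abs_pos.1 (hδ.trans_le hb)
  rcases ha0.lt_or_gt with ha' | ha' <;> rcases hb0.lt_or_gt with hb' | hb'
  · exact absurd ((Real.sign_of_neg ha').trans (Real.sign_of_neg hb').symm) hab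
  · rw [abs_of_neg ha'] at ha
    exact le_abs.2 (Or.inr (by linarith))
  · rw [abs_of_pos ha'] at ha
    exact le_abs.2 (Or.inl (by linarith))
  · exact absurd ((Real.sign_of_pos ha').trans (Real.sign_of_pos hb').symm) hab

lemma pow_two_mul_le_of_le_add {a b d : ℝ} (ha : 0 ≤ a) (h : a ≤ b + d) (p : ℕ) :
    a ^ (2 * p) ≤ 4 ^ p * (b ^ (2 * p) + (d ^ 2) ^ p) := by
  have hsq : a ^ 2 ≤ 2 * (b ^ 2 + d ^ 2) :=
    (pow_le_pow_left₀ ha h 2).trans (add_sq_le)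
  have hexp : (2 : ℝ) ^ p * 2 ^ (p - 1) ≤ 4 ^ p := by
    rw [show (4 : ℝ) = 2 * 2 by norm_num, mul_pow]
    gcongr
    · norm_num
    · omega
  calc a ^ (2 * p) ≤ (2 * (b ^ 2 + d ^ 2)) ^ p := by rw [pow_mul]; gcongr
    _ ≤ 2 ^ p * (2 ^ (p - 1) * ((b ^ 2) ^ p + (d ^ 2) ^ p)) := by
        rw [mul_pow]
        gcongr
        exact add_pow_le (sq_nonneg _) (sq_nonneg _) p
    _ ≤ 4 ^ p * (b ^ (2 * p) + (d ^ 2) ^ p) := by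
        rw [← mul_assoc, pow_mul b]
        gcongr

/- The mixed term is absorbed by `K f g ≤ f² / 2 + K² g² / 2`. -/
lemma integral_pow_two_mul_le {X : Type*} [MeasurableSpace X] {μ : Measure X} {f g : X → ℝ} {p : ℕ}
    {B K : ℝ} (hf : Integrable (fun x => f x ^ (2 * p)) μ)
    (hg : Integrable (fun x => g x ^ (2 * p)) μ) (hfg : Integrable (fun x => f x ^ p * g x ^ p) μ)
    (h : ∫ x, f x ^ (2 * p) ∂μ ≤
      B * ∫ x, g x ^ (2 * p) ∂μ + K * ∫ x, f x ^ p * g x ^ p ∂μ) :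
    ∫ x, f x ^ (2 * p) ∂μ ≤ (2 * B + K ^ 2) * ∫ x, g x ^ (2 * p) ∂μ := by
  have hyoung : K * ∫ x, f x ^ p * g x ^ p ∂μ ≤
      1 / 2 * ∫ x, f x ^ (2 * p) ∂μ + K ^ 2 / 2 * ∫ x, g x ^ (2 * p) ∂μ := by
    simp only [← integral_const_mul]
    rw [← integral_add (hf.const_mul _) (hg.const_mul _)]
    refine integral_mono (hfg.const_mul _) ((hf.const_mul _).add (hg.const_mul _)) fun x => ?_
    simp only [mul_comm 2 p, pow_mul]
    nlinarith [sq_nonneg (f x ^ p - K * g x ^ p)]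
  linarith

lemma le_abs_crossFreq {l : κ → ι → ℝ} {δ : ℝ} (hδ : 0 < δ)
    (hl : ∀ j ∈ t, ∀ i ∈ s, δ ≤ |l j i|) {p : κ × ι × ι} (hp : p ∈ crossPairs s t l) :
    δ ≤ |crossFreq l p| := by
  simp only [crossPairs, Finset.mem_filter, Finset.mem_product] at hp
  exact le_abs_sub_of_sign_ne hδ (hl _ hp.1.1 _ hp.1.2.1) (hl _ hp.1.1 _ hp.1.2.2) hp.2

lemma squareSum_trigSum_eq (x : ℝ) :
    (squareSum t (fun j => trigSum s (c j) (l j)) x : ℂ) = ∑ p ∈ t ×ˢ s ×ˢ s,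
      c p.1 p.2.1 * (starRingEnd ℂ) (c p.1 p.2.2) * charExp (crossFreq l p) x := by
  rw [squareSum, Complex.ofReal_sum, Finset.sum_product]
  exact Finset.sum_congr rfl fun j _ => normSq_trigSum s (c j) (l j) x

lemma sum_crossPairs (g : κ × ι × ι → ℂ) (x : ℝ) :
    ∑ p ∈ crossPairs s t l, g p * crossCoeff c l p * charExp (crossFreq l p) x =
      ∑ p ∈ t ×ˢ s ×ˢ s, g p * crossCoeff c l p * charExp (crossFreq l p) x := by
  refine Finset.sum_filter_of_ne fun p _ hp hsign => hp ?_
  simp [crossCoeff, hsign]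

/- Summing `sign a sign b = 1 - sign (a - b) (sign a - sign b)` over pairs of frequencies gives
Cotlar's identity `|HG|² = |G|² - H (HG conj G - G conj HG)`. -/
lemma squareSum_hilbertSum_eq {l : κ → ι → ℝ} (hl : ∀ j ∈ t, ∀ i ∈ s, l j i ≠ 0) (x : ℝ) :
    (squareSum t (fun j => hilbertSum s (c j) (l j)) x : ℂ) =
      squareSum t (fun j => trigSum s (c j) (l j)) x
        - hilbertSum (crossPairs s t l) (crossCoeff c l) (crossFreq l) x := by
  simp only [hilbertSum, squareSum_trigSum_eq]
  rw [trigSum, sum_crossPairs, ← Finset.sum_sub_distrib]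
  refine Finset.sum_congr rfl fun p hp => ?_
  simp only [Finset.mem_product] at hp
  have hsign : ((l p.1 p.2.1).sign * (l p.1 p.2.2).sign : ℂ) = 1 - (crossFreq l p).sign
      * ((l p.1 p.2.1).sign - (l p.1 p.2.2).sign) := by
    exact_mod_cast sign_mul_sign_eq (hl _ hp.1 _ hp.2.1) (hl _ hp.1 _ hp.2.2)
  simp only [crossCoeff, map_mul, Complex.conj_ofReal]
  push_cast
  linear_combination
    c p.1 p.2.1 * (starRingEnd ℂ) (c p.1 p.2.2) * charExp (crossFreq l p) x * hsign

lemma trigSum_crossPairs_eq (x : ℝ) :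
    trigSum (crossPairs s t l) (crossCoeff c l) (crossFreq l) x =
      ∑ j ∈ t, (hilbertSum s (c j) (l j) x * (starRingEnd ℂ) (trigSum s (c j) (l j) x)
        - trigSum s (c j) (l j) x * (starRingEnd ℂ) (hilbertSum s (c j) (l j) x)) := by
  have h := sum_crossPairs s t c l 1 x
  simp only [Pi.one_apply, one_mul] at h
  rw [trigSum, h, Finset.sum_product]
  refine Finset.sum_congr rfl fun j _ => ?_
  simp only [hilbertSum, trigSum, map_sum, Finset.sum_mul_sum, ← Finset.sum_sub_distrib]
  rw [Finset.sum_product]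
  refine Finset.sum_congr rfl fun i _ => Finset.sum_congr rfl fun i' _ => ?_
  simp only [crossCoeff, crossFreq, charExp_sub, map_mul, Complex.conj_ofReal]
  push_cast
  ring

lemma norm_trigSum_crossPairs_sq_le (x : ℝ) :
    ‖trigSum (crossPairs s t l) (crossCoeff c l) (crossFreq l) x‖ ^ 2 ≤
      4 * (squareSum t (fun j => hilbertSum s (c j) (l j)) x
        * squareSum t (fun j => trigSum s (c j) (l j)) x) := by
  rw [trigSum_crossPairs_eq]
  set F := fun j => ‖hilbertSum s (c j) (l j) x‖
  set G := fun j => ‖trigSum s (c j) (l j) x‖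
  have htriangle : ∀ j ∈ t, ‖hilbertSum s (c j) (l j) x * (starRingEnd ℂ) (trigSum s (c j) (l j) x)
      - trigSum s (c j) (l j) x * (starRingEnd ℂ) (hilbertSum s (c j) (l j) x)‖
        ≤ 2 * (F j * G j) := fun j _ => by
    refine (norm_sub_le _ _).trans (le_of_eq ?_)
    simp only [norm_mul, RCLike.norm_conj, F, G]
    ring
  calc _ ≤ (∑ j ∈ t, 2 * (F j * G j)) ^ 2 :=
        pow_le_pow_left₀ (norm_nonneg _) (norm_sum_le_of_le _ htriangle) 2
    _ = 4 * (∑ j ∈ t, F j * G j) ^ 2 := by rw [← Finset.mul_sum]; ring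
    _ ≤ _ := mul_le_mul_of_nonneg_left (Finset.sum_mul_sq_le_sq_mul_sq t F G) (by norm_num)

section FiniteMeasure

variable {μ : Measure ℝ} [IsFiniteMeasure μ]

lemma integrable_squareSum_pow (s : κ → Finset ι) (m : ℕ) :
    Integrable (fun x => squareSum t (fun j => trigSum (s j) (c j) (l j)) x ^ m) μ := by
  refine .of_bound (C := (∑ j ∈ t, (∑ i ∈ s j, ‖c j i‖) ^ 2) ^ m) ?_ (.of_forall fun x => ?_)
  · exact ((continuous_squareSum t fun j _ => continuous_trigSum (s j) (c j) (l j)).pow m)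
      |>.aestronglyMeasurable
  · rw [norm_pow, Real.norm_of_nonneg (squareSum_nonneg _ _ _)]
    exact pow_le_pow_left₀ (squareSum_nonneg _ _ _) (squareSum_trigSum_le t s c l x) m

lemma integrable_squareSum_pow_mul_pow (c' : κ → ι → ℂ) (p : ℕ) :
    Integrable (fun x => squareSum t (fun j => trigSum s (c j) (l j)) x ^ p
      * squareSum t (fun j => trigSum s (c' j) (l j)) x ^ p) μ := by
  refine (integrable_squareSum_pow t c l (fun _ => s) p).mul_bdd
    (c := (∑ j ∈ t, (∑ i ∈ s, ‖c' j i‖) ^ 2) ^ p) ?_ (.of_forall fun x => ?_)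
  · exact ((continuous_squareSum t fun j _ => continuous_trigSum s (c' j) (l j)).pow p)
      |>.aestronglyMeasurable
  · rw [norm_pow, Real.norm_of_nonneg (squareSum_nonneg _ _ _)]
    exact pow_le_pow_left₀ (squareSum_nonneg _ _ _) (squareSum_trigSum_le t (fun _ => s) c' l x) p

lemma integrable_charExp (a : ℝ) : Integrable (charExp a) μ :=
  Integrable.of_bound (C := 1) (continuous_charExp a).aestronglyMeasurable
    (.of_forall fun x => (norm_charExp a x).le)

omit [IsFiniteMeasure μ] in
lemma integral_charExp (a : ℝ) : ∫ x, charExp a x ∂μ = charFun μ a := by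
  rw [charFun_apply_real]
  refine integral_congr_ae (.of_forall fun x => ?_)
  rw [charExp]
  ring_nf

lemma integral_trigSum_eq_zero {δ : ℝ} (hμ : ∀ a, δ ≤ |a| → charFun μ a = 0)
    (c : ι → ℂ) {l : ι → ℝ} (hl : ∀ i ∈ s, δ ≤ |l i|) : ∫ x, trigSum s c l x ∂μ = 0 := by
  simp only [trigSum]
  rw [integral_finsetSum _ fun i _ => (integrable_charExp _).const_mul _]
  refine Finset.sum_eq_zero fun i hi => ?_
  rw [integral_const_mul, integral_charExp, hμ _ (hl i hi), mul_zero]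

variable {δ : ℝ} (hδ : 0 < δ) (hμ : ∀ a, δ ≤ |a| → charFun μ a = 0)
  {l : κ → ι → ℝ} (hl : ∀ j ∈ t, ∀ i ∈ s, δ ≤ |l j i|)

include hδ hl

lemma ne_zero_of_le_abs : ∀ j ∈ t, ∀ i ∈ s, l j i ≠ 0 :=
  fun j hj i hi => abs_pos.1 (hδ.trans_le (hl j hj i hi))

include hμ in
lemma integral_squareSum_hilbertSum :
    ∫ x, squareSum t (fun j => hilbertSum s (c j) (l j)) x ∂μ =
      ∫ x, squareSum t (fun j => trigSum s (c j) (l j)) x ∂μ := by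
  have hV := integrable_squareSum_pow (μ := μ) t c l (fun _ => s) 1
  simp only [pow_one] at hV
  have hH : ∫ x, hilbertSum (crossPairs s t l) (crossCoeff c l) (crossFreq l) x ∂μ = 0 :=
    integral_trigSum_eq_zero _ hμ _ fun p hp => le_abs_crossFreq s t hδ hl hp
  have hHi : Integrable (hilbertSum (crossPairs s t l) (crossCoeff c l) (crossFreq l)) μ :=
    integrable_finsetSum _ fun p _ => (integrable_charExp _).const_mul _
  apply Complex.ofReal_injective
  rw [← integral_complex_ofReal, ← integral_complex_ofReal]
  simp only [squareSum_hilbertSum_eq s t c (ne_zero_of_le_abs s t hδ hl)]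
  exact (integral_sub hV.ofReal hHi).trans (by rw [hH, sub_zero])

/- Squaring Cotlar's identity and applying the exponent `p` inequality to the single exponential sum
on its right-hand side. -/
lemma integral_squareSum_hilbertSum_le_of_le {p : ℕ} {A : ℝ} (hA : 0 ≤ A)
    (ih : ∫ x, (‖hilbertSum (crossPairs s t l) (crossCoeff c l) (crossFreq l) x‖ ^ 2) ^ p ∂μ ≤
      A * ∫ x, (‖trigSum (crossPairs s t l) (crossCoeff c l) (crossFreq l) x‖ ^ 2) ^ p ∂μ) :
    ∫ x, squareSum t (fun j => hilbertSum s (c j) (l j)) x ^ (2 * p) ∂μ ≤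
      (2 * 4 ^ p + (4 ^ p * A * 4 ^ p) ^ 2) *
        ∫ x, squareSum t (fun j => trigSum s (c j) (l j)) x ^ (2 * p) ∂μ := by
  set U := squareSum t (fun j => hilbertSum s (c j) (l j))
  set V := squareSum t (fun j => trigSum s (c j) (l j))
  set H := trigSum (crossPairs s t l) (crossCoeff c l) (crossFreq l)
  set EH := hilbertSum (crossPairs s t l) (crossCoeff c l) (crossFreq l)
  have hU0 : ∀ x, 0 ≤ U x := squareSum_nonneg t _
  have hV0 : ∀ x, 0 ≤ V x := squareSum_nonneg t _
  have hU2 : Integrable (fun x => U x ^ (2 * p)) μ := integrable_squareSum_pow t _ l (fun _ => s) _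
  have hV2 : Integrable (fun x => V x ^ (2 * p)) μ := integrable_squareSum_pow t c l (fun _ => s) _
  have hEH : Integrable (fun x => (‖EH x‖ ^ 2) ^ p) μ := by
    simpa [squareSum, EH, hilbertSum] using integrable_squareSum_pow (μ := μ) {()}
      (fun _ p => (crossFreq l p).sign * crossCoeff c l p) (fun _ => crossFreq l)
      (fun _ => crossPairs s t l) p
  have hUV : Integrable (fun x => U x ^ p * V x ^ p) μ :=
    integrable_squareSum_pow_mul_pow s t _ l c p
  refine integral_pow_two_mul_le hU2 hV2 hUV ?_
  have hU_le : ∀ x, U x ≤ V x + ‖EH x‖ := fun x => by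
    have h := squareSum_hilbertSum_eq s t c (ne_zero_of_le_abs s t hδ hl) x
    calc U x = ‖(U x : ℂ)‖ := by rw [Complex.norm_of_nonneg (hU0 x)]
      _ ≤ ‖(V x : ℂ)‖ + ‖EH x‖ := by rw [h]; exact norm_sub_le _ _
      _ = _ := by rw [Complex.norm_of_nonneg (hV0 x)]
  have hH_le : ∫ x, (‖H x‖ ^ 2) ^ p ∂μ ≤ 4 ^ p * ∫ x, U x ^ p * V x ^ p ∂μ := by
    rw [← integral_const_mul]
    refine integral_mono_of_nonneg (.of_forall fun x => by positivity) (hUV.const_mul _)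
      (.of_forall fun x => ?_)
    simp only [← mul_pow]
    exact pow_le_pow_left₀ (sq_nonneg _) (norm_trigSum_crossPairs_sq_le s t c l x) p
  calc ∫ x, U x ^ (2 * p) ∂μ ≤ ∫ x, 4 ^ p * (V x ^ (2 * p) + (‖EH x‖ ^ 2) ^ p) ∂μ :=
        integral_mono hU2 ((hV2.add hEH).const_mul _) fun x =>
          pow_two_mul_le_of_le_add (hU0 x) (hU_le x) p
    _ = 4 ^ p * ∫ x, V x ^ (2 * p) ∂μ + 4 ^ p * ∫ x, (‖EH x‖ ^ 2) ^ p ∂μ := by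
        rw [integral_const_mul, integral_add hV2 hEH, mul_add]
    _ ≤ 4 ^ p * ∫ x, V x ^ (2 * p) ∂μ
          + 4 ^ p * (A * (4 ^ p * ∫ x, U x ^ p * V x ^ p ∂μ)) := by
        gcongr
        exact ih.trans (by gcongr)
    _ = _ := by ring

end FiniteMeasure

theorem exists_integral_squareSum_hilbertSum_le (m : ℕ) : ∃ C > 0,
    ∀ {μ : Measure ℝ} [IsFiniteMeasure μ] {δ : ℝ}, 0 < δ → (∀ a, δ ≤ |a| → charFun μ a = 0) →
    ∀ {ι κ : Type} (s : Finset ι) (t : Finset κ) (c : κ → ι → ℂ) (l : κ → ι → ℝ),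
      (∀ j ∈ t, ∀ i ∈ s, δ ≤ |l j i|) →
      ∫ x, squareSum t (fun j => hilbertSum s (c j) (l j)) x ^ 2 ^ m ∂μ ≤
        C * ∫ x, squareSum t (fun j => trigSum s (c j) (l j)) x ^ 2 ^ m ∂μ := by
  induction m with
  | zero =>
    refine ⟨1, one_pos, fun hδ hμ _ _ s t c l hl => ?_⟩
    simpa using (integral_squareSum_hilbertSum s t c hδ hμ hl).le
  | succ m ih =>
    obtain ⟨C, hC, ih⟩ := ih
    refine ⟨2 * 4 ^ 2 ^ m + (4 ^ 2 ^ m * C * 4 ^ 2 ^ m) ^ 2, by positivity,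
      fun hδ hμ _ _ s t c l hl => ?_⟩
    have hcross := ih hδ hμ (crossPairs s t l) {()} (fun _ => crossCoeff c l) (fun _ => crossFreq l)
      fun _ _ _ hp => le_abs_crossFreq s t hδ hl hp
    simp only [squareSum, Finset.sum_singleton] at hcross
    rw [pow_succ']
    exact integral_squareSum_hilbertSum_le_of_le s t c hδ hl hC.le hcross

end Cotlar

section SharpTruncation

variable {ι : Type*} (s : Finset ι)

lemma exists_threshold_gap {l : ι → ℝ} {δ : ℝ}
    (hl : ∀ i ∈ s, ∀ i' ∈ s, l i < l i' → 2 * δ ≤ l i' - l i) (a : ℝ) :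
    ∃ b, (∀ i ∈ s, l i ≤ a → l i + δ ≤ b) ∧ ∀ i ∈ s, a < l i → b + δ ≤ l i := by
  rcases {i ∈ s | l i ≤ a}.eq_empty_or_nonempty with hempty | hne
  · refine ⟨a - δ, fun i hi hia => ?_, fun i _ hia => by linarith⟩
    exact absurd hia (Finset.filter_eq_empty_iff.1 hempty hi)
  · obtain ⟨i₀, hi₀, hmax⟩ := Finset.exists_max_image _ l hne
    rw [Finset.mem_filter] at hi₀
    refine ⟨l i₀ + δ, fun i hi hia => ?_, fun i hi hia => ?_⟩
    · linarith [hmax i (Finset.mem_filter.2 ⟨hi, hia⟩)]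
    · linarith [hl i₀ hi₀.1 i hi (hi₀.2.trans_lt hia)]

lemma sign_sub_of_gap {l a b δ : ℝ} (hδ : 0 < δ) (hle : l ≤ a → l + δ ≤ b)
    (hlt : a < l → b + δ ≤ l) :
    δ ≤ |l - b| ∧ (l - b).sign = if l ≤ a then -1 else 1 := by
  split_ifs with h
  · have := hle h
    exact ⟨le_abs.2 (Or.inr (by linarith)), Real.sign_of_neg (by linarith)⟩
  · have := hlt (not_le.1 h)
    exact ⟨le_abs.2 (Or.inl (by linarith)), Real.sign_of_pos (by linarith)⟩

lemma norm_trigSum_sub_freq (c : ι → ℂ) (l : ι → ℝ) (b x : ℝ) :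
    ‖trigSum s c (fun i => l i - b) x‖ = ‖trigSum s c l x‖ := by
  simp only [sub_eq_add_neg, trigSum_add_freq, norm_mul, norm_charExp, mul_one]

lemma norm_half_sub_sq_le (a b : ℂ) : ‖(a - b) / 2‖ ^ 2 ≤ (‖a‖ ^ 2 + ‖b‖ ^ 2) / 2 := by
  rw [norm_div, Complex.norm_ofNat, div_pow]
  linarith [pow_le_pow_left₀ (norm_nonneg _) (norm_sub_le a b) 2, add_sq_le (a := ‖a‖) (b := ‖b‖)]

/- With thresholds `b₂`, `b₁` just above `R` and just below `-R`, the indicator of `[-R, R]` is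
`(sign (l - b₁) - sign (l - b₂)) / 2` on the frequencies. -/
lemma exists_norm_truncation_sq_le (c : ι → ℂ) {l : ι → ℝ} {δ R : ℝ} (hδ : 0 < δ) (hR : 0 ≤ R)
    (hl : ∀ i ∈ s, ∀ i' ∈ s, l i < l i' → 2 * δ ≤ l i' - l i) :
    ∃ b₁ b₂ : ℝ, (∀ i ∈ s, δ ≤ |l i - b₁|) ∧ (∀ i ∈ s, δ ≤ |l i - b₂|) ∧
      ∀ x, ‖trigSum {i ∈ s | |l i| ≤ R} c l x‖ ^ 2 ≤
        (‖hilbertSum s c (fun i => l i - b₁) x‖ ^ 2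
          + ‖hilbertSum s c (fun i => l i - b₂) x‖ ^ 2) / 2 := by
  obtain ⟨b₂, hle₂, hlt₂⟩ := exists_threshold_gap s hl R
  obtain ⟨b₁, hle₁, hlt₁⟩ := exists_threshold_gap s (l := fun i => -l i) (δ := δ)
    (fun i hi i' hi' h => by linarith [hl i' hi' i hi (by linarith)]) R
  have hsign₂ : ∀ i ∈ s, _ := fun i hi => sign_sub_of_gap hδ (hle₂ i hi) (hlt₂ i hi)
  have hsign₁ : ∀ i ∈ s, _ := fun i hi => sign_sub_of_gap hδ (hle₁ i hi) (hlt₁ i hi)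
  refine ⟨-b₁, b₂, fun i hi => ?_, fun i hi => (hsign₂ i hi).1, fun x => ?_⟩
  · rw [show l i - -b₁ = -(-l i - b₁) by ring, abs_neg]
    exact (hsign₁ i hi).1
  have hsplit : trigSum {i ∈ s | |l i| ≤ R} c l x =
      (trigSum s (fun i => (l i - -b₁).sign * c i) l x
        - trigSum s (fun i => (l i - b₂).sign * c i) l x) / 2 := by
    rw [trigSum, Finset.sum_filter, trigSum, trigSum, ← Finset.sum_sub_distrib, Finset.sum_div]
    refine Finset.sum_congr rfl fun i hi => ?_
    rw [show l i - -b₁ = -(-l i - b₁) by ring, Real.sign_neg, (hsign₁ i hi).2, (hsign₂ i hi).2]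
    simp only [abs_le]
    split_ifs <;> first | (exfalso; grind) | (push_cast; ring)
  rw [hsplit, hilbertSum, hilbertSum, norm_trigSum_sub_freq, norm_trigSum_sub_freq]
  exact norm_half_sub_sq_le _ _

lemma half_add_pow_le {a b : ℝ} (ha : 0 ≤ a) (hb : 0 ≤ b) (n : ℕ) :
    ((a + b) / 2) ^ n ≤ a ^ n + b ^ n := by
  rcases le_total a b with h | h
  · exact (pow_le_pow_left₀ (by positivity) (by linarith) n).trans
      (le_add_of_nonneg_left (by positivity))
  · exact (pow_le_pow_left₀ (by positivity) (by linarith) n).trans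
      (le_add_of_nonneg_right (by positivity))

theorem exists_integral_squareSum_truncation_le (m : ℕ) : ∃ C > 0,
    ∀ {μ : Measure ℝ} [IsFiniteMeasure μ] {δ : ℝ}, 0 < δ → (∀ a, δ ≤ |a| → charFun μ a = 0) →
    ∀ {ι κ : Type} (s : Finset ι) (t : Finset κ) (c : κ → ι → ℂ) (l : ι → ℝ) (R : κ → ℝ),
      (∀ j, 0 ≤ R j) → (∀ i ∈ s, ∀ i' ∈ s, l i < l i' → 2 * δ ≤ l i' - l i) →
      ∫ x, squareSum t (fun j => trigSum {i ∈ s | |l i| ≤ R j} (c j) l) x ^ 2 ^ m ∂μ ≤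
        C * ∫ x, squareSum t (fun j => trigSum s (c j) l) x ^ 2 ^ m ∂μ := by
  obtain ⟨C, hC, hilbert⟩ := exists_integral_squareSum_hilbertSum_le m
  refine ⟨2 * C, by positivity, fun {μ} _ {δ} hδ hμ ι κ s t c l R hR hl => ?_⟩
  choose b₁ b₂ hb₁ hb₂ hle using fun j => exists_norm_truncation_sq_le s (c j) hδ (hR j) hl
  have hmodulated : ∀ b : κ → ℝ, (∀ j, ∀ i ∈ s, δ ≤ |l i - b j|) →
      ∫ x, squareSum t (fun j => hilbertSum s (c j) (fun i => l i - b j)) x ^ 2 ^ m ∂μ ≤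
        C * ∫ x, squareSum t (fun j => trigSum s (c j) l) x ^ 2 ^ m ∂μ := fun b hb => by
    simpa only [squareSum, norm_trigSum_sub_freq] using
      hilbert hδ hμ s t c (fun j i => l i - b j) fun j _ i hi => hb j i hi
  have hint : ∀ b : κ → ℝ, Integrable (fun x =>
      squareSum t (fun j => hilbertSum s (c j) (fun i => l i - b j)) x ^ 2 ^ m) μ :=
    fun b => integrable_squareSum_pow t _ _ (fun _ => s) _
  have hpointwise : ∀ x, squareSum t (fun j => trigSum {i ∈ s | |l i| ≤ R j} (c j) l) x ^ 2 ^ m ≤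
      squareSum t (fun j => hilbertSum s (c j) (fun i => l i - b₁ j)) x ^ 2 ^ m
        + squareSum t (fun j => hilbertSum s (c j) (fun i => l i - b₂ j)) x ^ 2 ^ m := fun x => by
    refine (pow_le_pow_left₀ (squareSum_nonneg _ _ _) ?_ _).trans
      (half_add_pow_le (squareSum_nonneg _ _ _) (squareSum_nonneg _ _ _) _)
    simp only [squareSum, ← Finset.sum_add_distrib, Finset.sum_div]
    exact Finset.sum_le_sum fun j _ => hle j x
  calc _ ≤ ∫ x, (squareSum t (fun j => hilbertSum s (c j) (fun i => l i - b₁ j)) x ^ 2 ^ m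
        + squareSum t (fun j => hilbertSum s (c j) (fun i => l i - b₂ j)) x ^ 2 ^ m) ∂μ :=
        integral_mono_of_nonneg (.of_forall fun x => pow_nonneg (squareSum_nonneg _ _ _) _)
          ((hint b₁).add (hint b₂)) (.of_forall hpointwise)
    _ ≤ _ := by
        rw [integral_add (hint b₁) (hint b₂)]
        linarith [hmodulated b₁ hb₁, hmodulated b₂ hb₂]

end SharpTruncation

section Kernels

open scoped ENNReal

/-- The Cauchy weight `(1 + (2ⁿ t)²)⁻¹` at the dyadic scale `2⁻ⁿ`. -/
noncomputable def cauchyWeight (n : ℕ) (t : ℝ) : ℝ := (1 + (2 ^ n * t) ^ 2)⁻¹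

/-- The convolution kernel `2ⁿ (1 + (2ⁿ t)²)⁻ˢ`, of mass comparable to one. -/
noncomputable def avgKernel (s n : ℕ) (t : ℝ) : ℝ≥0∞ := .ofReal (2 ^ n * cauchyWeight n t ^ s)

variable {l n s : ℕ}

lemma cauchyWeight_pos (n : ℕ) (t : ℝ) : 0 < cauchyWeight n t := by
  unfold cauchyWeight
  positivity

lemma cauchyWeight_le_one (n : ℕ) (t : ℝ) : cauchyWeight n t ≤ 1 :=
  inv_le_one_of_one_le₀ (le_add_of_nonneg_right (sq_nonneg _))

lemma cauchyWeight_sub_comm (n : ℕ) (x y : ℝ) :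
    cauchyWeight n (x - y) = cauchyWeight n (y - x) := by
  rw [cauchyWeight, cauchyWeight, ← neg_sub, mul_neg, neg_sq]

lemma cauchyWeight_zero_two_pow_mul (n : ℕ) (t : ℝ) :
    cauchyWeight 0 (2 ^ n * t) = cauchyWeight n t := by
  rw [cauchyWeight, pow_zero, one_mul, cauchyWeight]

@[fun_prop]
lemma continuous_cauchyWeight (n : ℕ) : Continuous (cauchyWeight n) :=
  Continuous.inv₀ (by fun_prop) fun t => by positivity

lemma cauchyWeight_anti (h : l ≤ n) (t : ℝ) : cauchyWeight n t ≤ cauchyWeight l t := by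
  unfold cauchyWeight
  simp only [mul_pow]
  gcongr
  norm_num

lemma half_le_cauchyWeight {t : ℝ} (ht : 2 ^ n * |t| ≤ 1) : 1 / 2 ≤ cauchyWeight n t := by
  have hsq : (2 ^ n * t) ^ 2 ≤ 1 := by
    rw [← sq_abs, abs_mul, abs_of_pos (by positivity : (0 : ℝ) < 2 ^ n)]
    exact pow_le_one₀ (by positivity) ht
  rw [cauchyWeight, one_div]
  exact inv_anti₀ (by positivity) (by linarith)

/- The inverse weights satisfy `1/w(t+u) ≤ 2 (1/w(t) + 1/w(u))`. -/
lemma cauchyWeight_mul_le_add (n : ℕ) (t u : ℝ) :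
    cauchyWeight n t * cauchyWeight n u ≤
      2 * cauchyWeight n (t + u) * (cauchyWeight n t + cauchyWeight n u) := by
  unfold cauchyWeight
  field_simp
  nlinarith [sq_nonneg (2 ^ n * t - 2 ^ n * u)]

lemma cauchyWeight_mul_le (h : l ≤ n) (u t : ℝ) :
    cauchyWeight l u * cauchyWeight n t ≤ 2 * cauchyWeight l (u + t) := by
  refine (mul_le_mul_of_nonneg_left (cauchyWeight_anti h t) (cauchyWeight_pos _ _).le).trans ?_
  unfold cauchyWeight
  field_simp
  nlinarith [sq_nonneg (2 ^ l * u - 2 ^ l * t), mul_nonneg (sq_nonneg ((2 : ℝ) ^ l * u))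
    (sq_nonneg (2 ^ l * t))]

lemma two_pow_mul_cauchyWeight_le (h : l ≤ n) {t : ℝ} (ht : 1 ≤ 2 ^ l * |t|) :
    2 ^ n * cauchyWeight n t ≤ 2 * (2 ^ l * cauchyWeight l t) := by
  have hpow : (2 : ℝ) ^ l ≤ 2 ^ n := pow_le_pow_right₀ one_le_two h
  have hsq : 1 ≤ (2 ^ l * t) ^ 2 := by
    rw [← sq_abs, abs_mul, abs_of_pos (by positivity : (0 : ℝ) < 2 ^ l)]
    exact one_le_pow₀ ht
  have hbase : 2 ^ n * (1 + (2 ^ l * t) ^ 2) ≤ 2 * 2 ^ l * (2 ^ n * t) ^ 2 :=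
    calc 2 ^ n * (1 + (2 ^ l * t) ^ 2) ≤ 2 ^ n * (2 * (2 ^ l * t) ^ 2) := by gcongr; linarith
      _ = 2 * 2 ^ n * t ^ 2 * (2 ^ l * 2 ^ l) := by ring
      _ ≤ 2 * 2 ^ n * t ^ 2 * (2 ^ l * 2 ^ n) := by gcongr
      _ = 2 * 2 ^ l * (2 ^ n * t) ^ 2 := by ring
  unfold cauchyWeight
  rw [← div_eq_mul_inv, ← div_eq_mul_inv, mul_div_assoc', div_le_div_iff₀ (by positivity)
    (by positivity)]
  nlinarith [pow_pos (two_pos (α := ℝ)) l]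

lemma two_pow_mul_cauchyWeight_pow_le (h : l ≤ n) (hs : 1 ≤ s) {t v : ℝ} (ht : 1 ≤ 2 ^ l * |t|)
    (htv : cauchyWeight l t ≤ 4 * cauchyWeight l v) :
    2 ^ n * cauchyWeight n t ^ s ≤ 8 ^ s * cauchyWeight l v ^ s * 2 ^ l := by
  obtain ⟨r, rfl⟩ := Nat.exists_eq_add_of_le' hs
  have hn := cauchyWeight_pos n t
  have hl := cauchyWeight_pos l t
  have := cauchyWeight_pos l v
  calc 2 ^ n * cauchyWeight n t ^ (r + 1)
      = (2 ^ n * cauchyWeight n t) * cauchyWeight n t ^ r := by ring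
    _ ≤ (2 * (2 ^ l * cauchyWeight l t)) * cauchyWeight l t ^ r := by
        exact mul_le_mul (two_pow_mul_cauchyWeight_le h ht)
          (pow_le_pow_left₀ hn.le (cauchyWeight_anti h t) r) (by positivity) (by positivity)
    _ = 2 ^ 1 * cauchyWeight l t ^ (r + 1) * 2 ^ l := by ring
    _ ≤ 2 ^ (r + 1) * (4 * cauchyWeight l v) ^ (r + 1) * 2 ^ l := by
        gcongr
        exact one_le_two
    _ = 8 ^ (r + 1) * cauchyWeight l v ^ (r + 1) * 2 ^ l := by
        rw [← mul_pow, ← mul_assoc, mul_pow (2 * 4) (cauchyWeight l v)]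
        norm_num

/- If the coarse weight drops by more than a factor `8` from `u` to `t + u`, then `t` is long and
the fine kernel at `t` is already dominated by the coarse kernel at `t + u`. -/
lemma cauchyWeight_convolution_le (h : l ≤ n) (hs : 1 ≤ s) (t u : ℝ) :
    2 ^ n * cauchyWeight n t ^ s * cauchyWeight l u ^ s ≤ 8 ^ s * cauchyWeight l (t + u) ^ s *
      (2 ^ n * cauchyWeight n t ^ s + 2 ^ l * cauchyWeight l u ^ s) := by
  have ht := cauchyWeight_pos n t
  have hu := cauchyWeight_pos l u
  have htu := cauchyWeight_pos l (t + u)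
  rcases le_or_gt (cauchyWeight l u) (8 * cauchyWeight l (t + u)) with hle | hlt
  · calc 2 ^ n * cauchyWeight n t ^ s * cauchyWeight l u ^ s
        ≤ 2 ^ n * cauchyWeight n t ^ s * (8 * cauchyWeight l (t + u)) ^ s := by gcongr
      _ = 8 ^ s * cauchyWeight l (t + u) ^ s * (2 ^ n * cauchyWeight n t ^ s) := by
          rw [mul_pow]; ring
      _ ≤ _ := by gcongr; exact le_add_of_nonneg_right (by positivity)
  · have hfour : cauchyWeight l t ≤ 4 * cauchyWeight l (t + u) := by
      nlinarith [cauchyWeight_mul_le_add l t u, cauchyWeight_pos l t]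
    have hlong : 1 ≤ 2 ^ l * |t| := by
      by_contra! hshort
      linarith [half_le_cauchyWeight hshort.le, cauchyWeight_le_one l u]
    calc 2 ^ n * cauchyWeight n t ^ s * cauchyWeight l u ^ s
        ≤ 8 ^ s * cauchyWeight l (t + u) ^ s * 2 ^ l * cauchyWeight l u ^ s := by
          exact mul_le_mul_of_nonneg_right (two_pow_mul_cauchyWeight_pow_le h hs hlong hfour)
            (by positivity)
      _ = 8 ^ s * cauchyWeight l (t + u) ^ s * (2 ^ l * cauchyWeight l u ^ s) := by ring
      _ ≤ _ := by gcongr; exact le_add_of_nonneg_left (by positivity)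

@[fun_prop]
lemma measurable_avgKernel (s n : ℕ) : Measurable (avgKernel s n) :=
  (continuous_const.mul ((continuous_cauchyWeight n).pow s)).measurable.ennreal_ofReal

lemma avgKernel_sub_comm (s n : ℕ) (x y : ℝ) : avgKernel s n (x - y) = avgKernel s n (y - x) := by
  rw [avgKernel, avgKernel, cauchyWeight_sub_comm]

lemma lintegral_avgKernel_one (n : ℕ) : ∫⁻ t, avgKernel 1 n t = .ofReal Real.pi := by
  have hint : Integrable fun t => 2 ^ n * cauchyWeight n t :=
    (integrable_inv_one_add_sq.comp_mul_left' (pow_ne_zero n two_ne_zero)).const_mul _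
  have hpos : ∀ t, 0 ≤ 2 ^ n * cauchyWeight n t :=
    fun t => mul_nonneg (by positivity) (cauchyWeight_pos n t).le
  simp only [avgKernel, pow_one]
  rw [← ofReal_integral_eq_lintegral_ofReal hint (.of_forall hpos), integral_const_mul]
  simp only [cauchyWeight]
  rw [Measure.integral_comp_mul_left (fun t : ℝ => (1 + t ^ 2)⁻¹) (2 ^ n),
    integral_univ_inv_one_add_sq, abs_of_pos (by positivity), smul_eq_mul,
    mul_inv_cancel_left₀ (by positivity)]

lemma lintegral_avgKernel_le (hs : 1 ≤ s) (n : ℕ) : ∫⁻ t, avgKernel s n t ≤ .ofReal Real.pi := by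
  rw [← lintegral_avgKernel_one n]
  refine lintegral_mono fun t => ENNReal.ofReal_le_ofReal ?_
  refine mul_le_mul_of_nonneg_left ?_ (by positivity)
  exact pow_le_pow_of_le_one (cauchyWeight_pos n t).le (cauchyWeight_le_one n t) hs

lemma lintegral_avgKernel_sub_le (hs : 1 ≤ s) (n : ℕ) (x : ℝ) :
    ∫⁻ y, avgKernel s n (x - y) ≤ .ofReal Real.pi := by
  rw [lintegral_sub_left_eq_self (avgKernel s n) x]
  exact lintegral_avgKernel_le hs n

lemma avgKernel_mul_avgKernel_le (h : l ≤ n) (hs : 1 ≤ s) (t u : ℝ) :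
    avgKernel s n t * avgKernel s l u ≤
      8 ^ s * avgKernel s l (t + u) * (avgKernel s n t + avgKernel s l u) := by
  have ht := cauchyWeight_pos n t
  have hu := cauchyWeight_pos l u
  have htu := cauchyWeight_pos l (t + u)
  have h8 : (8 ^ s : ℝ≥0∞) = .ofReal (8 ^ s) := by rw [ENNReal.ofReal_pow] <;> norm_num
  rw [h8]
  unfold avgKernel
  rw [← ENNReal.ofReal_mul (by positivity), ← ENNReal.ofReal_mul (by positivity),
    ← ENNReal.ofReal_add (by positivity) (by positivity), ← ENNReal.ofReal_mul (by positivity)]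
  refine ENNReal.ofReal_le_ofReal ?_
  calc _ = 2 ^ l * (2 ^ n * cauchyWeight n t ^ s * cauchyWeight l u ^ s) := by ring
    _ ≤ _ := mul_le_mul_of_nonneg_left (cauchyWeight_convolution_le h hs t u) (by positivity)
    _ = _ := by ring

lemma lintegral_avgKernel_mul_avgKernel_le (h : l ≤ n) (hs : 1 ≤ s) (x z : ℝ) :
    ∫⁻ y, avgKernel s n (x - y) * avgKernel s l (y - z) ≤
      2 * 8 ^ s * .ofReal Real.pi * avgKernel s l (x - z) := by
  calc _ ≤ ∫⁻ y, 8 ^ s * avgKernel s l (x - z) * (avgKernel s n (x - y) + avgKernel s l (z - y)) :=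
        lintegral_mono fun y => by
          simpa [avgKernel_sub_comm s l z y] using
            avgKernel_mul_avgKernel_le h hs (x - y) (y - z)
    _ = 8 ^ s * avgKernel s l (x - z) *
          ((∫⁻ y, avgKernel s n (x - y)) + ∫⁻ y, avgKernel s l (z - y)) := by
        rw [lintegral_const_mul _ (by fun_prop), lintegral_add_left (by fun_prop)]
    _ ≤ 8 ^ s * avgKernel s l (x - z) * (.ofReal Real.pi + .ofReal Real.pi) := by
        gcongr <;> exact lintegral_avgKernel_sub_le hs _ _
    _ = _ := by rw [← two_mul]; ring

end Kernels

section Averages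

open scoped ENNReal

/-- The average `∫ 2ⁿ (1 + (2ⁿ (x - y))²)⁻ˢ h(y) dy` of `h` at the dyadic scale `2⁻ⁿ` around
`x`. -/
noncomputable def dyadicAvg (s n : ℕ) (h : ℝ → ℝ≥0∞) (x : ℝ) : ℝ≥0∞ :=
  ∫⁻ y, avgKernel s n (x - y) * h y

variable {s l n : ℕ} {g h : ℝ → ℝ≥0∞}

@[fun_prop]
lemma measurable_dyadicAvg (s n : ℕ) (hh : Measurable h) : Measurable (dyadicAvg s n h) :=
  Measurable.lintegral_prod_right' (f := fun p : ℝ × ℝ => avgKernel s n (p.1 - p.2) * h p.2)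
    (by fun_prop)

lemma dyadicAvg_mono (hgh : ∀ x, h x ≤ g x) (x : ℝ) : dyadicAvg s n h x ≤ dyadicAvg s n g x :=
  lintegral_mono fun y => mul_le_mul_right (hgh y) _

lemma dyadicAvg_const_mul (hh : Measurable h) (c : ℝ≥0∞) (x : ℝ) :
    dyadicAvg s n (fun y => c * h y) x = c * dyadicAvg s n h x := by
  simp only [dyadicAvg, mul_left_comm _ c]
  exact lintegral_const_mul _ (by fun_prop)

lemma dyadicAvg_le_of_le (hs : 1 ≤ s) {D : ℝ≥0∞} (hD : ∀ x, h x ≤ D) (x : ℝ) :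
    dyadicAvg s n h x ≤ .ofReal Real.pi * D :=
  calc dyadicAvg s n h x ≤ ∫⁻ y, avgKernel s n (x - y) * D :=
        lintegral_mono fun y => mul_le_mul_right (hD y) _
    _ = (∫⁻ y, avgKernel s n (x - y)) * D := lintegral_mul_const _ (by fun_prop)
    _ ≤ _ := mul_le_mul_left (lintegral_avgKernel_sub_le hs n x) _

lemma lintegral_mul_dyadicAvg (hg : Measurable g) (hh : Measurable h) :
    ∫⁻ x, g x * dyadicAvg s n h x = ∫⁻ x, dyadicAvg s n g x * h x := by
  calc _ = ∫⁻ x, ∫⁻ y, g x * (avgKernel s n (x - y) * h y) :=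
        lintegral_congr fun x => (lintegral_const_mul _ (by fun_prop)).symm
    _ = ∫⁻ y, ∫⁻ x, g x * (avgKernel s n (x - y) * h y) :=
        lintegral_lintegral_swap (by fun_prop)
    _ = _ := lintegral_congr fun y => by
        rw [dyadicAvg, ← lintegral_mul_const _ (by fun_prop)]
        exact lintegral_congr fun x => by rw [avgKernel_sub_comm]; ring

/-- The constant in `dyadicAvg_dyadicAvg_le`, where a fine average is absorbed by a coarse one. -/
noncomputable def compConst (s : ℕ) : ℝ≥0∞ := 2 * 8 ^ s * .ofReal Real.pi

lemma compConst_ne_top (s : ℕ) : compConst s ≠ ⊤ := by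
  unfold compConst
  finiteness

lemma dyadicAvg_dyadicAvg_le (hln : l ≤ n) (hs : 1 ≤ s) (hg : Measurable g) (x : ℝ) :
    dyadicAvg s n (dyadicAvg s l g) x ≤ compConst s * dyadicAvg s l g x := by
  calc _ = ∫⁻ y, ∫⁻ z, avgKernel s n (x - y) * (avgKernel s l (y - z) * g z) :=
        lintegral_congr fun y => (lintegral_const_mul _ (by fun_prop)).symm
    _ = ∫⁻ z, ∫⁻ y, avgKernel s n (x - y) * (avgKernel s l (y - z) * g z) :=
        lintegral_lintegral_swap (by fun_prop)
    _ = ∫⁻ z, (∫⁻ y, avgKernel s n (x - y) * avgKernel s l (y - z)) * g z := by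
        simp only [← mul_assoc]
        exact lintegral_congr fun z => lintegral_mul_const _ (by fun_prop)
    _ ≤ ∫⁻ z, compConst s * (avgKernel s l (x - z) * g z) := lintegral_mono fun z => by
        rw [← mul_assoc]
        exact mul_le_mul_left (lintegral_avgKernel_mul_avgKernel_le hln hs x z) _
    _ = _ := lintegral_const_mul _ (by fun_prop)

lemma lintegral_pow_le {X : Type*} [MeasurableSpace X] {ν : Measure X} {f : X → ℝ≥0∞}
    (hf : AEMeasurable f ν) (r : ℕ) :
    (∫⁻ x, f x ∂ν) ^ (r + 1) ≤ (∫⁻ x, f x ^ (r + 1) ∂ν) * ν Set.univ ^ r := by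
  have hr : (0 : ℝ) < (r + 1 : ℕ) := by positivity
  have hle := eLpNorm'_le_eLpNorm'_mul_rpow_measure_univ one_pos
    (by exact_mod_cast Nat.le_add_left 1 r : (1 : ℝ) ≤ (r + 1 : ℕ)) hf.aestronglyMeasurable
  simp only [eLpNorm', enorm_eq_self, ENNReal.rpow_one, ENNReal.rpow_natCast, div_one] at hle
  have hexp : (1 - 1 / (r + 1 : ℕ) : ℝ) * (r + 1 : ℕ) = r := by
    rw [sub_mul, one_div_mul_cancel hr.ne']
    push_cast
    ring
  have hpow := pow_le_pow_left' hle (r + 1)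
  rwa [mul_pow, ← ENNReal.rpow_mul_natCast, ← ENNReal.rpow_mul_natCast, hexp,
    one_div_mul_cancel hr.ne', ENNReal.rpow_one, ENNReal.rpow_natCast] at hpow

lemma dyadicAvg_pow_le (hs : 1 ≤ s) (hh : Measurable h) (r : ℕ) (x : ℝ) :
    dyadicAvg s n h x ^ (r + 1) ≤
      .ofReal Real.pi ^ r * dyadicAvg s n (fun y => h y ^ (r + 1)) x := by
  have hk : Measurable fun y => avgKernel s n (x - y) := by fun_prop
  have hJensen := lintegral_pow_le (ν := volume.withDensity fun y => avgKernel s n (x - y))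
    hh.aemeasurable r
  rw [withDensity_apply _ .univ, setLIntegral_univ, lintegral_withDensity_eq_lintegral_mul _ hk hh,
    lintegral_withDensity_eq_lintegral_mul _ hk (hh.pow_const _)] at hJensen
  refine hJensen.trans ?_
  rw [mul_comm]
  exact mul_le_mul_left (pow_le_pow_left' (lintegral_avgKernel_sub_le hs n x) r) _

lemma lintegral_dyadicAvg_sq_le (hs : 1 ≤ s) (hh : Measurable h) :
    ∫⁻ x, dyadicAvg s n h x ^ 2 ≤ .ofReal Real.pi ^ 2 * ∫⁻ x, h x ^ 2 := by
  have hone (x : ℝ) : dyadicAvg s n (fun _ => 1) x ≤ .ofReal Real.pi := by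
    simpa using dyadicAvg_le_of_le (n := n) hs (fun _ => le_refl (1 : ℝ≥0∞)) x
  calc _ ≤ ∫⁻ x, .ofReal Real.pi * dyadicAvg s n (fun y => h y ^ 2) x :=
        lintegral_mono fun x => by simpa using dyadicAvg_pow_le hs hh 1 x
    _ = .ofReal Real.pi * ∫⁻ x, 1 * dyadicAvg s n (fun y => h y ^ 2) x := by
        simp only [one_mul]
        exact lintegral_const_mul _ (by fun_prop)
    _ = .ofReal Real.pi * ∫⁻ x, dyadicAvg s n (fun _ => 1) x * h x ^ 2 := by
        rw [lintegral_mul_dyadicAvg measurable_const (by fun_prop)]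
    _ ≤ .ofReal Real.pi * ∫⁻ x, .ofReal Real.pi * h x ^ 2 := by
        gcongr with x
        exact hone x
    _ = _ := by rw [lintegral_const_mul _ (by fun_prop), sq, mul_assoc]

end Averages

section MaximalInequality

open scoped ENNReal
open Finset

lemma add_pow_succ_le (a b : ℝ≥0∞) (r : ℕ) :
    (a + b) ^ (r + 1) ≤ a ^ (r + 1) + (r + 1 : ℕ) * (b * (a + b) ^ r) := by
  induction r with
  | zero => simp
  | succ r ih =>
    calc (a + b) ^ (r + 2) = a * (a + b) ^ (r + 1) + b * (a + b) ^ (r + 1) := by ring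
      _ ≤ a * (a ^ (r + 1) + (r + 1 : ℕ) * (b * (a + b) ^ r)) + b * (a + b) ^ (r + 1) := by gcongr
      _ = a ^ (r + 2) + (r + 1 : ℕ) * (b * (a * (a + b) ^ r)) + b * (a + b) ^ (r + 1) := by ring
      _ ≤ a ^ (r + 2) + (r + 1 : ℕ) * (b * ((a + b) * (a + b) ^ r)) + b * (a + b) ^ (r + 1) := by
          gcongr
          exact le_self_add
      _ = _ := by push_cast; ring

lemma sum_range_pow_succ_le (b : ℕ → ℝ≥0∞) (J r : ℕ) : (∑ j ∈ range J, b j) ^ (r + 1) ≤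
    (r + 1 : ℕ) * ∑ n ∈ range J, b n * (∑ j ∈ range (n + 1), b j) ^ r := by
  induction J with
  | zero => simp
  | succ J ih =>
    rw [sum_range_succ (fun n => b n * (∑ j ∈ range (n + 1), b j) ^ r), sum_range_succ b J, mul_add]
    refine (add_pow_succ_le _ _ _).trans ?_
    gcongr

lemma pow_mul_le_add (a b : ℝ≥0∞) (r : ℕ) : a ^ r * b ≤ a ^ (r + 1) + b ^ (r + 1) := by
  rcases le_total b a with hba | hab
  · calc a ^ r * b ≤ a ^ r * a := by gcongr
      _ ≤ _ := by rw [← pow_succ]; exact le_self_add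
  · calc a ^ r * b ≤ b ^ r * b := by gcongr
      _ ≤ _ := by rw [← pow_succ]; exact le_add_self

lemma lintegral_pow_succ_le_of_le_mul {X : Type*} [MeasurableSpace X] {ν : Measure X}
    {f g : X → ℝ≥0∞} {K : ℝ≥0∞} {r : ℕ} (hf : Measurable f) (hg : Measurable g)
    (hfin : ∫⁻ x, f x ^ (r + 1) ∂ν ≠ ⊤)
    (hle : ∫⁻ x, f x ^ (r + 1) ∂ν ≤ K * ∫⁻ x, f x ^ r * g x ∂ν) :
    ∫⁻ x, f x ^ (r + 1) ∂ν ≤ (2 * K) ^ (r + 1) * ∫⁻ x, g x ^ (r + 1) ∂ν := by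
  refine (ENNReal.add_le_add_iff_left hfin).mp ?_
  calc ∫⁻ x, f x ^ (r + 1) ∂ν + ∫⁻ x, f x ^ (r + 1) ∂ν
      ≤ 2 * (K * ∫⁻ x, f x ^ r * g x ∂ν) := by rw [← two_mul]; gcongr
    _ = ∫⁻ x, f x ^ r * (2 * K * g x) ∂ν := by
        rw [← mul_assoc, ← lintegral_const_mul _ (by fun_prop)]
        exact lintegral_congr fun x => by ring
    _ ≤ ∫⁻ x, (f x ^ (r + 1) + (2 * K * g x) ^ (r + 1)) ∂ν :=
        lintegral_mono fun x => pow_mul_le_add _ _ _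
    _ = _ := by
        simp only [mul_pow _ (g _)]
        rw [lintegral_add_left (by fun_prop), lintegral_const_mul _ (by fun_prop)]

/-- The maximal function over the averages at the scales `2⁻ⁿ`, `n < J`. -/
noncomputable def maxAvg (s J : ℕ) (h : ℝ → ℝ≥0∞) (x : ℝ) : ℝ≥0∞ := ⨆ n < J, dyadicAvg s n h x

/-- The increment of the maximal function when the scale `2⁻ⁿ` is added. -/
noncomputable def maxAvgIncr (s : ℕ) (h : ℝ → ℝ≥0∞) (n : ℕ) (x : ℝ) : ℝ≥0∞ :=
  maxAvg s (n + 1) h x - maxAvg s n h x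

/-- The adjoint of the linearised maximal operator, applied to the maximal function. -/
noncomputable def adjointMaxAvg (s J : ℕ) (h : ℝ → ℝ≥0∞) (x : ℝ) : ℝ≥0∞ :=
  ∑ n ∈ range J, dyadicAvg s n (maxAvgIncr s h n) x

variable {s n J : ℕ} {h : ℝ → ℝ≥0∞}

lemma dyadicAvg_le_maxAvg (hn : n < J) (x : ℝ) : dyadicAvg s n h x ≤ maxAvg s J h x :=
  le_iSup₂ (f := fun n (_ : n < J) => dyadicAvg s n h x) n hn

lemma maxAvg_succ (s n : ℕ) (h : ℝ → ℝ≥0∞) (x : ℝ) :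
    maxAvg s (n + 1) h x = maxAvg s n h x ⊔ dyadicAvg s n h x :=
  Nat.iSup_lt_succ _ n

@[fun_prop]
lemma measurable_maxAvg (s J : ℕ) (hh : Measurable h) : Measurable (maxAvg s J h) :=
  .biSup {n | n < J} (Set.to_countable _) fun _ _ => measurable_dyadicAvg _ _ hh

@[fun_prop]
lemma measurable_maxAvgIncr (s n : ℕ) (hh : Measurable h) : Measurable (maxAvgIncr s h n) :=
  (measurable_maxAvg s (n + 1) hh).sub (measurable_maxAvg s n hh)

@[fun_prop]
lemma measurable_adjointMaxAvg (s J : ℕ) (hh : Measurable h) : Measurable (adjointMaxAvg s J h) :=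
  Finset.measurable_sum _ fun _ _ => by fun_prop

lemma sum_range_maxAvgIncr (s J : ℕ) (h : ℝ → ℝ≥0∞) (x : ℝ) :
    ∑ n ∈ range J, maxAvgIncr s h n x = maxAvg s J h x := by
  induction J with
  | zero => simp [maxAvg]
  | succ J ih =>
    rw [sum_range_succ, ih]
    exact add_tsub_cancel_of_le (by rw [maxAvg_succ]; exact le_sup_left)

lemma maxAvg_sq_le (s J : ℕ) (h : ℝ → ℝ≥0∞) (x : ℝ) :
    maxAvg s J h x ^ 2 ≤ 2 * ∑ n ∈ range J, maxAvgIncr s h n x * dyadicAvg s n h x := by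
  have hsq := sum_range_pow_succ_le (fun n => maxAvgIncr s h n x) J 1
  simp only [pow_one, sum_range_maxAvgIncr] at hsq
  refine hsq.trans (mul_le_mul_right (sum_le_sum fun n _ => ?_) _)
  rcases le_total (dyadicAvg s n h x) (maxAvg s n h x) with hle | hle
  · simp [maxAvgIncr, maxAvg_succ, sup_eq_left.mpr hle]
  · rw [maxAvg_succ, sup_eq_right.mpr hle]

lemma lintegral_maxAvg_sq_le (s J : ℕ) (hh : Measurable h) :
    ∫⁻ x, maxAvg s J h x ^ 2 ≤ 2 * ∫⁻ x, adjointMaxAvg s J h x * h x := by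
  calc _ ≤ ∫⁻ x, 2 * ∑ n ∈ range J, maxAvgIncr s h n x * dyadicAvg s n h x :=
        lintegral_mono fun x => maxAvg_sq_le s J h x
    _ = 2 * ∑ n ∈ range J, ∫⁻ x, maxAvgIncr s h n x * dyadicAvg s n h x := by
        rw [lintegral_const_mul _ (by fun_prop), lintegral_finsetSum _ (by fun_prop)]
    _ = 2 * ∑ n ∈ range J, ∫⁻ x, dyadicAvg s n (maxAvgIncr s h n) x * h x := by
        congr! 2 with n
        exact lintegral_mul_dyadicAvg (by fun_prop) hh
    _ = _ := by
        rw [← lintegral_finsetSum _ (by fun_prop)]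
        simp only [adjointMaxAvg, sum_mul]

/- Expanding the square, a pair of scales `l ≤ n` contributes `∫ gₙ TₙTₗgₗ ≤ c ∫ gₙ Tₗgₗ`. -/
lemma lintegral_adjointMaxAvg_sq_le (hs : 1 ≤ s) (J : ℕ) (hh : Measurable h) :
    ∫⁻ x, adjointMaxAvg s J h x ^ 2 ≤
      2 * compConst s * ∫⁻ x, adjointMaxAvg s J h x ^ 1 * maxAvg s J h x := by
  let g := maxAvgIncr s h
  let Tg (n : ℕ) := dyadicAvg s n (g n)
  have hg (n : ℕ) : Measurable (g n) := by fun_prop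
  have hTg (n : ℕ) : Measurable (Tg n) := by fun_prop
  have hpair (n l : ℕ) (hl : l ∈ range (n + 1)) :
      ∫⁻ x, Tg n x * Tg l x ≤ ∫⁻ x, compConst s * (g n x * Tg l x) := by
    rw [← lintegral_mul_dyadicAvg (hg n) (hTg l)]
    refine lintegral_mono fun x => ?_
    rw [mul_left_comm]
    exact mul_le_mul_right (dyadicAvg_dyadicAvg_le (mem_range_succ_iff.mp hl) hs (hg l) x) _
  calc _ ≤ ∫⁻ x, 2 * ∑ n ∈ range J, ∑ l ∈ range (n + 1), Tg n x * Tg l x :=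
        lintegral_mono fun x => by
          simpa [mul_sum, one_add_one_eq_two, adjointMaxAvg] using
            sum_range_pow_succ_le (fun n => Tg n x) J 1
    _ = 2 * ∑ n ∈ range J, ∑ l ∈ range (n + 1), ∫⁻ x, Tg n x * Tg l x := by
        rw [lintegral_const_mul _ (by fun_prop), lintegral_finsetSum _ (by fun_prop)]
        congr! 2 with n
        exact lintegral_finsetSum _ (by fun_prop)
    _ ≤ 2 * ∑ n ∈ range J, ∑ l ∈ range J, ∫⁻ x, compConst s * (g n x * Tg l x) := by
        refine mul_le_mul_right (sum_le_sum fun n hn => ?_) _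
        exact (sum_le_sum (hpair n)).trans
          (sum_le_sum_of_subset (range_mono (mem_range.mp hn)))
    _ = 2 * ∫⁻ x, compConst s * ∑ n ∈ range J, ∑ l ∈ range J, g n x * Tg l x := by
        congr 1
        simp only [mul_sum]
        rw [lintegral_finsetSum _ fun n _ => by fun_prop]
        exact sum_congr rfl fun n _ => (lintegral_finsetSum _ fun l _ => by fun_prop).symm
    _ = _ := by
        rw [lintegral_const_mul _ (by fun_prop), ← mul_assoc]
        congr 2
        funext x
        rw [← sum_mul_sum, pow_one, mul_comm, ← sum_range_maxAvgIncr s J h x]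
        rfl

lemma lintegral_sum_sq_ne_top {ι X : Type*} [MeasurableSpace X] {ν : Measure X} (t : Finset ι)
    {f : ι → X → ℝ≥0∞} (hf : ∀ i ∈ t, Measurable (f i)) (hfin : ∀ i ∈ t, ∫⁻ x, f i x ^ 2 ∂ν ≠ ⊤) :
    ∫⁻ x, (∑ i ∈ t, f i x) ^ 2 ∂ν ≠ ⊤ := by
  have hle (x : X) : (∑ i ∈ t, f i x) ^ 2 ≤ (#t : ℝ≥0∞) * ∑ i ∈ t, f i x ^ 2 := by
    have := ENNReal.rpow_sum_le_const_mul_sum_rpow t (fun i => f i x) one_le_two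
    norm_num at this
    exact this
  refine ne_top_of_le_ne_top ?_ (lintegral_mono hle)
  rw [lintegral_const_mul' _ _ (by finiteness),
    lintegral_finsetSum _ fun i hi => (hf i hi).pow_const 2]
  exact ENNReal.mul_ne_top (by finiteness) (ENNReal.sum_ne_top.mpr hfin)

lemma lintegral_dyadicAvg_sq_ne_top (hs : 1 ≤ s) (n : ℕ) (hh : Measurable h)
    (hfin : ∫⁻ x, h x ^ 2 ≠ ⊤) : ∫⁻ x, dyadicAvg s n h x ^ 2 ≠ ⊤ :=
  ne_top_of_le_ne_top (by finiteness) (lintegral_dyadicAvg_sq_le hs hh)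

lemma lintegral_maxAvg_sq_ne_top (hs : 1 ≤ s) (J : ℕ) (hh : Measurable h)
    (hfin : ∫⁻ x, h x ^ 2 ≠ ⊤) : ∫⁻ x, maxAvg s J h x ^ 2 ≠ ⊤ := by
  refine ne_top_of_le_ne_top (lintegral_sum_sq_ne_top (range J) (f := fun n => dyadicAvg s n h)
    (fun n _ => by fun_prop) fun n _ => lintegral_dyadicAvg_sq_ne_top hs n hh hfin)
    (lintegral_mono fun x => pow_le_pow_left' (iSup₂_le fun n hn => ?_) 2)
  exact single_le_sum (f := fun n => dyadicAvg s n h x) (fun _ _ => zero_le) (mem_range.mpr hn)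

lemma lintegral_adjointMaxAvg_sq_ne_top (hs : 1 ≤ s) (J : ℕ) (hh : Measurable h)
    (hfin : ∫⁻ x, h x ^ 2 ≠ ⊤) : ∫⁻ x, adjointMaxAvg s J h x ^ 2 ≠ ⊤ := by
  refine lintegral_sum_sq_ne_top _ (fun n _ => by fun_prop) fun n _ =>
    lintegral_dyadicAvg_sq_ne_top hs n (by fun_prop) ?_
  exact ne_top_of_le_ne_top (lintegral_maxAvg_sq_ne_top hs (n + 1) hh hfin)
    (lintegral_mono fun x => pow_le_pow_left' tsub_le_self 2)

/- `TT*` argument for the linearised maximal operator. -/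
theorem exists_lintegral_maxAvg_sq_le (hs : 1 ≤ s) :
    ∃ C : ℝ≥0∞, C ≠ ⊤ ∧ ∀ (J : ℕ) {h : ℝ → ℝ≥0∞}, Measurable h → ∫⁻ x, h x ^ 2 ≠ ⊤ →
      ∫⁻ x, maxAvg s J h x ^ 2 ≤ C * ∫⁻ x, h x ^ 2 := by
  have hc := compConst_ne_top s
  let c := (2 * (2 * compConst s)) ^ 2
  refine ⟨2 * ((2 * (c * 2)) ^ 2 + 1), by finiteness, fun J h hh hfin => ?_⟩
  have hmax : ∫⁻ x, maxAvg s J h x ^ 2 ≤ 2 * ∫⁻ x, adjointMaxAvg s J h x ^ 1 * h x := by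
    simpa only [pow_one] using lintegral_maxAvg_sq_le s J hh
  have hadj_fin := lintegral_adjointMaxAvg_sq_ne_top hs J hh hfin
  have hadj_max : ∫⁻ x, adjointMaxAvg s J h x ^ 2 ≤ c * ∫⁻ x, maxAvg s J h x ^ 2 :=
    lintegral_pow_succ_le_of_le_mul (by fun_prop) (by fun_prop) hadj_fin
      (lintegral_adjointMaxAvg_sq_le hs J hh)
  have hadj : ∫⁻ x, adjointMaxAvg s J h x ^ 2 ≤ (2 * (c * 2)) ^ 2 * ∫⁻ x, h x ^ 2 :=
    lintegral_pow_succ_le_of_le_mul (by fun_prop) hh hadj_fin <|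
      hadj_max.trans (by rw [mul_assoc]; gcongr)
  calc _ ≤ 2 * ∫⁻ x, (adjointMaxAvg s J h x ^ 2 + h x ^ 2) :=
        hmax.trans (mul_le_mul_right (lintegral_mono fun x => pow_mul_le_add _ _ _) _)
    _ = 2 * ((∫⁻ x, adjointMaxAvg s J h x ^ 2) + ∫⁻ x, h x ^ 2) := by
        rw [lintegral_add_left (by fun_prop)]
    _ ≤ 2 * ((2 * (c * 2)) ^ 2 * (∫⁻ x, h x ^ 2) + ∫⁻ x, h x ^ 2) := by gcongr
    _ = _ := by ring

end MaximalInequality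

section SlowlyVarying

open scoped ENNReal

/-- `W` varies slowly at the scale `2⁻ⁿ`, to the degree `q`: a Harnack inequality
`W(x) ≤ 4^q (1 + (2ⁿ (x - y))²)^(2q) W(y)`. -/
def IsSlowlyVarying (n q : ℕ) (W : ℝ → ℝ≥0∞) : Prop :=
  ∀ x y, W x * .ofReal (cauchyWeight n (x - y) ^ 2) ^ q ≤ 4 ^ q * W y

variable {l n p q r : ℕ} {V W : ℝ → ℝ≥0∞}

lemma isSlowlyVarying_avgKernel (h : l ≤ n) (z : ℝ) :
    IsSlowlyVarying n 1 fun x => avgKernel 2 l (z - x) := by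
  intro x y
  have hx := cauchyWeight_pos l (z - x)
  have hxy := cauchyWeight_pos n (x - y)
  have hle : cauchyWeight l (z - x) * cauchyWeight n (x - y) ≤ 2 * cauchyWeight l (z - y) := by
    simpa using cauchyWeight_mul_le h (z - x) (x - y)
  have h4 : (4 : ℝ≥0∞) = .ofReal 4 := by norm_num
  simp only [pow_one, avgKernel]
  rw [h4, ← ENNReal.ofReal_mul (by positivity),
    ← ENNReal.ofReal_mul (by positivity)]
  refine ENNReal.ofReal_le_ofReal ?_
  calc _ = 2 ^ l * (cauchyWeight l (z - x) * cauchyWeight n (x - y)) ^ 2 := by ring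
    _ ≤ 2 ^ l * (2 * cauchyWeight l (z - y)) ^ 2 := by gcongr
    _ = _ := by ring

lemma isSlowlyVarying_dyadicAvg (h : l ≤ n) {g : ℝ → ℝ≥0∞} (hg : Measurable g) :
    IsSlowlyVarying n 1 (dyadicAvg 2 l g) := by
  intro x y
  unfold dyadicAvg
  rw [← lintegral_mul_const _ (by fun_prop), ← lintegral_const_mul _ (by fun_prop)]
  refine lintegral_mono fun z => ?_
  rw [mul_right_comm, ← mul_assoc, avgKernel_sub_comm 2 l x, avgKernel_sub_comm 2 l y]
  exact mul_le_mul_left (isSlowlyVarying_avgKernel h z x y) _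

lemma IsSlowlyVarying.mul (hV : IsSlowlyVarying n p V) (hW : IsSlowlyVarying n q W) :
    IsSlowlyVarying n (p + q) fun x => V x * W x := fun x y => by
  rw [pow_add, pow_add, mul_mul_mul_comm, mul_mul_mul_comm (4 ^ p)]
  exact mul_le_mul' (hV x y) (hW x y)

lemma IsSlowlyVarying.pow (hW : IsSlowlyVarying n q W) (r : ℕ) :
    IsSlowlyVarying n (q * r) fun x => W x ^ r := fun x y => by
  rw [pow_mul, pow_mul, ← mul_pow, ← mul_pow]
  exact pow_le_pow_left' (hW x y) r

lemma isSlowlyVarying_sum {ι : Type*} {t : Finset ι} {W : ι → ℝ → ℝ≥0∞}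
    (hW : ∀ i ∈ t, IsSlowlyVarying n q (W i)) : IsSlowlyVarying n q fun x => ∑ i ∈ t, W i x := by
  intro x y
  rw [Finset.sum_mul, Finset.mul_sum]
  exact Finset.sum_le_sum fun i hi => hW i hi x y

lemma IsSlowlyVarying.le_lintegral (hW : IsSlowlyVarying n q W) (hWm : Measurable W)
    {θ : ℝ → ℝ≥0∞} (hθm : Measurable θ) {C : ℝ≥0∞}
    (hθ : 1 ≤ C * ∫⁻ t, θ t * .ofReal (cauchyWeight n t ^ 2) ^ q) (x : ℝ) :
    W x ≤ 4 ^ q * C * ∫⁻ y, θ (x - y) * W y := by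
  calc W x ≤ W x * (C * ∫⁻ t, θ t * .ofReal (cauchyWeight n t ^ 2) ^ q) :=
        le_mul_of_one_le_right' hθ
    _ = C * ∫⁻ y, W x * (θ (x - y) * .ofReal (cauchyWeight n (x - y) ^ 2) ^ q) := by
        rw [lintegral_const_mul _ (by fun_prop), mul_left_comm, lintegral_sub_left_eq_self
          (fun t => θ t * ENNReal.ofReal (cauchyWeight n t ^ 2) ^ q)]
    _ ≤ C * ∫⁻ y, 4 ^ q * (θ (x - y) * W y) := by
        refine mul_le_mul_right (lintegral_mono fun y => ?_) _
        rw [mul_left_comm, mul_left_comm (4 ^ q)]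
        exact mul_le_mul_right (hW x y) _
    _ = _ := by rw [lintegral_const_mul _ (by fun_prop)]; ring

lemma one_le_two_pow_mul_lintegral_avgKernel (s n : ℕ) : 1 ≤ 2 ^ s * ∫⁻ t, avgKernel s n t := by
  let I := Set.Icc (0 : ℝ) (1 / 2 ^ n)
  have hle (t : ℝ) (ht : t ∈ I) : .ofReal (2 ^ n * (1 / 2) ^ s) ≤ avgKernel s n t := by
    refine ENNReal.ofReal_le_ofReal ?_
    gcongr
    refine half_le_cauchyWeight ?_
    rw [abs_of_nonneg ht.1, ← le_div_iff₀' (by positivity)]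
    exact ht.2
  calc (1 : ℝ≥0∞) = 2 ^ s * (.ofReal (2 ^ n * (1 / 2) ^ s) * volume I) := by
        have h2 : (2 ^ s : ℝ≥0∞) = .ofReal (2 ^ s) := by rw [ENNReal.ofReal_pow] <;> norm_num
        rw [Real.volume_Icc, h2, ← ENNReal.ofReal_mul (by positivity),
          ← ENNReal.ofReal_mul (by positivity), ← ENNReal.ofReal_one]
        congr 1
        field_simp
        simp
    _ = 2 ^ s * ∫⁻ _ in I, .ofReal (2 ^ n * (1 / 2) ^ s) := by
        rw [setLIntegral_const]
    _ ≤ 2 ^ s * ∫⁻ t, avgKernel s n t := by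
        refine mul_le_mul_right ?_ _
        exact (setLIntegral_mono (by fun_prop) hle).trans (setLIntegral_le_lintegral _ _)

lemma IsSlowlyVarying.le_dyadicAvg (hW : IsSlowlyVarying n q W) (hWm : Measurable W) (x : ℝ) :
    W x ≤ 4 ^ q * 2 ^ (2 + 2 * q) * dyadicAvg 2 n W x := by
  refine hW.le_lintegral hWm (measurable_avgKernel 2 n) ?_ x
  convert one_le_two_pow_mul_lintegral_avgKernel (2 + 2 * q) n using 4 with t
  have := cauchyWeight_pos n t
  rw [avgKernel, avgKernel, ← ENNReal.ofReal_pow (by positivity),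
    ← ENNReal.ofReal_mul (by positivity)]
  congr 1
  ring

lemma IsSlowlyVarying.sum_lintegral_mul_le (hW : IsSlowlyVarying n q W) (hWm : Measurable W)
    {θ : ℝ → ℝ≥0∞} (hθm : Measurable θ) {Cθ CL : ℝ≥0∞}
    (hθ : 1 ≤ Cθ * ∫⁻ t, θ t * .ofReal (cauchyWeight n t ^ 2) ^ q)
    {ι : Type*} {t : Finset ι} {a : ι → ℝ → ℝ≥0∞} (ha : ∀ i, Measurable (a i))
    {G : ℝ → ℝ≥0∞} (hG : Measurable G)
    (hL : ∀ y, ∑ i ∈ t, ∫⁻ x, θ (x - y) * a i x ≤ CL * G y) :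
    ∑ i ∈ t, ∫⁻ x, W x * a i x ≤ 4 ^ q * Cθ * CL * ∫⁻ y, W y * G y := by
  have (i : ι) : Measurable fun y => ∫⁻ x, θ (x - y) * a i x :=
    Measurable.lintegral_prod_left' (f := fun p : ℝ × ℝ => θ (p.1 - p.2) * a i p.1) (by fun_prop)
  have hterm (i : ι) :
      ∫⁻ x, W x * a i x ≤ 4 ^ q * Cθ * ∫⁻ y, W y * ∫⁻ x, θ (x - y) * a i x :=
    calc _ ≤ ∫⁻ x, 4 ^ q * Cθ * ∫⁻ y, θ (x - y) * W y * a i x := lintegral_mono fun x => by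
          rw [lintegral_mul_const _ (by fun_prop), ← mul_assoc]
          exact mul_le_mul_left (hW.le_lintegral hWm hθm hθ x) _
      _ = 4 ^ q * Cθ * ∫⁻ x, ∫⁻ y, θ (x - y) * W y * a i x :=
          lintegral_const_mul _ (Measurable.lintegral_prod_right'
            (f := fun p : ℝ × ℝ => θ (p.1 - p.2) * W p.2 * a i p.1) (by fun_prop))
      _ = 4 ^ q * Cθ * ∫⁻ y, ∫⁻ x, θ (x - y) * W y * a i x := by
          rw [lintegral_lintegral_swap (by fun_prop)]
      _ = _ := by
          congr 2 with y
          rw [← lintegral_const_mul _ (by fun_prop)]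
          exact lintegral_congr fun x => by ring
  calc _ ≤ ∑ i ∈ t, 4 ^ q * Cθ * ∫⁻ y, W y * ∫⁻ x, θ (x - y) * a i x :=
        Finset.sum_le_sum fun i _ => hterm i
    _ = 4 ^ q * Cθ * ∫⁻ y, W y * ∑ i ∈ t, ∫⁻ x, θ (x - y) * a i x := by
        simp only [← Finset.mul_sum]
        rw [← lintegral_finsetSum _ (by fun_prop)]
        simp only [Finset.mul_sum]
    _ ≤ 4 ^ q * Cθ * ∫⁻ y, CL * (W y * G y) := by
        refine mul_le_mul_right (lintegral_mono fun y => ?_) _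
        rw [mul_left_comm]
        exact mul_le_mul_right (hL y) _
    _ = _ := by rw [lintegral_const_mul _ (by fun_prop), ← mul_assoc]

lemma IsSlowlyVarying.dyadicAvg_le (hV : IsSlowlyVarying l q V) (hVm : Measurable V) (h : l ≤ n)
    (x : ℝ) :
    dyadicAvg 2 n V x ≤ 4 ^ q * 2 ^ (2 + 2 * q) * compConst 2 * dyadicAvg 2 l V x :=
  calc dyadicAvg 2 n V x
      ≤ dyadicAvg 2 n (fun y => 4 ^ q * 2 ^ (2 + 2 * q) * dyadicAvg 2 l V y) x :=
        dyadicAvg_mono (hV.le_dyadicAvg hVm) x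
    _ = 4 ^ q * 2 ^ (2 + 2 * q) * dyadicAvg 2 n (dyadicAvg 2 l V) x :=
        dyadicAvg_const_mul (by fun_prop) _ x
    _ ≤ _ := by
        rw [mul_assoc (4 ^ q * 2 ^ (2 + 2 * q))]
        gcongr
        exact dyadicAvg_dyadicAvg_le h one_le_two hVm x

/-- The constant in `IsSlowlyVarying.sum_lintegral_mul_dyadicAvg_le`. -/
noncomputable def chainConst (q : ℕ) (Cθ CL : ℝ≥0∞) : ℝ≥0∞ :=
  4 ^ q * 2 ^ (2 + 2 * q) * compConst 2 * (4 * Cθ * CL) * compConst 2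

lemma IsSlowlyVarying.sum_lintegral_mul_dyadicAvg_le (hV : IsSlowlyVarying n q V)
    (hVm : Measurable V) {θ : ℝ → ℝ≥0∞} (hθm : Measurable θ) {Cθ CL : ℝ≥0∞}
    (hθ : 1 ≤ Cθ * ∫⁻ t, θ t * .ofReal (cauchyWeight n t ^ 2))
    {t : Finset ℕ} (ht : ∀ i ∈ t, n ≤ i) {a : ℕ → ℝ → ℝ≥0∞} (ha : ∀ i, Measurable (a i))
    {F : ℝ → ℝ≥0∞} (hF : Measurable F)
    (hL : ∀ y, ∑ i ∈ t, ∫⁻ x, θ (x - y) * a i x ≤ CL * dyadicAvg 2 n F y) :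
    ∑ i ∈ t, ∫⁻ x, V x * dyadicAvg 2 i (a i) x ≤
      chainConst q Cθ CL * ∫⁻ y, V y * dyadicAvg 2 n F y := by
  let c : ℝ≥0∞ := 4 ^ q * 2 ^ (2 + 2 * q) * compConst 2
  calc _ ≤ ∑ i ∈ t, c * ∫⁻ x, dyadicAvg 2 n V x * a i x := by
        refine Finset.sum_le_sum fun i hi => ?_
        rw [lintegral_mul_dyadicAvg hVm (ha i), ← lintegral_const_mul _ (by fun_prop)]
        refine lintegral_mono fun x => ?_
        rw [← mul_assoc]
        exact mul_le_mul_left (hV.dyadicAvg_le hVm (ht i hi) x) _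
    _ = c * ∑ i ∈ t, ∫⁻ x, dyadicAvg 2 n V x * a i x := by rw [Finset.mul_sum]
    _ ≤ c * (4 ^ 1 * Cθ * CL * ∫⁻ y, dyadicAvg 2 n V y * dyadicAvg 2 n F y) := by
        gcongr
        exact (isSlowlyVarying_dyadicAvg le_rfl hVm).sum_lintegral_mul_le (by fun_prop) hθm
          (by simpa using hθ) ha (by fun_prop) hL
    _ = c * (4 * Cθ * CL * ∫⁻ y, V y * dyadicAvg 2 n (dyadicAvg 2 n F) y) := by
        rw [lintegral_mul_dyadicAvg hVm (by fun_prop), pow_one]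
    _ ≤ c * (4 * Cθ * CL * ∫⁻ y, compConst 2 * (V y * dyadicAvg 2 n F y)) := by
        refine mul_le_mul_right (mul_le_mul_right (lintegral_mono fun y => ?_) _) _
        rw [mul_left_comm]
        exact mul_le_mul_right (dyadicAvg_dyadicAvg_le le_rfl one_le_two hF y) _
    _ = _ := by
        rw [lintegral_const_mul _ (by fun_prop), chainConst]
        ring

end SlowlyVarying

section SquareFunction

open scoped ENNReal
open Finset

/- The square of the coarse Cauchy weight is `avgKernel 2 0`; splitting it symmetrically between the
two sides turns the weighted maximal inequality into the unweighted one in `L²`. -/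
lemma cauchyWeight_mul_dyadicAvg_le (n : ℕ) {g : ℝ → ℝ≥0∞} (hg : Measurable g) (x₀ x : ℝ) :
    .ofReal (cauchyWeight 0 (x₀ - x)) * dyadicAvg 2 n g x ≤
      2 * dyadicAvg 1 n (fun y => .ofReal (cauchyWeight 0 (x₀ - y)) * g y) x := by
  unfold dyadicAvg
  rw [← lintegral_const_mul _ (by fun_prop), ← lintegral_const_mul _ (by fun_prop)]
  refine lintegral_mono fun y => ?_
  have hx := cauchyWeight_pos 0 (x₀ - x)
  have hxy := cauchyWeight_pos n (x - y)
  have hle : cauchyWeight 0 (x₀ - x) * cauchyWeight n (x - y) ≤ 2 * cauchyWeight 0 (x₀ - y) := by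
    simpa using cauchyWeight_mul_le (Nat.zero_le n) (x₀ - x) (x - y)
  rw [← mul_assoc, ← mul_assoc, ← mul_assoc]
  refine mul_le_mul_left ?_ _
  have h2 : (2 : ℝ≥0∞) = .ofReal 2 := by norm_num
  rw [avgKernel, avgKernel, h2, ← ENNReal.ofReal_mul (by positivity),
    ← ENNReal.ofReal_mul (by positivity), ← ENNReal.ofReal_mul (by positivity)]
  refine ENNReal.ofReal_le_ofReal ?_
  calc _ = 2 ^ n * cauchyWeight n (x - y) * (cauchyWeight 0 (x₀ - x) * cauchyWeight n (x - y)) := by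
        ring
    _ ≤ 2 ^ n * cauchyWeight n (x - y) * (2 * cauchyWeight 0 (x₀ - y)) := by gcongr
    _ = _ := by ring

lemma cauchyWeight_mul_maxAvg_pow_le {F : ℝ → ℝ≥0∞} (hF : Measurable F) (J r : ℕ) (x₀ x : ℝ) :
    .ofReal (cauchyWeight 0 (x₀ - x)) * maxAvg 2 J F x ^ (r + 1) ≤ 2 * .ofReal Real.pi ^ r *
      maxAvg 1 J (fun y => .ofReal (cauchyWeight 0 (x₀ - y)) * F y ^ (r + 1)) x := by
  simp only [maxAvg, ENNReal.iSup_pow_of_ne_zero r.succ_ne_zero, ENNReal.mul_iSup]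
  refine iSup₂_mono fun n _ => ?_
  calc _ ≤ .ofReal (cauchyWeight 0 (x₀ - x)) *
        (.ofReal Real.pi ^ r * dyadicAvg 2 n (fun y => F y ^ (r + 1)) x) :=
        mul_le_mul_right (dyadicAvg_pow_le one_le_two hF r x) _
    _ ≤ .ofReal Real.pi ^ r *
        (2 * dyadicAvg 1 n (fun y => .ofReal (cauchyWeight 0 (x₀ - y)) * F y ^ (r + 1)) x) := by
        rw [mul_left_comm]
        exact mul_le_mul_right (cauchyWeight_mul_dyadicAvg_le n (by fun_prop) x₀ x) _
    _ = _ := by ring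

lemma exists_dyadicAvg_maxAvg_pow_le (r : ℕ) :
    ∃ C : ℝ≥0∞, C ≠ ⊤ ∧ ∀ (J : ℕ) {F : ℝ → ℝ≥0∞} (x₀ : ℝ), Measurable F →
      dyadicAvg 2 0 (fun x => F x ^ (2 * (r + 1))) x₀ ≠ ⊤ →
      dyadicAvg 2 0 (fun x => maxAvg 2 J F x ^ (2 * (r + 1))) x₀ ≤
        C * dyadicAvg 2 0 (fun x => F x ^ (2 * (r + 1))) x₀ := by
  obtain ⟨C, hC, hmax⟩ := exists_lintegral_maxAvg_sq_le le_rfl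
  refine ⟨(2 * .ofReal Real.pi ^ r) ^ 2 * C, by finiteness, fun J F x₀ hF hfin => ?_⟩
  let ρ (x : ℝ) : ℝ≥0∞ := .ofReal (cauchyWeight 0 (x₀ - x))
  let h (x : ℝ) : ℝ≥0∞ := ρ x * F x ^ (r + 1)
  have hρ : Measurable ρ := by fun_prop
  have hh : Measurable h := by fun_prop
  have hsq (g : ℝ → ℝ≥0∞) :
      dyadicAvg 2 0 (fun x => g x ^ (2 * (r + 1))) x₀ = ∫⁻ x, (ρ x * g x ^ (r + 1)) ^ 2 :=
    lintegral_congr fun x => by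
      rw [mul_pow, ← pow_mul, mul_comm 2, ← ENNReal.ofReal_pow (cauchyWeight_pos _ _).le, avgKernel,
        pow_zero, one_mul]
  rw [hsq] at hfin ⊢
  rw [hsq]
  calc _ ≤ ∫⁻ x, (2 * .ofReal Real.pi ^ r) ^ 2 * maxAvg 1 J h x ^ 2 := lintegral_mono fun x => by
        rw [← mul_pow]
        exact pow_le_pow_left' (cauchyWeight_mul_maxAvg_pow_le hF J r x₀ x) 2
    _ = (2 * .ofReal Real.pi ^ r) ^ 2 * ∫⁻ x, maxAvg 1 J h x ^ 2 :=
        lintegral_const_mul _ (by fun_prop)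
    _ ≤ (2 * .ofReal Real.pi ^ r) ^ 2 * (C * ∫⁻ x, h x ^ 2) := by
        gcongr
        exact hmax J hh hfin
    _ = _ := by rw [mul_assoc]

lemma sum_range_pow_add_two_le (b : ℕ → ℝ≥0∞) (J r : ℕ) : (∑ j ∈ range J, b j) ^ (r + 2) ≤
    ((r + 2) * (r + 1) : ℕ) * ∑ n ∈ range J, ∑ i ∈ Ico n J,
      b n * (∑ j ∈ range (n + 1), b j) ^ r * b i := by
  calc _ ≤ (r + 2 : ℕ) * ∑ i ∈ range J, b i * (∑ j ∈ range (i + 1), b j) ^ (r + 1) :=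
        sum_range_pow_succ_le b J (r + 1)
    _ ≤ (r + 2 : ℕ) * ∑ i ∈ range J, b i * ((r + 1 : ℕ) * ∑ n ∈ range (i + 1),
          b n * (∑ j ∈ range (n + 1), b j) ^ r) := by
        gcongr with i
        exact sum_range_pow_succ_le b (i + 1) r
    _ = ((r + 2) * (r + 1) : ℕ) * ∑ i ∈ range J, ∑ n ∈ range (i + 1),
          b n * (∑ j ∈ range (n + 1), b j) ^ r * b i := by
        rw [Nat.cast_mul, mul_assoc]
        simp only [mul_left_comm (b _) ((r + 1 : ℕ) : ℝ≥0∞), mul_comm (b _) (Finset.sum _ _),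
          ← mul_sum, sum_mul]
    _ = _ := by
        congr 1
        refine sum_comm' fun i n => ?_
        simp only [mem_range, mem_Ico]
        omega

variable {J : ℕ} {a θ : ℕ → ℝ → ℝ≥0∞} {F : ℝ → ℝ≥0∞} {Cθ CL : ℝ≥0∞}

lemma dyadicAvg_sum_le (ha : ∀ j, Measurable (a j)) (hF : Measurable F) (hθm : Measurable (θ 0))
    (hθ : 1 ≤ Cθ * ∫⁻ t, θ 0 t * .ofReal (cauchyWeight 0 t ^ 2))
    (hL : ∀ y, ∑ i ∈ range J, ∫⁻ x, θ 0 (x - y) * a i x ≤ CL * dyadicAvg 2 0 F y) (x₀ : ℝ) :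
    dyadicAvg 2 0 (fun x => ∑ j ∈ range J, a j x) x₀ ≤
      4 * Cθ * CL * compConst 2 * dyadicAvg 2 0 F x₀ :=
  calc _ = ∑ j ∈ range J, ∫⁻ x, avgKernel 2 0 (x₀ - x) * a j x := by
        simp only [dyadicAvg, mul_sum]
        exact lintegral_finsetSum _ (by fun_prop)
    _ ≤ 4 ^ 1 * Cθ * CL * dyadicAvg 2 0 (dyadicAvg 2 0 F) x₀ :=
        (isSlowlyVarying_avgKernel le_rfl x₀).sum_lintegral_mul_le (by fun_prop) hθm
          (by simpa using hθ) ha (by fun_prop) hL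
    _ ≤ _ := by
        rw [pow_one, mul_assoc _ (compConst 2)]
        exact mul_le_mul_right (dyadicAvg_dyadicAvg_le le_rfl one_le_two hF x₀) _

lemma isSlowlyVarying_partialSum (ha : ∀ j, Measurable (a j)) (n r : ℕ) (x₀ : ℝ) :
    IsSlowlyVarying n (1 + (1 + 1 * r)) fun x => avgKernel 2 0 (x₀ - x) *
      (dyadicAvg 2 n (a n) x * (∑ j ∈ range (n + 1), dyadicAvg 2 j (a j) x) ^ r) :=
  (isSlowlyVarying_avgKernel n.zero_le x₀).mul <|
    (isSlowlyVarying_dyadicAvg le_rfl (ha n)).mul <| .pow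
      (isSlowlyVarying_sum fun j hj =>
        isSlowlyVarying_dyadicAvg (mem_range_succ_iff.mp hj) (ha j)) r

/- Expand the power of the sum, keeping the coarsest scale `n` last: the remaining factor `V n`
varies slowly at that scale, so the local bound applies to it. -/
lemma dyadicAvg_sum_pow_le_mul (r : ℕ) (ha : ∀ j, Measurable (a j)) (hF : Measurable F)
    (hθm : ∀ n, Measurable (θ n))
    (hθ : ∀ n, 1 ≤ Cθ * ∫⁻ t, θ n t * .ofReal (cauchyWeight n t ^ 2))
    (hL : ∀ n y, ∑ i ∈ Ico n J, ∫⁻ x, θ n (x - y) * a i x ≤ CL * dyadicAvg 2 n F y) (x₀ : ℝ) :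
    dyadicAvg 2 0 (fun x => (∑ j ∈ range J, dyadicAvg 2 j (a j) x) ^ (r + 2)) x₀ ≤
      ((r + 2) * (r + 1) : ℕ) * chainConst (1 + (1 + 1 * r)) Cθ CL * dyadicAvg 2 0
        (fun x => (∑ j ∈ range J, dyadicAvg 2 j (a j) x) ^ (r + 1) * maxAvg 2 J F x) x₀ := by
  let b (j : ℕ) := dyadicAvg 2 j (a j)
  let B (n : ℕ) (x : ℝ) := ∑ j ∈ range n, b j x
  let V (n : ℕ) (x : ℝ) := avgKernel 2 0 (x₀ - x) * (b n x * B (n + 1) x ^ r)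
  let N : ℝ≥0∞ := ((r + 2) * (r + 1) : ℕ)
  let K : ℝ≥0∞ := chainConst (1 + (1 + 1 * r)) Cθ CL
  have hb (j : ℕ) : Measurable (b j) := by fun_prop
  have hB (n : ℕ) : Measurable (B n) := by fun_prop
  have hV (n : ℕ) : Measurable (V n) := by fun_prop
  have hsum_V (x : ℝ) : ∑ n ∈ range J, V n x * maxAvg 2 J F x ≤
      avgKernel 2 0 (x₀ - x) * (B J x ^ (r + 1) * maxAvg 2 J F x) := by
    rw [← sum_mul, ← mul_sum, ← mul_assoc, pow_succ', sum_mul]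
    gcongr with n hn
    exact sum_le_sum_of_subset (range_mono (mem_range.mp hn))
  calc _ ≤ ∫⁻ x, N * ∑ n ∈ range J, ∑ i ∈ Ico n J, V n x * b i x := lintegral_mono fun x => by
        have hle := mul_le_mul_right (sum_range_pow_add_two_le (b · x) J r)
          (avgKernel 2 0 (x₀ - x))
        rw [mul_left_comm] at hle
        simpa only [V, mul_assoc (avgKernel _ _ _), ← mul_sum] using hle
    _ = N * ∑ n ∈ range J, ∑ i ∈ Ico n J, ∫⁻ x, V n x * b i x := by
        rw [lintegral_const_mul _ (by fun_prop), lintegral_finsetSum _ (by fun_prop)]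
        congr! 2 with n
        exact lintegral_finsetSum _ (by fun_prop)
    _ ≤ N * ∑ n ∈ range J, K * ∫⁻ x, V n x * dyadicAvg 2 n F x := by
        gcongr with n
        exact (isSlowlyVarying_partialSum ha n r x₀).sum_lintegral_mul_dyadicAvg_le (hV n) (hθm n)
          (hθ n) (fun i hi => (mem_Ico.mp hi).1) ha hF (hL n)
    _ ≤ N * ∑ n ∈ range J, K * ∫⁻ x, V n x * maxAvg 2 J F x := by
        gcongr with n hn x
        exact dyadicAvg_le_maxAvg (mem_range.mp hn) x
    _ = N * K * ∫⁻ x, ∑ n ∈ range J, V n x * maxAvg 2 J F x := by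
        rw [← mul_sum, ← mul_assoc, lintegral_finsetSum _ (by fun_prop)]
    _ ≤ _ := mul_le_mul_right (lintegral_mono hsum_V) _

lemma dyadicAvg_eq_lintegral_withDensity {s n : ℕ} {f : ℝ → ℝ≥0∞} (hf : Measurable f) (x₀ : ℝ) :
    dyadicAvg s n f x₀ = ∫⁻ x, f x ∂volume.withDensity fun x => avgKernel s n (x₀ - x) :=
  (lintegral_withDensity_eq_lintegral_mul _ (by fun_prop) hf).symm

lemma dyadicAvg_sum_pow_le_maxAvg (r : ℕ) (ha : ∀ j, Measurable (a j)) (hF : Measurable F)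
    {D : ℝ≥0∞} (hD : D ≠ ⊤) (haD : ∀ j x, a j x ≤ D) (hθm : ∀ n, Measurable (θ n))
    (hθ : ∀ n, 1 ≤ Cθ * ∫⁻ t, θ n t * .ofReal (cauchyWeight n t ^ 2))
    (hL : ∀ n y, ∑ i ∈ Ico n J, ∫⁻ x, θ n (x - y) * a i x ≤ CL * dyadicAvg 2 n F y) (x₀ : ℝ) :
    dyadicAvg 2 0 (fun x => (∑ j ∈ range J, dyadicAvg 2 j (a j) x) ^ (r + 2)) x₀ ≤
      (2 * (((r + 2) * (r + 1) : ℕ) * chainConst (1 + (1 + 1 * r)) Cθ CL)) ^ (r + 2) *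
        dyadicAvg 2 0 (fun x => maxAvg 2 J F x ^ (r + 2)) x₀ := by
  have hB : Measurable fun x => ∑ j ∈ range J, dyadicAvg 2 j (a j) x := by fun_prop
  have hbound (x : ℝ) : (∑ j ∈ range J, dyadicAvg 2 j (a j) x) ^ (r + 2) ≤
      (J * (.ofReal Real.pi * D)) ^ (r + 2) := by
    refine pow_le_pow_left' ?_ _
    simpa using sum_le_card_nsmul (range J) (fun j => dyadicAvg 2 j (a j) x) _
      fun j _ => dyadicAvg_le_of_le one_le_two (haD j) x
  have hfin := ne_top_of_le_ne_top (by finiteness)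
    (dyadicAvg_le_of_le (n := 0) one_le_two hbound x₀)
  have hle := dyadicAvg_sum_pow_le_mul r ha hF hθm hθ hL x₀
  rw [dyadicAvg_eq_lintegral_withDensity (by fun_prop)] at hfin hle ⊢
  rw [dyadicAvg_eq_lintegral_withDensity (by fun_prop)] at hle ⊢
  exact lintegral_pow_succ_le_of_le_mul hB (by fun_prop) hfin hle

theorem exists_dyadicAvg_sum_pow_le (m : ℕ) {CR : ℝ≥0∞} (hCR : CR ≠ ⊤) (hCL : CL ≠ ⊤)
    (hCθ : Cθ ≠ ⊤) (hθm : ∀ n, Measurable (θ n))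
    (hθ : ∀ n, 1 ≤ Cθ * ∫⁻ t, θ n t * .ofReal (cauchyWeight n t ^ 2)) :
    ∃ C : ℝ≥0∞, C ≠ ⊤ ∧ ∀ (J : ℕ) {a : ℕ → ℝ → ℝ≥0∞} {F : ℝ → ℝ≥0∞} {D : ℝ≥0∞} (x₀ : ℝ),
      (∀ j, Measurable (a j)) → Measurable F → D ≠ ⊤ → (∀ j x, a j x ≤ D) → (∀ x, F x ≤ D) →
      (∀ j x, a j x ≤ CR * dyadicAvg 2 j (a j) x) →
      (∀ n y, ∑ i ∈ Ico n J, ∫⁻ x, θ n (x - y) * a i x ≤ CL * dyadicAvg 2 n F y) →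
      dyadicAvg 2 0 (fun x => (∑ j ∈ range J, a j x) ^ 2 ^ m) x₀ ≤
        C * dyadicAvg 2 0 (fun x => F x ^ 2 ^ m) x₀ := by
  have hcomp := compConst_ne_top 2
  rcases m with _ | m
  · refine ⟨4 * Cθ * CL * compConst 2, by finiteness, fun J a F D x₀ ha hF _ _ _ _ hL => ?_⟩
    simp only [pow_zero, pow_one]
    exact dyadicAvg_sum_le ha hF (hθm 0) (hθ 0) (by simpa only [range_eq_Ico] using hL 0) x₀
  obtain ⟨r, hr⟩ : ∃ r, 2 ^ m = r + 1 := Nat.exists_eq_add_of_le' Nat.one_le_two_pow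
  obtain ⟨C, hC, hmax⟩ := exists_dyadicAvg_maxAvg_pow_le r
  let K : ℝ≥0∞ := (2 * (((2 * r + 2) * (2 * r + 1) : ℕ) *
    chainConst (1 + (1 + 1 * (2 * r))) Cθ CL)) ^ (2 * r + 2)
  have hK : K ≠ ⊤ := by
    simp only [K, chainConst]
    finiteness
  refine ⟨CR ^ (2 * r + 2) * (K * C), by finiteness, fun J a F D x₀ ha hF hD haD hFD hR hL => ?_⟩
  rw [pow_succ', hr, mul_add_one]
  have hfin : dyadicAvg 2 0 (fun x => F x ^ (2 * r + 2)) x₀ ≠ ⊤ :=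
    ne_top_of_le_ne_top (by finiteness) (dyadicAvg_le_of_le one_le_two
      (fun x => pow_le_pow_left' (hFD x) (2 * r + 2)) x₀)
  calc _ ≤ dyadicAvg 2 0 (fun x =>
          CR ^ (2 * r + 2) * (∑ j ∈ range J, dyadicAvg 2 j (a j) x) ^ (2 * r + 2)) x₀ := by
        refine dyadicAvg_mono (fun x => ?_) x₀
        rw [← mul_pow, mul_sum]
        exact pow_le_pow_left' (sum_le_sum fun j _ => hR j x) _
    _ = CR ^ (2 * r + 2) * dyadicAvg 2 0
          (fun x => (∑ j ∈ range J, dyadicAvg 2 j (a j) x) ^ (2 * r + 2)) x₀ :=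
        dyadicAvg_const_mul (by fun_prop) _ x₀
    _ ≤ CR ^ (2 * r + 2) * (K * dyadicAvg 2 0 (fun x => maxAvg 2 J F x ^ (2 * r + 2)) x₀) := by
        gcongr
        exact dyadicAvg_sum_pow_le_maxAvg (2 * r) ha hF hD haD hθm hθ hL x₀
    _ ≤ CR ^ (2 * r + 2) * (K * (C * dyadicAvg 2 0 (fun x => F x ^ (2 * r + 2)) x₀)) := by
        gcongr
        exact hmax J x₀ hF hfin
    _ = _ := by ring

end SquareFunction

section SchwartzFunctions

open scoped ENNReal FourierTransform

variable (g : SchwartzMap ℝ ℂ)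

lemma exists_norm_le_cauchyWeight_pow (s : ℕ) :
    ∃ C > 0, ∀ t, ‖g t‖ ≤ C * cauchyWeight 0 t ^ s := by
  set B := 2 ^ (2 * s) *
    ((Finset.Iic (2 * s, 0)).sup fun m => SchwartzMap.seminorm ℝ m.1 m.2) g
  have : 0 ≤ B := by positivity
  refine ⟨B + 1, by positivity, fun t => ?_⟩
  have hdecay : (1 + ‖t‖) ^ (2 * s) * ‖g t‖ ≤ B := by
    simpa only [norm_iteratedFDeriv_zero] using SchwartzMap.one_add_le_sup_seminorm_apply
      (𝕜 := ℝ) (m := (2 * s, 0)) le_rfl le_rfl g t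
  have hpow : (1 + t ^ 2) ^ s ≤ (1 + ‖t‖) ^ (2 * s) := by
    rw [pow_mul, Real.norm_eq_abs]
    gcongr
    nlinarith [sq_abs t, abs_nonneg t]
  rw [cauchyWeight, pow_zero, one_mul, inv_pow, ← div_eq_mul_inv, le_div_iff₀ (by positivity),
    mul_comm]
  exact (mul_le_mul_of_nonneg_right hpow (norm_nonneg _)).trans (by linarith)

lemma myFourier_eq_integral_charExp (f : ℝ → ℂ) (ξ : ℝ) :
    myFourier f ξ = ∫ t, charExp (-ξ) t * f t := by
  refine integral_congr_ae (.of_forall fun t => ?_)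
  simp only [charExp]
  rw [mul_comm]
  congr 2
  push_cast
  ring

lemma integrable_charExp_mul (l : ℝ) : Integrable fun t => charExp l t * g t :=
  g.integrable.bdd_mul (continuous_charExp l).aestronglyMeasurable
    (.of_forall fun t => (norm_charExp l t).le)

lemma fourier_eq_myFourier (ξ : ℝ) :
    𝓕 g ξ = myFourier (fun t => g t) (2 * Real.pi * ξ) := by
  rw [SchwartzMap.fourier_coe, Real.fourier_eq', myFourier]
  refine integral_congr_ae (.of_forall fun t => ?_)
  simp only [RCLike.inner_apply, conj_trivial, smul_eq_mul]
  rw [mul_comm]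
  congr 2
  push_cast
  ring

lemma lintegral_enorm_sq_fourier : ∫⁻ x, ‖𝓕 g x‖ₑ ^ 2 = ∫⁻ x, ‖g x‖ₑ ^ 2 := by
  have hofReal : ∀ f : SchwartzMap ℝ ℂ, ∫⁻ x, ‖f x‖ₑ ^ 2 = .ofReal (∫ x, ‖f x‖ ^ 2) := fun f => by
    simp only [← ofReal_norm, ← ENNReal.ofReal_pow (norm_nonneg _)]
    exact (ofReal_integral_eq_lintegral_ofReal ((f.memLp 2).integrable_norm_pow two_ne_zero)
      (.of_forall fun x => by positivity)).symm
  rw [hofReal, hofReal, SchwartzMap.integral_norm_sq_fourier]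

lemma fourier_compSubConstCLM (a ξ : ℝ) :
    𝓕 (g.compSubConstCLM ℂ a) ξ = charExp (-(2 * Real.pi * a)) ξ * 𝓕 g ξ := by
  simp only [SchwartzMap.fourier_coe, Real.fourier_eq', SchwartzMap.compSubConstCLM_apply]
  rw [← integral_const_mul, ← integral_add_right_eq_self _ a]
  refine integral_congr_ae (.of_forall fun t => ?_)
  simp only [add_sub_cancel_right, charExp, smul_eq_mul, ← mul_assoc, ← Complex.exp_add,
    RCLike.inner_apply, conj_trivial]
  congr 2
  push_cast
  ring

end SchwartzFunctions

section BandLimitedWeight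

open scoped ENNReal FourierTransform

/-- The measure with density `|b̂|²`. Its characteristic function is the autocorrelation of `b`, so
it is supported near the origin when `b` is. -/
noncomputable def powerSpectrum (b : SchwartzMap ℝ ℂ) : Measure ℝ :=
  volume.withDensity fun x => ‖𝓕 b x‖ₑ ^ 2

lemma charFun_powerSpectrum_eq_zero {b : SchwartzMap ℝ ℂ} {r a : ℝ}
    (hb : Function.support b ⊆ Metric.ball 0 r) (ha : 4 * Real.pi * r ≤ |a|) :
    charFun (powerSpectrum b) a = 0 := by
  set d := -a / (2 * Real.pi) with hd
  have hd_ge : 2 * r ≤ |d| := by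
    rw [hd, abs_div, abs_neg, abs_of_pos Real.two_pi_pos, le_div_iff₀ Real.two_pi_pos]
    linarith
  have hdisjoint : ∀ x, inner ℂ (b x) (b.compSubConstCLM ℂ d x) = 0 := fun x => by
    by_contra hne
    simp only [SchwartzMap.compSubConstCLM_apply] at hne
    have hx := hb (show b x ≠ 0 from fun h => hne (by rw [h, inner_zero_left]))
    have hxd := hb (show b (x - d) ≠ 0 from fun h => hne (by rw [h, inner_zero_right]))
    rw [mem_ball_zero_iff, Real.norm_eq_abs] at hx hxd
    linarith [abs_sub_abs_le_abs_sub d x, abs_sub_comm d x]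
  have hcorr := SchwartzMap.integral_inner_fourier_fourier b (b.compSubConstCLM ℂ d)
  simp only [hdisjoint, integral_zero] at hcorr
  rw [charFun_apply_real, powerSpectrum, integral_withDensity_eq_integral_toReal_smul
    ((𝓕 b).continuous.enorm.measurable.pow_const 2) (.of_forall fun x => by finiteness), ← hcorr]
  refine integral_congr_ae (.of_forall fun x => ?_)
  have hfreq : -(2 * Real.pi * d) = a := by
    rw [hd]
    field_simp
  have hdensity : ((‖𝓕 b x‖ₑ ^ 2).toReal : ℂ) = 𝓕 b x * (starRingEnd ℂ) (𝓕 b x) := by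
    rw [Complex.mul_conj', ENNReal.toReal_pow, toReal_enorm, Complex.ofReal_pow]
  simp only [fourier_compSubConstCLM, hfreq, RCLike.inner_apply, Complex.real_smul, hdensity,
    charExp]
  ring_nf

lemma exists_powerSpectrum_le (b : SchwartzMap ℝ ℂ) :
    ∃ C ≠ ∞, powerSpectrum b ≤ C • volume.withDensity (avgKernel 2 0) := by
  obtain ⟨C, -, hdecay⟩ := exists_norm_le_cauchyWeight_pow (𝓕 b) 1
  refine ⟨.ofReal (C ^ 2), by finiteness, ?_⟩
  rw [← withDensity_smul _ (by fun_prop)]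
  refine withDensity_mono (.of_forall fun x => ?_)
  simp only [Pi.smul_apply, smul_eq_mul, avgKernel, pow_zero, one_mul]
  rw [← ENNReal.ofReal_mul (sq_nonneg C), ← mul_pow, ← ofReal_norm,
    ← ENNReal.ofReal_pow (norm_nonneg _)]
  exact ENNReal.ofReal_le_ofReal (pow_le_pow_left₀ (norm_nonneg _) (by simpa using hdecay x) 2)

lemma exists_schwartz_bump {r : ℝ} (hr : 0 < r) : ∃ b : SchwartzMap ℝ ℂ,
    Function.support b ⊆ Metric.ball 0 r ∧ ∫ t, b t = 1 ∧ ∫ t, ‖b t‖ = 1 := by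
  let f : ContDiffBump (0 : ℝ) := ⟨r / 2, r, by positivity, by linarith⟩
  have hsupp : HasCompactSupport (fun t => (f.normed volume t : ℂ)) :=
    f.hasCompactSupport_normed.comp_left Complex.ofReal_zero
  let b := hsupp.toSchwartzMap (Complex.ofRealCLM.contDiff.comp f.contDiff_normed)
  have hb : ∀ t, b t = f.normed volume t := fun t => rfl
  refine ⟨b, fun t ht => ?_, ?_, ?_⟩
  · rw [Function.mem_support, hb, Complex.ofReal_ne_zero] at ht
    exact f.support_normed_eq.subset ht
  · simp only [hb, integral_complex_ofReal, f.integral_normed, Complex.ofReal_one]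
  · simp only [hb, Complex.norm_real, Real.norm_of_nonneg (f.nonneg_normed _), f.integral_normed]

/- As `|e^{-2πitx} - 1| ≤ 1/2` on the support of `b`, the transform of `b` stays close to its
value `1` at the origin. -/
lemma half_le_norm_fourier {b : SchwartzMap ℝ ℂ} {r x : ℝ} (hr : 4 * Real.pi * r ≤ 1)
    (hb : Function.support b ⊆ Metric.ball 0 r) (hmass : ∫ t, b t = 1) (hnorm : ∫ t, ‖b t‖ = 1)
    (hx : x ∈ Set.Icc (0 : ℝ) 1) : 1 / 2 ≤ ‖𝓕 b x‖ := by
  have hphase : ∀ t, ‖(charExp (-(2 * Real.pi * x)) t - 1) * b t‖ ≤ 1 / 2 * ‖b t‖ := fun t => by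
    rcases eq_or_ne (b t) 0 with h0 | h0
    · simp only [h0, mul_zero, norm_zero, le_refl]
    have ht := hb h0
    rw [mem_ball_zero_iff, Real.norm_eq_abs] at ht
    rw [norm_mul, charExp, mul_assoc, ← Complex.ofReal_mul]
    refine mul_le_mul_of_nonneg_right (Real.norm_exp_I_mul_ofReal_sub_one_le.trans ?_)
      (norm_nonneg _)
    have htx : |t| * x ≤ r * 1 := mul_le_mul ht.le hx.2 hx.1 ((abs_nonneg t).trans ht.le)
    rw [Real.norm_eq_abs, abs_mul, abs_neg, abs_mul, abs_of_pos Real.two_pi_pos, abs_of_nonneg hx.1]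
    nlinarith [Real.pi_pos]
  have hclose : ‖𝓕 b x - 1‖ ≤ 1 / 2 := by
    have hdiff : 𝓕 b x - 1 = ∫ t, (charExp (-(2 * Real.pi * x)) t - 1) * b t := by
      simp only [sub_mul, one_mul]
      rw [integral_sub (integrable_charExp_mul b _) b.integrable, hmass, fourier_eq_myFourier,
        myFourier_eq_integral_charExp]
    rw [hdiff]
    refine (norm_integral_le_of_norm_le (b.integrable.norm.const_mul _)
      (.of_forall hphase)).trans_eq ?_
    rw [integral_const_mul, hnorm, mul_one]
  have := norm_sub_norm_le (1 : ℂ) (1 - 𝓕 b x)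
  rw [sub_sub_cancel, norm_one, norm_sub_rev] at this
  linarith

lemma exists_bandLimited_measure {δ : ℝ} (hδ : 0 < δ) : ∃ C ≠ ∞, ∃ μ : Measure ℝ,
    IsFiniteMeasure μ ∧ (∀ a, δ ≤ |a| → charFun μ a = 0) ∧
      volume.restrict (Set.Icc 0 1) ≤ C • μ ∧ μ ≤ C • volume.withDensity (avgKernel 2 0) := by
  have := Real.pi_pos
  set r := min 1 δ / (4 * Real.pi) with hr
  have hr_mul : 4 * Real.pi * r = min 1 δ := by
    rw [hr]
    field_simp
  obtain ⟨b, hsupp, hmass, hnorm⟩ := exists_schwartz_bump (show 0 < r by positivity)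
  obtain ⟨C, hC, hle⟩ := exists_powerSpectrum_le b
  have hfinite : IsFiniteMeasure (volume.withDensity (avgKernel 2 0)) := by
    have := lintegral_avgKernel_sub_le one_le_two 0 0
    simp only [avgKernel_sub_comm 2 0 0, sub_zero] at this
    exact isFiniteMeasure_withDensity (this.trans_lt ENNReal.ofReal_lt_top).ne
  refine ⟨max 4 C, by finiteness, powerSpectrum b, ?_, fun a ha => ?_, ?_, ?_⟩
  · have := Measure.smul_finite (volume.withDensity (avgKernel 2 0)) hC
    exact isFiniteMeasure_of_le _ hle
  · exact charFun_powerSpectrum_eq_zero hsupp (by grind)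
  · rw [powerSpectrum, ← withDensity_smul _ (by fun_prop), ← withDensity_indicator_one
      measurableSet_Icc]
    refine withDensity_mono (.of_forall (Set.indicator_le fun x hx => ?_))
    have hlower := half_le_norm_fourier (hr_mul.trans_le (min_le_left _ _)) hsupp hmass hnorm hx
    calc (1 : ℝ≥0∞) = 4 * .ofReal (1 / 2) ^ 2 := by
          rw [← ENNReal.ofReal_pow (by norm_num), ← ENNReal.ofReal_ofNat 4,
            ← ENNReal.ofReal_mul (by norm_num)]
          norm_num
      _ ≤ max 4 C * ‖𝓕 b x‖ₑ ^ 2 := by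
          rw [← ofReal_norm]
          gcongr
          exact le_max_left _ _
  · exact hle.trans (by gcongr; exact le_max_right _ _)

end BandLimitedWeight

section LocalTruncation

open scoped ENNReal

lemma trigSum_modulated {ι : Type*} (s : Finset ι) (c : ι → ℂ) (l : ι → ℝ) (x₀ x : ℝ) :
    trigSum s (fun i => c i * charExp (l i) x₀) l x = trigSum s c l (x + x₀) := by
  refine Finset.sum_congr rfl fun i _ => ?_
  simp only [charExp, mul_assoc, ← Complex.exp_add]
  push_cast
  ring_nf

lemma squareSum_modulated {ι κ : Type*} (s : κ → Finset ι) (t : Finset κ) (c : κ → ι → ℂ)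
    (l : ι → ℝ) (x₀ x : ℝ) :
    squareSum t (fun j => trigSum (s j) (fun i => c j i * charExp (l i) x₀) l) x =
      squareSum t (fun j => trigSum (s j) (c j) l) (x + x₀) := by
  simp only [squareSum, trigSum_modulated]

lemma lintegral_add_withDensity_avgKernel (s n : ℕ) {h : ℝ → ℝ≥0∞} (hh : Measurable h) (x₀ : ℝ) :
    ∫⁻ x, h (x + x₀) ∂volume.withDensity (avgKernel s n) = dyadicAvg s n h x₀ := by
  rw [lintegral_withDensity_eq_lintegral_mul _ (by fun_prop) (by fun_prop), dyadicAvg,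
    ← lintegral_add_right_eq_self (fun y => avgKernel s n (x₀ - y) * h y) x₀]
  simp only [Pi.mul_apply, avgKernel_sub_comm s n x₀, add_sub_cancel_right]

theorem exists_lintegral_squareSum_truncation_le (m : ℕ) {δ : ℝ} (hδ : 0 < δ) :
    ∃ C ≠ ∞, ∀ {ι κ : Type} (s : Finset ι) (t : Finset κ) (c : κ → ι → ℂ) (l : ι → ℝ)
      (R : κ → ℝ) (x₀ : ℝ),
      (∀ j, 0 ≤ R j) → (∀ i ∈ s, ∀ i' ∈ s, l i < l i' → 2 * δ ≤ l i' - l i) →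
      ∫⁻ x in Set.Icc 0 1, .ofReal
          (squareSum t (fun j => trigSum {i ∈ s | |l i| ≤ R j} (c j) l) (x + x₀) ^ 2 ^ m) ≤
        C * dyadicAvg 2 0
          (fun x => .ofReal (squareSum t (fun j => trigSum s (c j) l) x ^ 2 ^ m)) x₀ := by
  obtain ⟨A, hA, truncation⟩ := exists_integral_squareSum_truncation_le m
  obtain ⟨B, hB, μ, hfinite, hμ, hlower, hupper⟩ := exists_bandLimited_measure hδ
  refine ⟨B * (.ofReal A * B), by finiteness, fun {ι κ} s t c l R x₀ hR hl => ?_⟩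
  set F := squareSum t (fun j => trigSum s (c j) l)
  set G := squareSum t (fun j => trigSum {i ∈ s | |l i| ≤ R j} (c j) l)
  have htransfer : ∫⁻ x, .ofReal (G (x + x₀) ^ 2 ^ m) ∂μ ≤
      .ofReal A * ∫⁻ x, .ofReal (F (x + x₀) ^ 2 ^ m) ∂μ := by
    have hbound := truncation hδ hμ s t (fun j i => c j i * charExp (l i) x₀) l R hR hl
    have hint : ∀ s' : κ → Finset ι, Integrable (fun x =>
        squareSum t (fun j => trigSum (s' j) (c j) l) (x + x₀) ^ 2 ^ m) μ := fun s' => by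
      simpa only [squareSum_modulated] using integrable_squareSum_pow (μ := μ) t
        (fun j i => c j i * charExp (l i) x₀) (fun _ => l) s' (2 ^ m)
    simp only [squareSum_modulated] at hbound
    rw [← ofReal_integral_eq_lintegral_ofReal (hint fun j => {i ∈ s | |l i| ≤ R j})
        (.of_forall fun x => pow_nonneg (squareSum_nonneg _ _ _) _),
      ← ofReal_integral_eq_lintegral_ofReal (hint fun _ => s)
        (.of_forall fun x => pow_nonneg (squareSum_nonneg _ _ _) _), ← ENNReal.ofReal_mul hA.le]
    exact ENNReal.ofReal_le_ofReal hbound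
  have hF : Measurable fun x => ENNReal.ofReal (F x ^ 2 ^ m) :=
    ((continuous_squareSum t fun j _ => continuous_trigSum _ _ _).pow _).measurable.ennreal_ofReal
  calc ∫⁻ x in Set.Icc 0 1, .ofReal (G (x + x₀) ^ 2 ^ m)
      ≤ B * ∫⁻ x, .ofReal (G (x + x₀) ^ 2 ^ m) ∂μ := by
        rw [← smul_eq_mul, ← lintegral_smul_measure]
        exact lintegral_mono' hlower le_rfl
    _ ≤ B * (.ofReal A * ∫⁻ x, .ofReal (F (x + x₀) ^ 2 ^ m) ∂μ) := by gcongr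
    _ ≤ B * (.ofReal A * (B * dyadicAvg 2 0 (fun x => .ofReal (F x ^ 2 ^ m)) x₀)) := by
        gcongr
        rw [← lintegral_add_withDensity_avgKernel 2 0 hF, ← smul_eq_mul, ← lintegral_smul_measure]
        exact lintegral_mono' hupper le_rfl
    _ = _ := by ring

end LocalTruncation

section Multipliers

open scoped ENNReal FourierTransform

variable {ι : Type*} (g : SchwartzMap ℝ ℂ) (s : Finset ι) (c : ι → ℂ) (l : ι → ℝ)

lemma hasDerivAt_charExp (a x : ℝ) : HasDerivAt (charExp a) (Complex.I * a * charExp a x) x := by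
  unfold charExp
  have hinner : HasDerivAt (fun x : ℝ => Complex.I * (a : ℂ) * (x : ℂ)) (Complex.I * a) x := by
    simpa using (Complex.ofRealCLM.hasDerivAt (x := x)).const_mul (Complex.I * (a : ℂ))
  simpa [mul_comm] using hinner.cexp

lemma iteratedDeriv_charExp (n : ℕ) (a : ℝ) :
    iteratedDeriv n (charExp a) = fun x => (Complex.I * a) ^ n * charExp a x := by
  induction n with
  | zero => simp
  | succ n ih =>
    ext x
    rw [iteratedDeriv_succ, ih, ((hasDerivAt_charExp a x).const_mul _).deriv]
    ring

lemma hasTemperateGrowth_charExp (a : ℝ) : (charExp a).HasTemperateGrowth := by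
  refine ⟨(contDiff_const.mul Complex.ofRealCLM.contDiff).cexp, fun n => ⟨0, |a| ^ n, fun x => ?_⟩⟩
  rw [norm_iteratedFDeriv_eq_norm_iteratedDeriv, iteratedDeriv_charExp]
  simp [norm_charExp]

lemma hasTemperateGrowth_trigSum : (trigSum s c l).HasTemperateGrowth := by
  unfold trigSum
  exact .sum fun i _ => (Function.HasTemperateGrowth.const _).mul (hasTemperateGrowth_charExp _)

/-- The `L¹`-normalised dilate `t ↦ 2ⁱ g(2ⁱ t)`. -/
noncomputable def dyadicDilate (i : ℕ) : SchwartzMap ℝ ℂ :=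
  (2 : ℂ) ^ i • SchwartzMap.compCLMOfContinuousLinearEquiv ℂ
    (ContinuousLinearEquiv.unitsEquivAut ℝ (Units.mk0 ((2 : ℝ) ^ i) (by positivity))) g

lemma dyadicDilate_apply (i : ℕ) (t : ℝ) : dyadicDilate g i t = 2 ^ i * g (2 ^ i * t) := by
  simp [dyadicDilate, mul_comm]

lemma norm_dyadicDilate_le {C : ℝ} {q : ℕ} (hg : ∀ t, ‖g t‖ ≤ C * cauchyWeight 0 t ^ q) (i : ℕ)
    (t : ℝ) : ‖dyadicDilate g i t‖ ≤ C * (2 ^ i * cauchyWeight i t ^ q) := by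
  have hscaled := hg (2 ^ i * t)
  rw [cauchyWeight_zero_two_pow_mul] at hscaled
  rw [dyadicDilate_apply, norm_mul, norm_pow, Complex.norm_ofNat, mul_left_comm]
  gcongr

lemma myFourier_dyadicDilate (i : ℕ) (ξ : ℝ) :
    myFourier (dyadicDilate g i) ξ = myFourier g ((2 ^ i)⁻¹ * ξ) := by
  have hpos : (0 : ℝ) < 2 ^ i := by positivity
  have hscale := Measure.integral_comp_mul_left
    (fun t => charExp (-((2 ^ i)⁻¹ * ξ)) t * g t) ((2 : ℝ) ^ i)
  rw [abs_of_pos (by positivity), eq_inv_smul_iff₀ hpos.ne', ← integral_smul] at hscale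
  rw [myFourier_eq_integral_charExp, myFourier_eq_integral_charExp, ← hscale]
  refine integral_congr_ae (.of_forall fun t => ?_)
  simp only [dyadicDilate_apply, charExp, Complex.real_smul]
  push_cast
  rw [mul_left_comm]
  congr 3
  field_simp

lemma integral_sub_mul_charExp (a x : ℝ) :
    ∫ z, g (x - z) * charExp a z = myFourier g a * charExp a x := by
  rw [← integral_sub_left_eq_self (fun z => g (x - z) * charExp a z) _ x,
    myFourier_eq_integral_charExp, ← integral_mul_const]
  refine integral_congr_ae (.of_forall fun t => ?_)
  simp only [sub_sub_cancel, charExp]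
  rw [mul_right_comm (Complex.exp _) (g t), ← Complex.exp_add, mul_comm (g t)]
  congr 2
  push_cast
  ring

lemma integrable_sub_mul_trigSum (x : ℝ) : Integrable fun z => g (x - z) * trigSum s c l z :=
  (g.integrable.comp_sub_left x).mul_bdd (c := ∑ i ∈ s, ‖c i‖)
    (continuous_trigSum s c l).aestronglyMeasurable (.of_forall fun z => norm_trigSum_le s c l z)

lemma integral_sub_mul_trigSum (x : ℝ) :
    ∫ z, g (x - z) * trigSum s c l z = trigSum s (fun i => myFourier g (l i) * c i) l x := by
  have hint : ∀ i, Integrable fun z => g (x - z) * (c i * charExp (l i) z) := fun i => by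
    simpa only [trigSum, Finset.sum_singleton] using integrable_sub_mul_trigSum g {i} c l x
  simp only [trigSum, Finset.mul_sum]
  rw [integral_finsetSum _ fun i _ => hint i]
  refine Finset.sum_congr rfl fun i _ => ?_
  simp only [mul_left_comm _ (c i)]
  rw [integral_const_mul, integral_sub_mul_charExp]
  ring

lemma convolution_eq_integral_sub_mul (G : SchwartzMap ℝ ℂ) (x : ℝ) :
    SchwartzMap.convolution (ContinuousLinearMap.mul ℂ ℂ) g G x = ∫ z, g (x - z) * G z := by
  rw [SchwartzMap.convolution_apply, convolution_mul_swap]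

lemma continuous_integral_sub_mul (G : SchwartzMap ℝ ℂ) :
    Continuous fun x => ∫ z, g (x - z) * G z := by
  simp only [← convolution_eq_integral_sub_mul]
  exact SchwartzMap.continuous _

lemma lintegral_enorm_sq_convolution (G : SchwartzMap ℝ ℂ) :
    ∫⁻ x, ‖∫ z, g (x - z) * G z‖ₑ ^ 2 =
      ∫⁻ ξ, ‖myFourier g (2 * Real.pi * ξ)‖ₑ ^ 2 * ‖𝓕 G ξ‖ₑ ^ 2 := by
  simp only [← convolution_eq_integral_sub_mul]
  rw [← lintegral_enorm_sq_fourier]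
  refine lintegral_congr fun ξ => ?_
  rw [SchwartzMap.fourier_convolution, SchwartzMap.pairing_apply_apply,
    ContinuousLinearMap.mul_apply', enorm_mul, mul_pow, fourier_eq_myFourier g]

lemma sum_lintegral_enorm_sq_convolution_le {κ : Type*} (t : Finset κ) (ψ : κ → SchwartzMap ℝ ℂ)
    {K : ℝ≥0∞} (hK : ∀ ξ, ∑ i ∈ t, ‖myFourier (ψ i) ξ‖ₑ ^ 2 ≤ K) (G : SchwartzMap ℝ ℂ) :
    ∑ i ∈ t, ∫⁻ x, ‖∫ z, ψ i (x - z) * G z‖ₑ ^ 2 ≤ K * ∫⁻ x, ‖G x‖ₑ ^ 2 := by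
  have hmeas : ∀ f : SchwartzMap ℝ ℂ, Measurable fun ξ => ‖𝓕 f ξ‖ₑ ^ 2 := fun f =>
    (𝓕 f).continuous.enorm.measurable.pow_const 2
  have hmeas' : ∀ i, Measurable fun ξ => ‖myFourier (ψ i) (2 * Real.pi * ξ)‖ₑ ^ 2 := fun i => by
    simpa only [fourier_eq_myFourier] using hmeas (ψ i)
  simp only [lintegral_enorm_sq_convolution]
  rw [← lintegral_finsetSum (f := fun i ξ => ‖myFourier (ψ i) (2 * Real.pi * ξ)‖ₑ ^ 2 *
    ‖𝓕 G ξ‖ₑ ^ 2) _ fun i _ => (hmeas' i).mul (hmeas G)]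
  calc _ ≤ ∫⁻ ξ, K * ‖𝓕 G ξ‖ₑ ^ 2 := lintegral_mono fun ξ => by
        rw [← Finset.sum_mul]
        exact mul_le_mul_left (hK _) _
    _ = _ := by rw [lintegral_const_mul _ (hmeas G), lintegral_enorm_sq_fourier]

end Multipliers

section LittlewoodPaleyPieces

open scoped ENNReal

variable {ι : Type*} {φ ψ : SchwartzMap ℝ ℂ} (s : Finset ι) (c : ι → ℂ) (l : ι → ℝ)

/-- The Littlewood–Paley piece `ψ_i ∗ f` of an exponential sum `f`, where `ψ_i = 2ⁱ ψ(2ⁱ ·)`,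
written on the frequency side. -/
noncomputable def lpPiece (ψ : SchwartzMap ℝ ℂ) (s : Finset ι) (c : ι → ℂ) (l : ι → ℝ) (i : ℕ) :
    ℝ → ℂ :=
  trigSum s (fun n => myFourier ψ ((2 ^ i)⁻¹ * l n) * c n) l

lemma integral_dyadicDilate_mul_trigSum (g : SchwartzMap ℝ ℂ) (i : ℕ) (x : ℝ) :
    ∫ z, dyadicDilate g i (x - z) * trigSum s c l z = lpPiece g s c l i x := by
  simp only [integral_sub_mul_trigSum, myFourier_dyadicDilate, lpPiece]

lemma continuous_lpPiece (i : ℕ) : Continuous (lpPiece ψ s c l i) := continuous_trigSum _ _ _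

lemma enorm_trigSum_le (x : ℝ) : ‖trigSum s c l x‖ₑ ≤ ∑ n ∈ s, ‖c n‖ₑ := by
  refine (enorm_sum_le _ _).trans_eq (Finset.sum_congr rfl fun n _ => ?_)
  rw [enorm_mul, ← ofReal_norm (charExp _ _), norm_charExp, ENNReal.ofReal_one, mul_one]

lemma enorm_myFourier_le (f : ℝ → ℂ) (ξ : ℝ) : ‖myFourier f ξ‖ₑ ≤ ∫⁻ t, ‖f t‖ₑ := by
  rw [myFourier_eq_integral_charExp]
  refine (enorm_integral_le_lintegral_enorm _).trans_eq (lintegral_congr fun t => ?_)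
  rw [enorm_mul, ← ofReal_norm (charExp _ _), norm_charExp, ENNReal.ofReal_one, one_mul]

lemma lintegral_enorm_ne_top (g : SchwartzMap ℝ ℂ) : ∫⁻ t, ‖g t‖ₑ ≠ ∞ := g.integrable.2.ne

lemma enorm_lpPiece_le (i : ℕ) (x : ℝ) :
    ‖lpPiece ψ s c l i x‖ₑ ≤ (∫⁻ t, ‖ψ t‖ₑ) * ∑ n ∈ s, ‖c n‖ₑ := by
  refine (enorm_trigSum_le _ _ _ _).trans ?_
  rw [Finset.mul_sum]
  gcongr with n
  rw [enorm_mul]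
  exact mul_le_mul_left (enorm_myFourier_le _ _) _

lemma abs_inv_two_pow_mul (i : ℕ) (ξ : ℝ) : |((2 : ℝ) ^ i)⁻¹ * ξ| = |ξ| / 2 ^ i := by
  rw [abs_mul, abs_of_pos (by positivity), inv_mul_eq_div]

lemma card_filter_annulus_le_two (t : Finset ℕ) (ξ : ℝ) :
    (t.filter fun i => 1 / 2 < |((2 : ℝ) ^ i)⁻¹ * ξ| ∧ |((2 : ℝ) ^ i)⁻¹ * ξ| ≤ 2).card ≤ 2 := by
  have hlt : ∀ i j : ℕ, |((2 : ℝ) ^ i)⁻¹ * ξ| ≤ 2 → 1 / 2 < |((2 : ℝ) ^ j)⁻¹ * ξ| → j < i + 2 := by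
    intro i j hi hj
    rw [abs_inv_two_pow_mul, div_le_iff₀ (by positivity)] at hi
    rw [abs_inv_two_pow_mul, lt_div_iff₀ (by positivity)] at hj
    refine (pow_lt_pow_iff_right₀ (one_lt_two (α := ℝ))).mp ?_
    rw [pow_add]
    linarith
  by_contra! hcard
  obtain ⟨i, hi, j, hj, k, hk, hij, hik, hjk⟩ := Finset.two_lt_card.mp hcard
  simp only [Finset.mem_filter] at hi hj hk
  have := hlt i j hi.2.2 hj.2.1
  have := hlt j i hj.2.2 hi.2.1
  have := hlt i k hi.2.2 hk.2.1
  have := hlt k i hk.2.2 hi.2.1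
  have := hlt j k hj.2.2 hk.2.1
  have := hlt k j hk.2.2 hj.2.1
  omega

lemma sum_enorm_sq_myFourier_dyadicDilate_le
    (hψ : ∀ ξ, myFourier ψ ξ ≠ 0 → 1 / 2 < |ξ| ∧ |ξ| ≤ 2) (t : Finset ℕ) (ξ : ℝ) :
    ∑ i ∈ t, ‖myFourier (dyadicDilate ψ i) ξ‖ₑ ^ 2 ≤ 2 * (∫⁻ t, ‖ψ t‖ₑ) ^ 2 := by
  simp only [myFourier_dyadicDilate]
  have hannulus : ∀ i ∈ t, ‖myFourier ψ ((2 ^ i)⁻¹ * ξ)‖ₑ ^ 2 ≠ 0 →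
      1 / 2 < |((2 : ℝ) ^ i)⁻¹ * ξ| ∧ |((2 : ℝ) ^ i)⁻¹ * ξ| ≤ 2 :=
    fun i _ hi => hψ _ fun hzero => hi (by simp [hzero])
  rw [← Finset.sum_filter_of_ne hannulus]
  refine (Finset.sum_le_card_nsmul _ _ ((∫⁻ t, ‖ψ t‖ₑ) ^ 2) fun i _ => ?_).trans ?_
  · exact pow_le_pow_left' (enorm_myFourier_le _ _) 2
  · rw [nsmul_eq_mul]
    exact mul_le_mul_left
      ((Nat.cast_le.mpr (card_filter_annulus_le_two t ξ)).trans_eq Nat.cast_ofNat) _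

lemma integral_dyadicDilate_mul_lpPiece (hφ : ∀ ξ, |ξ| ≤ 1 / 2 → myFourier φ ξ = 1)
    (hψ : ∀ ξ, myFourier ψ ξ ≠ 0 → |ξ| ≤ 2) (i : ℕ) (x : ℝ) :
    ∫ z, dyadicDilate φ (i + 2) (x - z) * lpPiece ψ s c l i z = lpPiece ψ s c l i x := by
  rw [lpPiece, integral_dyadicDilate_mul_trigSum, lpPiece]
  refine Finset.sum_congr rfl fun n _ => ?_
  by_cases hzero : myFourier ψ ((2 ^ i)⁻¹ * l n) = 0
  · simp only [hzero, zero_mul, mul_zero]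
  · have hsmall : |((2 : ℝ) ^ (i + 2))⁻¹ * l n| ≤ 1 / 2 := by
      have hlarge := hψ _ hzero
      rw [abs_inv_two_pow_mul, div_le_iff₀ (by positivity)] at hlarge ⊢
      rw [pow_add]
      linarith
    beta_reduce
    rw [hφ _ hsmall, one_mul]

lemma enorm_integral_dyadicDilate_mul_le {g : SchwartzMap ℝ ℂ} {C : ℝ} {q : ℕ} (hC : 0 ≤ C)
    (hg : ∀ t, ‖g t‖ ≤ C * cauchyWeight 0 t ^ q) {f : ℝ → ℂ} (hf : Measurable f) (i : ℕ) (x : ℝ) :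
    ‖∫ z, dyadicDilate g i (x - z) * f z‖ₑ ≤ .ofReal C * dyadicAvg q i (fun z => ‖f z‖ₑ) x := by
  refine (enorm_integral_le_lintegral_enorm _).trans ?_
  rw [dyadicAvg, ← lintegral_const_mul _ (by fun_prop)]
  refine lintegral_mono fun z => ?_
  rw [enorm_mul, ← mul_assoc, avgKernel, ← ENNReal.ofReal_mul hC, ← ofReal_norm]
  exact mul_le_mul_left (ENNReal.ofReal_le_ofReal (norm_dyadicDilate_le g hg i _)) _

lemma dyadicAvg_add_le (q n r : ℕ) {h : ℝ → ℝ≥0∞} (hh : Measurable h) (x : ℝ) :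
    dyadicAvg q (n + r) h x ≤ 2 ^ r * dyadicAvg q n h x := by
  rw [dyadicAvg, dyadicAvg, ← lintegral_const_mul _ (by fun_prop)]
  refine lintegral_mono fun y => ?_
  have hpos := cauchyWeight_pos (n + r) (x - y)
  rw [← mul_assoc]
  refine mul_le_mul_left ?_ _
  rw [show (2 : ℝ≥0∞) ^ r = .ofReal (2 ^ r) by rw [ENNReal.ofReal_pow] <;> norm_num, avgKernel,
    avgKernel, ← ENNReal.ofReal_mul (by positivity)]
  refine ENNReal.ofReal_le_ofReal ?_
  rw [pow_add, mul_comm ((2 : ℝ) ^ n), mul_assoc]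
  gcongr
  exact cauchyWeight_anti le_self_add _

lemma exists_enorm_sq_lpPiece_le_dyadicAvg (hφ : ∀ ξ, |ξ| ≤ 1 / 2 → myFourier φ ξ = 1)
    (hψ : ∀ ξ, myFourier ψ ξ ≠ 0 → |ξ| ≤ 2) :
    ∃ C ≠ ∞, ∀ {ι : Type*} (s : Finset ι) (c : ι → ℂ) (l : ι → ℝ) (i : ℕ) (x : ℝ),
      ‖lpPiece ψ s c l i x‖ₑ ^ 2 ≤ C * dyadicAvg 2 i (fun z => ‖lpPiece ψ s c l i z‖ₑ ^ 2) x := by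
  obtain ⟨A, hA, hdecay⟩ := exists_norm_le_cauchyWeight_pow φ 2
  refine ⟨(.ofReal A * 2 ^ 2) ^ 2 * .ofReal Real.pi, by finiteness, fun s c l i x => ?_⟩
  have hmeas := (continuous_lpPiece (ψ := ψ) s c l i).measurable
  have hlinear : ‖lpPiece ψ s c l i x‖ₑ ≤
      .ofReal A * (2 ^ 2 * dyadicAvg 2 i (fun z => ‖lpPiece ψ s c l i z‖ₑ) x) := by
    rw [← integral_dyadicDilate_mul_lpPiece s c l hφ hψ]
    exact (enorm_integral_dyadicDilate_mul_le hA.le hdecay hmeas _ _).trans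
      (mul_le_mul_right (dyadicAvg_add_le 2 i 2 hmeas.enorm x) _)
  calc _ ≤ _ := pow_le_pow_left' hlinear 2
    _ = (.ofReal A * 2 ^ 2) ^ 2 * dyadicAvg 2 i (fun z => ‖lpPiece ψ s c l i z‖ₑ) x ^ (1 + 1) := by
        ring
    _ ≤ (.ofReal A * 2 ^ 2) ^ 2 *
          (.ofReal Real.pi ^ 1 * dyadicAvg 2 i (fun z => ‖lpPiece ψ s c l i z‖ₑ ^ (1 + 1)) x) :=
        mul_le_mul_right (dyadicAvg_pow_le one_le_two hmeas.enorm 1 x) _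
    _ = _ := by rw [pow_one, mul_assoc]

end LittlewoodPaleyPieces

section LocalSquareFunction

open scoped ENNReal

variable {ι : Type*} {φ ψ : SchwartzMap ℝ ℂ} (s : Finset ι) (c : ι → ℂ) (l : ι → ℝ)

lemma one_add_sq_le_mul (v w : ℝ) : 1 + v ^ 2 ≤ 2 * (1 + (w - v) ^ 2) * (1 + w ^ 2) := by
  nlinarith [sq_nonneg (2 * w - v), sq_nonneg (w * (w - v))]

lemma exists_norm_sub_le_cauchyWeight (g : SchwartzMap ℝ ℂ) : ∃ C > 0, ∀ u v : ℝ,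
    ‖g u - g v‖ ≤ C * |u - v| * (1 + (u - v) ^ 2) * cauchyWeight 0 v := by
  obtain ⟨C, hC, hdecay⟩ := exists_norm_le_cauchyWeight_pow (SchwartzMap.derivCLM ℝ ℂ g) 1
  refine ⟨2 * C, by positivity, fun u v => ?_⟩
  have hderiv : ∀ w ∈ Set.uIcc v u,
      ‖deriv g w‖ ≤ C * (2 * (1 + (u - v) ^ 2) * cauchyWeight 0 v) := fun w hw => by
    have hbound := hdecay w
    rw [SchwartzMap.derivCLM_apply, pow_one] at hbound
    have hsq : (w - v) ^ 2 ≤ (u - v) ^ 2 := sq_le_sq.mpr (Set.abs_sub_left_of_mem_uIcc hw)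
    refine hbound.trans (mul_le_mul_of_nonneg_left ?_ hC.le)
    simp only [cauchyWeight, pow_zero, one_mul]
    rw [← div_eq_mul_inv, inv_eq_one_div, div_le_div_iff₀ (by positivity) (by positivity), one_mul]
    exact (one_add_sq_le_mul v w).trans (by gcongr)
  refine ((convex_uIcc v u).norm_image_sub_le_of_norm_deriv_le (fun w _ => g.differentiableAt)
    hderiv Set.left_mem_uIcc Set.right_mem_uIcc).trans_eq ?_
  rw [Real.norm_eq_abs]
  ring

lemma two_pow_mul_abs_mul_cauchyWeight_le_one (i : ℕ) (t : ℝ) :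
    2 ^ i * |t| * cauchyWeight i t ≤ 1 := by
  rw [cauchyWeight, ← div_eq_mul_inv, div_le_one (by positivity), mul_pow, ← sq_abs t, ← mul_pow]
  nlinarith [sq_nonneg (2 ^ i * |t| - 1)]

lemma one_add_sq_mul_cauchyWeight_le_one {n i : ℕ} (h : n ≤ i) (t : ℝ) :
    (1 + (2 ^ n * t) ^ 2) * cauchyWeight i t ≤ 1 :=
  calc _ ≤ (1 + (2 ^ n * t) ^ 2) * cauchyWeight n t := by gcongr; exact cauchyWeight_anti h t
    _ = 1 := mul_inv_cancel₀ (by positivity)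

/- The gain `2ⁿ / 2ⁱ` is what makes the commutators of the fine pieces with a coarse window
summable. -/
lemma norm_dyadicDilate_mul_norm_sub_le {A B : ℝ} (hA : 0 ≤ A) (hB : 0 ≤ B)
    (hψ : ∀ t, ‖ψ t‖ ≤ A * cauchyWeight 0 t ^ 3)
    (hφ : ∀ u v : ℝ, ‖φ u - φ v‖ ≤ B * |u - v| * (1 + (u - v) ^ 2) * cauchyWeight 0 v)
    {n i : ℕ} (h : n ≤ i) (x y z : ℝ) :
    ‖dyadicDilate ψ i (x - z)‖ * ‖φ (2 ^ n * (x - y)) - φ (2 ^ n * (z - y))‖ ≤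
      A * B * (2 ^ n / 2 ^ i) * (2 ^ i * cauchyWeight i (x - z)) * cauchyWeight n (z - y) := by
  have hdilate := norm_dyadicDilate_le ψ hψ i (x - z)
  have hwindow := hφ (2 ^ n * (x - y)) (2 ^ n * (z - y))
  rw [cauchyWeight_zero_two_pow_mul, ← mul_sub, sub_sub_sub_cancel_right, abs_mul,
    abs_of_pos (by positivity : (0 : ℝ) < 2 ^ n)] at hwindow
  set d := x - z
  have hd := cauchyWeight_pos i d
  have hzy := cauchyWeight_pos n (z - y)
  calc _ ≤ (A * (2 ^ i * cauchyWeight i d ^ 3)) *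
          (B * (2 ^ n * |d|) * (1 + (2 ^ n * d) ^ 2) * cauchyWeight n (z - y)) := by gcongr
    _ = A * B * (2 ^ n / 2 ^ i) * (2 ^ i * cauchyWeight i d) * cauchyWeight n (z - y) *
          ((2 ^ i * |d| * cauchyWeight i d) * ((1 + (2 ^ n * d) ^ 2) * cauchyWeight i d)) := by
        field_simp
    _ ≤ A * B * (2 ^ n / 2 ^ i) * (2 ^ i * cauchyWeight i d) * cauchyWeight n (z - y) *
          (1 * 1) := by
        gcongr
        · exact two_pow_mul_abs_mul_cauchyWeight_le_one i d
        · exact one_add_sq_mul_cauchyWeight_le_one h d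
    _ = _ := by ring

/-- The square `2ⁿ |φ(2ⁿ t)|²` of the `L²`-normalised dilate of `φ`, which localises to the scale
`2⁻ⁿ`. -/
noncomputable def dyadicWindow (φ : SchwartzMap ℝ ℂ) (n : ℕ) (t : ℝ) : ℝ≥0∞ :=
  .ofReal (2 ^ n) * ‖φ (2 ^ n * t)‖ₑ ^ 2

lemma measurable_dyadicWindow (n : ℕ) : Measurable (dyadicWindow φ n) := by
  have hcont : Continuous fun t => φ (2 ^ n * t) := φ.continuous.comp (by fun_prop)
  exact (hcont.enorm.measurable.pow_const 2).const_mul _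

lemma exists_schwartz_eq_mul_trigSum (g : SchwartzMap ℝ ℂ) (n : ℕ) (y : ℝ) :
    ∃ G : SchwartzMap ℝ ℂ, ∀ x, G x = g (2 ^ n * (x - y)) * trigSum s c l x := by
  refine ⟨((2 : ℂ) ^ n)⁻¹ • SchwartzMap.smulLeftCLM ℂ (trigSum s c l)
    (SchwartzMap.compSubConstCLM ℂ y (dyadicDilate g n)), fun x => ?_⟩
  rw [smul_apply,
    SchwartzMap.smulLeftCLM_apply_apply (hasTemperateGrowth_trigSum s c l),
    SchwartzMap.compSubConstCLM_apply, dyadicDilate_apply, smul_eq_mul, smul_eq_mul]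
  field_simp

lemma integral_commutator {G : SchwartzMap ℝ ℂ} {Θ : ℝ → ℂ}
    (hG : ∀ x, G x = Θ x * trigSum s c l x) (i : ℕ) (x : ℝ) :
    Θ x * lpPiece ψ s c l i x = (∫ z, dyadicDilate ψ i (x - z) * G z) +
      ∫ z, dyadicDilate ψ i (x - z) * (Θ x - Θ z) * trigSum s c l z := by
  have hf := (integrable_sub_mul_trigSum (dyadicDilate ψ i) s c l x).const_mul (Θ x)
  have hGint : Integrable fun z => dyadicDilate ψ i (x - z) * G z :=
    ((dyadicDilate ψ i).integrable.comp_sub_left x).mul_bdd (c := SchwartzMap.seminorm ℝ 0 0 G)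
      G.continuous.aestronglyMeasurable (.of_forall fun z => SchwartzMap.norm_le_seminorm ℝ G z)
  have hsplit : ∀ z, dyadicDilate ψ i (x - z) * (Θ x - Θ z) * trigSum s c l z =
      Θ x * (dyadicDilate ψ i (x - z) * trigSum s c l z) - dyadicDilate ψ i (x - z) * G z :=
    fun z => by rw [hG]; ring
  simp only [hsplit]
  rw [integral_sub hf hGint, integral_const_mul, integral_dyadicDilate_mul_trigSum]
  ring

lemma enorm_window_mul_lpPiece_le {A B : ℝ} (hA : 0 ≤ A) (hB : 0 ≤ B)
    (hψ : ∀ t, ‖ψ t‖ ≤ A * cauchyWeight 0 t ^ 3)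
    (hφ : ∀ u v : ℝ, ‖φ u - φ v‖ ≤ B * |u - v| * (1 + (u - v) ^ 2) * cauchyWeight 0 v)
    {n i : ℕ} (h : n ≤ i) {y : ℝ} {G : SchwartzMap ℝ ℂ}
    (hG : ∀ x, G x = φ (2 ^ n * (x - y)) * trigSum s c l x) (x : ℝ) :
    ‖φ (2 ^ n * (x - y))‖ₑ * ‖lpPiece ψ s c l i x‖ₑ ≤ ‖∫ z, dyadicDilate ψ i (x - z) * G z‖ₑ +
      .ofReal (A * B * (2 ^ n / 2 ^ i)) *
        dyadicAvg 1 i (fun z => .ofReal (cauchyWeight n (z - y)) * ‖trigSum s c l z‖ₑ) x := by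
  have hf := (continuous_trigSum s c l).measurable
  rw [← enorm_mul, integral_commutator s c l hG]
  refine (enorm_add_le _ _).trans (add_le_add_right ?_ _)
  refine (enorm_integral_le_lintegral_enorm _).trans ?_
  rw [dyadicAvg, ← lintegral_const_mul _ (by fun_prop)]
  refine lintegral_mono fun z => ?_
  have hweight := cauchyWeight_pos i (x - z)
  rw [enorm_mul, ← mul_assoc, ← mul_assoc]
  refine mul_le_mul_left ?_ _
  rw [enorm_mul, ← ofReal_norm, ← ofReal_norm, avgKernel, pow_one,
    ← ENNReal.ofReal_mul (by positivity), ← ENNReal.ofReal_mul (by positivity),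
    ← ENNReal.ofReal_mul (by positivity)]
  exact ENNReal.ofReal_le_ofReal (norm_dyadicDilate_mul_norm_sub_le hA hB hψ hφ h x y z)

lemma lintegral_cauchyWeight_mul_sq (n : ℕ) (y : ℝ) (h : ℝ → ℝ≥0∞) (hh : Measurable h) :
    .ofReal (2 ^ n) * ∫⁻ z, (.ofReal (cauchyWeight n (z - y)) * h z) ^ 2 =
      dyadicAvg 2 n (fun z => h z ^ 2) y := by
  rw [← lintegral_const_mul _ (by fun_prop)]
  refine lintegral_congr fun z => ?_
  rw [avgKernel_sub_comm, avgKernel, ENNReal.ofReal_mul (by positivity),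
    ENNReal.ofReal_pow (cauchyWeight_pos _ _).le, mul_pow, mul_assoc]

lemma ennreal_add_sq_le (a b : ℝ≥0∞) : (a + b) ^ 2 ≤ 2 * (a ^ 2 + b ^ 2) := by
  have h := ENNReal.rpow_add_le_mul_rpow_add_rpow a b one_le_two
  norm_num at h
  exact h

lemma lintegral_dyadicWindow_mul_lpPiece_le {A B : ℝ} (hA : 0 ≤ A) (hB : 0 ≤ B)
    (hψ : ∀ t, ‖ψ t‖ ≤ A * cauchyWeight 0 t ^ 3)
    (hφ : ∀ u v : ℝ, ‖φ u - φ v‖ ≤ B * |u - v| * (1 + (u - v) ^ 2) * cauchyWeight 0 v)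
    {n i : ℕ} (h : n ≤ i) {y : ℝ} {G : SchwartzMap ℝ ℂ}
    (hG : ∀ x, G x = φ (2 ^ n * (x - y)) * trigSum s c l x) :
    ∫⁻ x, dyadicWindow φ n (x - y) * ‖lpPiece ψ s c l i x‖ₑ ^ 2 ≤
      .ofReal (2 ^ n) * (2 * ((∫⁻ x, ‖∫ z, dyadicDilate ψ i (x - z) * G z‖ₑ ^ 2) +
        .ofReal (A * B * (2 ^ n / 2 ^ i)) ^ 2 * (.ofReal Real.pi ^ 2 *
          ∫⁻ z, (.ofReal (cauchyWeight n (z - y)) * ‖trigSum s c l z‖ₑ) ^ 2))) := by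
  have hf := (continuous_trigSum s c l).measurable
  set w : ℝ → ℝ≥0∞ := fun z => .ofReal (cauchyWeight n (z - y)) * ‖trigSum s c l z‖ₑ
  have hw : Measurable w := by fun_prop
  set T : ℝ → ℂ := fun x => ∫ z, dyadicDilate ψ i (x - z) * G z
  have hT : Measurable T := (continuous_integral_sub_mul (dyadicDilate ψ i) G).measurable
  set γ : ℝ≥0∞ := .ofReal (A * B * (2 ^ n / 2 ^ i))
  calc _ = ∫⁻ x, .ofReal (2 ^ n) * (‖φ (2 ^ n * (x - y))‖ₑ * ‖lpPiece ψ s c l i x‖ₑ) ^ 2 :=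
        lintegral_congr fun x => by rw [dyadicWindow, mul_pow, mul_assoc]
    _ ≤ ∫⁻ x, .ofReal (2 ^ n) * (2 * (‖T x‖ₑ ^ 2 + γ ^ 2 * dyadicAvg 1 i w x ^ 2)) :=
        lintegral_mono fun x => mul_le_mul_right ((pow_le_pow_left'
          (enorm_window_mul_lpPiece_le s c l hA hB hψ hφ h hG x) 2).trans
            ((ennreal_add_sq_le _ _).trans_eq (by rw [mul_pow]))) _
    _ = .ofReal (2 ^ n) * (2 * ((∫⁻ x, ‖T x‖ₑ ^ 2) + γ ^ 2 * ∫⁻ x, dyadicAvg 1 i w x ^ 2)) := by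
        rw [lintegral_const_mul _ (by fun_prop), lintegral_const_mul _ (by fun_prop),
          lintegral_add_left (by fun_prop), lintegral_const_mul _ (by fun_prop)]
    _ ≤ _ := by
        gcongr
        exact lintegral_dyadicAvg_sq_le le_rfl hw

lemma lintegral_enorm_sq_window_mul_trigSum_le {A : ℝ} (hA : 0 ≤ A)
    (hφ : ∀ t, ‖φ t‖ ≤ A * cauchyWeight 0 t ^ 1) (n : ℕ) (y : ℝ) :
    ∫⁻ x, ‖φ (2 ^ n * (x - y)) * trigSum s c l x‖ₑ ^ 2 ≤ .ofReal A ^ 2 *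
      ∫⁻ z, (.ofReal (cauchyWeight n (z - y)) * ‖trigSum s c l z‖ₑ) ^ 2 := by
  have hf := (continuous_trigSum s c l).measurable
  rw [← lintegral_const_mul _ (by fun_prop)]
  refine lintegral_mono fun z => ?_
  have hbound := hφ (2 ^ n * (z - y))
  rw [cauchyWeight_zero_two_pow_mul, pow_one] at hbound
  rw [← mul_pow, ← mul_assoc, ← ENNReal.ofReal_mul hA, enorm_mul, ← ofReal_norm]
  exact pow_le_pow_left' (mul_le_mul_left (ENNReal.ofReal_le_ofReal hbound) _) 2

lemma sum_sq_two_pow_div_le_two (n J : ℕ) :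
    ∑ i ∈ Finset.Ico n J, ((2 : ℝ) ^ n / 2 ^ i) ^ 2 ≤ 2 := by
  rw [Finset.sum_Ico_eq_sum_range]
  refine (Finset.sum_le_sum fun k _ => ?_).trans (sum_geometric_two_le (J - n))
  have hratio : (2 : ℝ) ^ n / 2 ^ (n + k) = (1 / 2) ^ k := by
    rw [pow_add, one_div, inv_pow]
    field_simp
  rw [hratio]
  exact pow_le_of_le_one (by positivity) (pow_le_one₀ (by norm_num) (by norm_num)) two_ne_zero

lemma sum_ofReal_sq_two_pow_div_le {a : ℝ} (ha : 0 ≤ a) (n J : ℕ) :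
    ∑ i ∈ Finset.Ico n J, ENNReal.ofReal (a * (2 ^ n / 2 ^ i)) ^ 2 ≤ 2 * .ofReal a ^ 2 := by
  simp only [← ENNReal.ofReal_pow (mul_nonneg ha (div_nonneg (pow_nonneg zero_le_two _)
    (pow_nonneg zero_le_two _))), ← ENNReal.ofReal_pow ha]
  rw [← ENNReal.ofReal_sum_of_nonneg fun i _ => by positivity, ← ENNReal.ofReal_ofNat,
    ← ENNReal.ofReal_mul zero_le_two]
  refine ENNReal.ofReal_le_ofReal ?_
  simp only [mul_pow a]
  rw [← Finset.mul_sum, mul_comm]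
  exact mul_le_mul_of_nonneg_right (sum_sq_two_pow_div_le_two n J) (sq_nonneg a)

lemma exists_sum_lintegral_dyadicWindow_mul_lpPiece_le (φ : SchwartzMap ℝ ℂ)
    (hψ : ∀ ξ, myFourier ψ ξ ≠ 0 → 1 / 2 < |ξ| ∧ |ξ| ≤ 2) :
    ∃ C ≠ ∞, ∀ {ι : Type*} (s : Finset ι) (c : ι → ℂ) (l : ι → ℝ) (J n : ℕ) (y : ℝ),
      ∑ i ∈ Finset.Ico n J, ∫⁻ x, dyadicWindow φ n (x - y) * ‖lpPiece ψ s c l i x‖ₑ ^ 2 ≤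
        C * dyadicAvg 2 n (fun z => ‖trigSum s c l z‖ₑ ^ 2) y := by
  obtain ⟨A₁, hA₁, hφdecay⟩ := exists_norm_le_cauchyWeight_pow φ 1
  obtain ⟨A, hA, hψdecay⟩ := exists_norm_le_cauchyWeight_pow ψ 3
  obtain ⟨B, hB, hlipschitz⟩ := exists_norm_sub_le_cauchyWeight φ
  have hfinite := lintegral_enorm_ne_top ψ
  set K := ∫⁻ t, ‖ψ t‖ₑ
  refine ⟨2 * (2 * K ^ 2 * .ofReal A₁ ^ 2 + 2 * .ofReal (A * B) ^ 2 * .ofReal Real.pi ^ 2),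
    by finiteness, fun s c l J n y => ?_⟩
  obtain ⟨G, hG⟩ := exists_schwartz_eq_mul_trigSum s c l φ n y
  set E := ∫⁻ z, (.ofReal (cauchyWeight n (z - y)) * ‖trigSum s c l z‖ₑ) ^ 2 with hE
  have hplancherel : ∑ i ∈ Finset.Ico n J, ∫⁻ x, ‖∫ z, dyadicDilate ψ i (x - z) * G z‖ₑ ^ 2 ≤
      2 * K ^ 2 * (.ofReal A₁ ^ 2 * E) := by
    refine (sum_lintegral_enorm_sq_convolution_le _ (dyadicDilate ψ)
      (sum_enorm_sq_myFourier_dyadicDilate_le hψ _) G).trans (mul_le_mul_right ?_ _)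
    simp only [hG]
    exact lintegral_enorm_sq_window_mul_trigSum_le s c l hA₁.le hφdecay n y
  calc _ ≤ ∑ i ∈ Finset.Ico n J, ENNReal.ofReal (2 ^ n) *
          (2 * ((∫⁻ x, ‖∫ z, dyadicDilate ψ i (x - z) * G z‖ₑ ^ 2) +
            .ofReal (A * B * (2 ^ n / 2 ^ i)) ^ 2 * (.ofReal Real.pi ^ 2 * E))) :=
        Finset.sum_le_sum fun i hi => lintegral_dyadicWindow_mul_lpPiece_le s c l hA.le hB.le
          hψdecay hlipschitz (Finset.mem_Ico.mp hi).1 hG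
    _ = .ofReal (2 ^ n) * (2 * ((∑ i ∈ Finset.Ico n J, ∫⁻ x, ‖∫ z, dyadicDilate ψ i (x - z) *
          G z‖ₑ ^ 2) + (∑ i ∈ Finset.Ico n J, ENNReal.ofReal (A * B * (2 ^ n / 2 ^ i)) ^ 2) *
            (.ofReal Real.pi ^ 2 * E))) := by
        rw [← Finset.mul_sum, ← Finset.mul_sum, Finset.sum_add_distrib, ← Finset.sum_mul]
    _ ≤ .ofReal (2 ^ n) * (2 * (2 * K ^ 2 * (.ofReal A₁ ^ 2 * E) +
          2 * .ofReal (A * B) ^ 2 * (.ofReal Real.pi ^ 2 * E))) := by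
        gcongr
        exact sum_ofReal_sq_two_pow_div_le (by positivity) n J
    _ = 2 * (2 * K ^ 2 * .ofReal A₁ ^ 2 + 2 * .ofReal (A * B) ^ 2 * .ofReal Real.pi ^ 2) *
          (.ofReal (2 ^ n) * E) := by ring
    _ = _ := by
        rw [hE, lintegral_cauchyWeight_mul_sq n y _ (continuous_trigSum s c l).enorm.measurable]

lemma integrable_norm_sq_mul_cauchyWeight_sq (φ : SchwartzMap ℝ ℂ) :
    Integrable fun t => ‖φ t‖ ^ 2 * cauchyWeight 0 t ^ 2 := by
  refine ((φ.memLp 2).integrable_norm_pow (p := 2) two_ne_zero).mul_bdd (c := 1)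
    ((continuous_cauchyWeight 0).pow 2).aestronglyMeasurable (.of_forall fun t => ?_)
  rw [Real.norm_of_nonneg (sq_nonneg _)]
  exact pow_le_one₀ (cauchyWeight_pos 0 t).le (cauchyWeight_le_one 0 t)

lemma lintegral_dyadicWindow_mul_cauchyWeight_sq (φ : SchwartzMap ℝ ℂ) (n : ℕ) :
    ∫⁻ t, dyadicWindow φ n t * .ofReal (cauchyWeight n t ^ 2) =
      .ofReal (∫ t, ‖φ t‖ ^ 2 * cauchyWeight 0 t ^ 2) := by
  have hpos : (0 : ℝ) < 2 ^ n := by positivity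
  have hscale := Measure.integral_comp_mul_left
    (fun t => ‖φ t‖ ^ 2 * cauchyWeight 0 t ^ 2) ((2 : ℝ) ^ n)
  rw [abs_of_pos (inv_pos.mpr hpos), smul_eq_mul, eq_inv_mul_iff_mul_eq₀ hpos.ne',
    ← integral_const_mul] at hscale
  rw [← hscale, ofReal_integral_eq_lintegral_ofReal
    (((integrable_norm_sq_mul_cauchyWeight_sq φ).comp_mul_left' hpos.ne').const_mul _)
    (.of_forall fun t => by positivity)]
  refine lintegral_congr fun t => ?_
  rw [dyadicWindow, cauchyWeight_zero_two_pow_mul, ENNReal.ofReal_mul hpos.le,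
    ENNReal.ofReal_mul (sq_nonneg _), ENNReal.ofReal_pow (norm_nonneg _), ofReal_norm, mul_assoc]

lemma exists_one_le_mul_lintegral_dyadicWindow {t₀ : ℝ} (hφ : φ t₀ ≠ 0) :
    ∃ C ≠ ∞, ∀ n, 1 ≤ C * ∫⁻ t, dyadicWindow φ n t * .ofReal (cauchyWeight n t ^ 2) := by
  have hweight := cauchyWeight_pos 0
  have hpos : 0 < ∫ t, ‖φ t‖ ^ 2 * cauchyWeight 0 t ^ 2 :=
    integral_pos_of_integrable_nonneg_nonzero (by fun_prop)
      (integrable_norm_sq_mul_cauchyWeight_sq φ) (fun t => by positivity)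
      (mul_pos (by positivity) (pow_pos (hweight t₀) 2)).ne'
  refine ⟨.ofReal (∫ t, ‖φ t‖ ^ 2 * cauchyWeight 0 t ^ 2)⁻¹, ENNReal.ofReal_ne_top, fun n => ?_⟩
  rw [lintegral_dyadicWindow_mul_cauchyWeight_sq, ← ENNReal.ofReal_mul (by positivity),
    inv_mul_cancel₀ hpos.ne', ENNReal.ofReal_one]

end LocalSquareFunction

section LittlewoodPaley

open scoped ENNReal

variable {φ ψ : SchwartzMap ℝ ℂ}

lemma avgKernel_two_zero_le {u : ℝ} (hu : u ∈ Set.Icc (0 : ℝ) 1) (t : ℝ) :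
    avgKernel 2 0 t ≤ 9 * avgKernel 2 0 (t + u) := by
  have hweight : cauchyWeight 0 t ≤ 3 * cauchyWeight 0 (t + u) := by
    simp only [cauchyWeight, pow_zero, one_mul]
    rw [← div_eq_mul_inv, inv_eq_one_div, div_le_div_iff₀ (by positivity) (by positivity)]
    nlinarith [sq_nonneg (2 * t - u), mul_nonneg hu.1 (sub_nonneg.mpr hu.2)]
  have hpos := cauchyWeight_pos 0 t
  rw [avgKernel, avgKernel, ← ENNReal.ofReal_ofNat, ← ENNReal.ofReal_mul (by norm_num)]
  refine ENNReal.ofReal_le_ofReal ?_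
  calc _ = cauchyWeight 0 t ^ 2 := by rw [pow_zero, one_mul]
    _ ≤ (3 * cauchyWeight 0 (t + u)) ^ 2 := by gcongr
    _ = _ := by ring

lemma dyadicAvg_le_dyadicAvg_translate {h : ℝ → ℝ≥0∞} (hh : Measurable h) {u : ℝ}
    (hu : u ∈ Set.Icc (0 : ℝ) 1) (x : ℝ) :
    dyadicAvg 2 0 h x ≤ 9 * dyadicAvg 2 0 (fun y => h (u + y)) x := by
  rw [dyadicAvg, dyadicAvg, ← lintegral_const_mul _ (by fun_prop),
    ← lintegral_add_left_eq_self (fun y => avgKernel 2 0 (x - y) * h y) u]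
  refine lintegral_mono fun y => ?_
  rw [← mul_assoc]
  convert mul_le_mul_left (avgKernel_two_zero_le hu (x - (u + y))) _ using 4
  ring

/- Averaging the translation bound over `u ∈ [0, 1]`. -/
lemma dyadicAvg_le_of_lintegral_Icc_le {h : ℝ → ℝ≥0∞} (hh : Measurable h) {M : ℝ≥0∞}
    (hM : ∀ z, ∫⁻ u in Set.Icc 0 1, h (u + z) ≤ M) (x : ℝ) :
    dyadicAvg 2 0 h x ≤ 9 * (.ofReal Real.pi * M) :=
  calc dyadicAvg 2 0 h x = ∫⁻ _ in Set.Icc (0 : ℝ) 1, dyadicAvg 2 0 h x := by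
        rw [setLIntegral_const, Real.volume_Icc, sub_zero, ENNReal.ofReal_one, mul_one]
    _ ≤ ∫⁻ u in Set.Icc (0 : ℝ) 1, 9 * dyadicAvg 2 0 (fun y => h (u + y)) x :=
        setLIntegral_mono' measurableSet_Icc fun u hu => dyadicAvg_le_dyadicAvg_translate hh hu x
    _ = 9 * dyadicAvg 2 0 (fun y => ∫⁻ u in Set.Icc (0 : ℝ) 1, h (u + y)) x := by
        have hprod : Measurable fun p : ℝ × ℝ => avgKernel 2 0 (x - p.2) * h (p.1 + p.2) := by
          fun_prop
        simp only [dyadicAvg]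
        rw [lintegral_const_mul _ hprod.lintegral_prod_right',
          lintegral_lintegral_swap hprod.aemeasurable]
        refine congrArg (9 * ·) (lintegral_congr fun y => ?_)
        exact lintegral_const_mul (avgKernel 2 0 (x - y)) (f := fun u => h (u + y)) (by fun_prop)
    _ ≤ _ := mul_le_mul_right (dyadicAvg_le_of_le one_le_two hM x) _

theorem exists_dyadicAvg_sum_lpPiece_pow_le (m : ℕ)
    (hφ : ∀ ξ, |ξ| ≤ 1 / 2 → myFourier φ ξ = 1)
    (hψ : ∀ ξ, myFourier ψ ξ ≠ 0 → 1 / 2 < |ξ| ∧ |ξ| ≤ 2) :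
    ∃ C ≠ ∞, ∀ {ι : Type*} (s : Finset ι) (c : ι → ℂ) (l : ι → ℝ) (J : ℕ) (x : ℝ),
      dyadicAvg 2 0 (fun y => (∑ j ∈ Finset.range J, ‖lpPiece ψ s c l j y‖ₑ ^ 2) ^ 2 ^ m) x ≤
        C * dyadicAvg 2 0 (fun y => (‖trigSum s c l y‖ₑ ^ 2) ^ 2 ^ m) x := by
  obtain ⟨t, ht⟩ : ∃ t, φ t ≠ 0 := by
    by_contra! hzero
    simpa [myFourier, hzero] using hφ 0 (by norm_num)
  obtain ⟨CR, hCR, hreproduce⟩ := exists_enorm_sq_lpPiece_le_dyadicAvg hφ fun ξ hξ => (hψ ξ hξ).2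
  obtain ⟨CL, hCL, hlocal⟩ := exists_sum_lintegral_dyadicWindow_mul_lpPiece_le φ hψ
  obtain ⟨Cθ, hCθ, hwindow⟩ := exists_one_le_mul_lintegral_dyadicWindow ht
  obtain ⟨C, hC, hbound⟩ :=
    exists_dyadicAvg_sum_pow_le m hCR hCL hCθ measurable_dyadicWindow hwindow
  refine ⟨C, hC, fun s c l J x => ?_⟩
  have hfinite := lintegral_enorm_ne_top ψ
  set K := ∫⁻ t, ‖ψ t‖ₑ
  have hcoeff : ∑ n ∈ s, ‖c n‖ₑ ≠ ∞ := ENNReal.sum_ne_top.mpr fun n _ => enorm_ne_top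
  refine hbound (D := ((K + 1) * ∑ n ∈ s, ‖c n‖ₑ) ^ 2) J x
    (fun j => (continuous_lpPiece s c l j).enorm.measurable.pow_const 2)
    ((continuous_trigSum s c l).enorm.measurable.pow_const 2) (by finiteness)
    (fun j y => pow_le_pow_left' ((enorm_lpPiece_le s c l j y).trans ?_) 2)
    (fun y => pow_le_pow_left' ((enorm_trigSum_le s c l y).trans ?_) 2)
    (hreproduce s c l) (hlocal s c l J)
  · exact mul_le_mul_left le_self_add _
  · exact le_mul_of_one_le_left' le_add_self

end LittlewoodPaley

section TruncatedPieces

open scoped ENNReal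

variable {ι : Type*} {φ ψ : SchwartzMap ℝ ℂ}

/-- The sharp truncation of a Littlewood–Paley piece at scale `2⁻ʲ` to the frequencies
`|λ| ≤ 2ʲ`. -/
noncomputable def truncatedPiece (ψ : SchwartzMap ℝ ℂ) (s : Finset ι) (c : ι → ℂ) (l : ι → ℝ)
    (j : ℕ) : ℝ → ℂ :=
  trigSum {n ∈ s | |l n| ≤ 2 ^ j} (fun n => myFourier ψ ((2 ^ j)⁻¹ * l n) * c n) l

lemma continuous_truncatedPiece (s : Finset ι) (c : ι → ℂ) (l : ι → ℝ) (j : ℕ) :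
    Continuous (truncatedPiece ψ s c l j) := continuous_trigSum _ _ _

lemma ofReal_squareSum {κ : Type*} (t : Finset κ) (f : κ → ℝ → ℂ) (x : ℝ) :
    ENNReal.ofReal (squareSum t f x) = ∑ j ∈ t, ‖f j x‖ₑ ^ 2 := by
  rw [squareSum, ENNReal.ofReal_sum_of_nonneg fun j _ => sq_nonneg _]
  exact Finset.sum_congr rfl fun j _ => by rw [ENNReal.ofReal_pow (norm_nonneg _), ofReal_norm]

theorem exists_lintegral_squareSum_truncatedPiece_le (m : ℕ) {α : ℝ} (hα : 0 < α)
    (hφ : ∀ ξ, |ξ| ≤ 1 / 2 → myFourier φ ξ = 1)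
    (hψ : ∀ ξ, myFourier ψ ξ ≠ 0 → 1 / 2 < |ξ| ∧ |ξ| ≤ 2) :
    ∃ C ≠ ∞, ∀ {ι : Type} (s : Finset ι) (c : ι → ℂ) (l : ι → ℝ) (J : ℕ) {M : ℝ≥0∞} (x₀ : ℝ),
      (∀ i ∈ s, ∀ i' ∈ s, l i < l i' → α ≤ l i' - l i) →
      (∀ z, ∫⁻ u in Set.Icc 0 1, ‖trigSum s c l (u + z)‖ₑ ^ 2 ^ (m + 1) ≤ M) →
      ∫⁻ u in Set.Icc 0 1, .ofReal
        (squareSum (Finset.range J) (truncatedPiece ψ s c l) (u + x₀)) ^ 2 ^ m ≤ C * M := by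
  obtain ⟨A, hA, truncation⟩ := exists_lintegral_squareSum_truncation_le m (half_pos hα)
  obtain ⟨B, hB, littlewoodPaley⟩ := exists_dyadicAvg_sum_lpPiece_pow_le m hφ hψ
  refine ⟨A * (B * (9 * .ofReal Real.pi)), by finiteness, fun s c l J M x₀ hl hM => ?_⟩
  have htruncation := truncation s (Finset.range J)
    (fun j n => myFourier ψ ((2 ^ j)⁻¹ * l n) * c n) l (fun j => 2 ^ j) x₀
    (fun j => by positivity) fun i hi i' hi' h => by linarith [hl i hi i' hi' h]
  simp only [ENNReal.ofReal_pow (squareSum_nonneg _ _ _)] at htruncation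
  have hmeas : Measurable fun y => (‖trigSum s c l y‖ₑ ^ 2) ^ 2 ^ m :=
    ((continuous_trigSum s c l).enorm.measurable.pow_const 2).pow_const _
  calc _ ≤ A * dyadicAvg 2 0
          (fun y => .ofReal (squareSum (Finset.range J) (lpPiece ψ s c l) y) ^ 2 ^ m) x₀ :=
        htruncation
    _ ≤ A * (B * dyadicAvg 2 0 (fun y => (‖trigSum s c l y‖ₑ ^ 2) ^ 2 ^ m) x₀) := by
        simp only [ofReal_squareSum]
        gcongr
        exact littlewoodPaley s c l J x₀
    _ ≤ A * (B * (9 * (.ofReal Real.pi * M))) := by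
        gcongr
        refine dyadicAvg_le_of_lintegral_Icc_le hmeas (fun z => ?_) x₀
        simpa only [← pow_mul, ← pow_succ'] using hM z
    _ = _ := by ring

/-- The function `2 φ(2 ·) - φ`, with Fourier transform `φ̂(ξ / 2) - φ̂(ξ)`: on the frequencies
`|λ| ≤ 2ʲ` it is this transform at `2⁻ʲ λ` that distinguishes `S_j` from `R_j`. -/
noncomputable def annularBump (φ : SchwartzMap ℝ ℂ) : SchwartzMap ℝ ℂ := dyadicDilate φ 1 - φ

lemma myFourier_annularBump (φ : SchwartzMap ℝ ℂ) (ξ : ℝ) :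
    myFourier (annularBump φ) ξ = myFourier φ (2⁻¹ * ξ) - myFourier φ ξ := by
  have hdilate := myFourier_dyadicDilate φ 1 ξ
  rw [pow_one] at hdilate
  rw [← hdilate]
  simp only [myFourier_eq_integral_charExp, annularBump, sub_apply, mul_sub]
  exact integral_sub (integrable_charExp_mul _ _) (integrable_charExp_mul _ _)

lemma annulus_of_myFourier_annularBump_ne_zero (hone : ∀ ξ, |ξ| ≤ 1 / 2 → myFourier φ ξ = 1)
    (hzero : ∀ ξ, 1 < |ξ| → myFourier φ ξ = 0) (ξ : ℝ) (hξ : myFourier (annularBump φ) ξ ≠ 0) :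
    1 / 2 < |ξ| ∧ |ξ| ≤ 2 := by
  have habs : |2⁻¹ * ξ| = 2⁻¹ * |ξ| := by rw [abs_mul, abs_of_pos (by norm_num)]
  rw [myFourier_annularBump] at hξ
  by_contra! hout
  rcases le_or_gt |ξ| (1 / 2) with hsmall | hlarge
  · rw [hone _ hsmall, hone _ (by rw [habs]; linarith), sub_self] at hξ
    exact hξ rfl
  · have := hout hlarge
    rw [hzero ξ (by linarith), hzero _ (by rw [habs]; linarith), sub_self] at hξ
    exact hξ rfl

end TruncatedPieces

section SquareFunctionOfTrigPoly

variable {φ : SchwartzMap ℝ ℂ}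

lemma TrigPoly.strictMonoOn_Λ (P : TrigPoly) : StrictMonoOn P.Λ (Set.Iio P.N) :=
  strictMonoOn_of_lt_add_one Set.ordConnected_Iio fun n _ _ hn => P.mono n hn

lemma TrigPoly.sep.le_sub {P : TrigPoly} {α : ℝ} (hP : P.sep α) {n n' : ℕ} (hn : n < P.N)
    (hn' : n' < P.N) (hlt : P.Λ n < P.Λ n') : α ≤ P.Λ n' - P.Λ n := by
  have hle : n + 1 ≤ n' := (P.strictMonoOn_Λ.lt_iff_lt hn hn').mp hlt
  have hstep := hP n (by omega)
  have hrest := P.strictMonoOn_Λ.monotoneOn (Set.mem_Iio.mpr (by omega)) hn' hle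
  linarith

lemma TrigPoly.sharpSum_sub_smoothSum (hone : ∀ ξ, |ξ| ≤ 1 / 2 → myFourier φ ξ = 1)
    (hzero : ∀ ξ, 1 < |ξ| → myFourier φ ξ = 0) (P : TrigPoly) (j : ℕ) (x : ℝ) :
    P.sharpSum j x - TrigPoly.smoothSum φ P j x =
      truncatedPiece (annularBump φ) (Finset.range P.N) P.c P.Λ j x := by
  rw [TrigPoly.sharpSum, TrigPoly.smoothSum, truncatedPiece, trigSum, Finset.sum_filter,
    ← Finset.sum_sub_distrib]
  refine Finset.sum_congr rfl fun n _ => ?_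
  split_ifs with hn
  · rw [myFourier_annularBump, hone (2⁻¹ * _), charExp]
    · ring
    · rw [abs_mul, abs_inv_two_pow_mul, abs_of_pos (by norm_num), one_div]
      exact mul_le_of_le_one_right (by norm_num) ((div_le_one (by positivity)).mpr hn)
  · rw [hzero, zero_mul, zero_mul, sub_zero]
    rw [abs_inv_two_pow_mul]
    exact (one_lt_div (by positivity)).mpr (not_le.mp hn)

lemma exists_truncatedPiece_eq_zero {ι : Type*} {ψ : SchwartzMap ℝ ℂ}
    (hψ : ∀ ξ, myFourier ψ ξ ≠ 0 → 1 / 2 < |ξ|) (s : Finset ι) (c : ι → ℂ) (l : ι → ℝ) :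
    ∃ J : ℕ, ∀ j ≥ J, ∀ x, truncatedPiece ψ s c l j x = 0 := by
  obtain ⟨J, hJ⟩ := pow_unbounded_of_one_lt (2 * ∑ n ∈ s, |l n|) (one_lt_two (α := ℝ))
  refine ⟨J, fun j hj x => Finset.sum_eq_zero fun n hn => ?_⟩
  have hvanish : myFourier ψ ((2 ^ j)⁻¹ * l n) = 0 := by
    by_contra hne
    have hlarge := hψ _ hne
    rw [abs_inv_two_pow_mul, lt_div_iff₀ (by positivity)] at hlarge
    have hsum := Finset.single_le_sum (fun n _ => abs_nonneg (l n)) (Finset.mem_filter.mp hn).1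
    have hpow : (2 : ℝ) ^ J ≤ 2 ^ j := pow_le_pow_right₀ one_le_two hj
    linarith
  beta_reduce
  rw [hvanish, zero_mul, zero_mul]

lemma exists_tsum_sharpSum_sub_smoothSum_eq (hone : ∀ ξ, |ξ| ≤ 1 / 2 → myFourier φ ξ = 1)
    (hzero : ∀ ξ, 1 < |ξ| → myFourier φ ξ = 0) (P : TrigPoly) :
    ∃ J : ℕ, ∀ x, ∑' j : ℕ, ‖P.sharpSum (j + 1) x - TrigPoly.smoothSum φ P (j + 1) x‖ ^ 2 =
      squareSum (Finset.range J)
        (fun j => truncatedPiece (annularBump φ) (Finset.range P.N) P.c P.Λ (j + 1)) x := by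
  obtain ⟨J, hJ⟩ := exists_truncatedPiece_eq_zero (fun ξ hξ =>
    (annulus_of_myFourier_annularBump_ne_zero hone hzero ξ hξ).1) (Finset.range P.N) P.c P.Λ
  refine ⟨J, fun x => ?_⟩
  simp only [P.sharpSum_sub_smoothSum hone hzero]
  refine tsum_eq_sum fun j hj => ?_
  rw [hJ _ (by grind), norm_zero, zero_pow two_ne_zero]

lemma squareSum_range_succ_le (f : ℕ → ℝ → ℂ) (J : ℕ) (x : ℝ) :
    squareSum (Finset.range J) (fun j => f (j + 1)) x ≤ squareSum (Finset.range (J + 1)) f x := by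
  rw [squareSum, squareSum, Finset.sum_range_succ']
  exact le_add_of_nonneg_right (sq_nonneg _)

end SquareFunctionOfTrigPoly

section Stepanov

variable {f : ℝ → ℝ} {p : ℕ}

lemma ofReal_intervalIntegral_abs_rpow (hf : Continuous f) (p : ℕ) (x : ℝ) :
    ENNReal.ofReal (∫ s in x..(x + 1), |f s| ^ (p : ℝ)) =
      ∫⁻ u in Set.Icc 0 1, ‖f (u + x)‖ₑ ^ p := by
  have hcont : Continuous fun u => |f (u + x)| ^ p := by fun_prop
  simp only [Real.rpow_natCast]
  rw [add_comm x 1]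
  nth_rw 1 [← zero_add x]
  rw [← intervalIntegral.integral_comp_add_right (fun s => |f s| ^ p) x,
    intervalIntegral.integral_of_le zero_le_one, ← integral_Icc_eq_integral_Ioc,
    ofReal_integral_eq_lintegral_ofReal hcont.integrableOn_Icc
      (.of_forall fun u => by positivity)]
  refine lintegral_congr fun u => ?_
  rw [ENNReal.ofReal_pow (abs_nonneg _), ← Real.norm_eq_abs, ofReal_norm]

lemma bddAbove_intervalIntegral_abs_rpow (hf : Continuous f) {B : ℝ} (hB : ∀ x, |f x| ≤ B)
    (p : ℕ) : BddAbove (Set.range fun x => ∫ s in x..(x + 1), |f s| ^ (p : ℝ)) := by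
  refine ⟨B ^ p, Set.forall_mem_range.mpr fun x => ?_⟩
  simp only [Real.rpow_natCast]
  calc ∫ s in x..(x + 1), |f s| ^ p ≤ ∫ _ in x..(x + 1), B ^ p :=
        intervalIntegral.integral_mono_on (by linarith)
          ((hf.abs.pow p).intervalIntegrable _ _) intervalIntegrable_const
          fun s _ => pow_le_pow_left₀ (abs_nonneg _) (hB s) p
    _ = B ^ p := by simp

lemma iSup_intervalIntegral_abs_rpow_nonneg (f : ℝ → ℝ) (q : ℝ) :
    0 ≤ ⨆ x, ∫ s in x..(x + 1), |f s| ^ q :=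
  Real.iSup_nonneg fun x =>
    intervalIntegral.integral_nonneg (by linarith) fun s _ => by positivity

lemma stepanovNorm_nonneg (q : ℝ) (f : ℝ → ℝ) : 0 ≤ stepanovNorm q f :=
  Real.rpow_nonneg (iSup_intervalIntegral_abs_rpow_nonneg f q) _

lemma lintegral_le_ofReal_stepanovNorm_pow (hf : Continuous f) {B : ℝ} (hB : ∀ x, |f x| ≤ B)
    (hp : p ≠ 0) (x : ℝ) :
    ∫⁻ u in Set.Icc 0 1, ‖f (u + x)‖ₑ ^ p ≤ .ofReal (stepanovNorm p f ^ p) := by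
  rw [← ofReal_intervalIntegral_abs_rpow hf, stepanovNorm, one_div,
    Real.rpow_inv_natCast_pow (iSup_intervalIntegral_abs_rpow_nonneg f p) hp]
  exact ENNReal.ofReal_le_ofReal
    (le_ciSup (bddAbove_intervalIntegral_abs_rpow hf hB p) x)

lemma stepanovNorm_le_of_lintegral_le (hf : Continuous f) (hp : p ≠ 0) {B : ℝ} (hB : 0 ≤ B)
    (h : ∀ x, ∫⁻ u in Set.Icc 0 1, ‖f (u + x)‖ₑ ^ p ≤ .ofReal (B ^ p)) :
    stepanovNorm p f ≤ B := by
  rw [← Real.pow_rpow_inv_natCast hB hp, stepanovNorm, one_div]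
  refine Real.rpow_le_rpow (iSup_intervalIntegral_abs_rpow_nonneg f p) (ciSup_le fun x => ?_)
    (by positivity)
  rw [← ENNReal.ofReal_le_ofReal_iff (pow_nonneg hB p), ofReal_intervalIntegral_abs_rpow hf]
  exact h x

lemma enorm_sqrt_pow_two_pow {a : ℝ} (ha : 0 ≤ a) (m : ℕ) :
    ‖Real.sqrt a‖ₑ ^ 2 ^ (m + 1) = ENNReal.ofReal a ^ 2 ^ m := by
  rw [pow_succ', pow_mul, ← enorm_pow, Real.sq_sqrt ha, Real.enorm_of_nonneg ha]

theorem exists_stepanovNorm_sqrt_squareSum_truncatedPiece_le {φ ψ : SchwartzMap ℝ ℂ} (m : ℕ)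
    {α : ℝ} (hα : 0 < α) (hφ : ∀ ξ, |ξ| ≤ 1 / 2 → myFourier φ ξ = 1)
    (hψ : ∀ ξ, myFourier ψ ξ ≠ 0 → 1 / 2 < |ξ| ∧ |ξ| ≤ 2) :
    ∃ C : ℝ, 0 < C ∧ ∀ {ι : Type} (s : Finset ι) (c : ι → ℂ) (l : ι → ℝ) (J : ℕ),
      (∀ i ∈ s, ∀ i' ∈ s, l i < l i' → α ≤ l i' - l i) →
      stepanovNorm (2 ^ (m + 1) : ℕ) (fun x =>
          Real.sqrt (squareSum (Finset.range J) (fun j => truncatedPiece ψ s c l (j + 1)) x)) ≤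
        C * stepanovNorm (2 ^ (m + 1) : ℕ) (fun x => ‖trigSum s c l x‖) := by
  obtain ⟨C, hC, hmain⟩ := exists_lintegral_squareSum_truncatedPiece_le m hα hφ hψ
  refine ⟨C.toReal + 1, by positivity, fun s c l J hl => ?_⟩
  have hp : 2 ^ (m + 1) ≠ 0 := by positivity
  have hcont : Continuous fun x => ‖trigSum s c l x‖ := (continuous_trigSum s c l).norm
  set B := stepanovNorm (2 ^ (m + 1) : ℕ) fun x => ‖trigSum s c l x‖
  have hB : 0 ≤ B := stepanovNorm_nonneg _ _
  have hbound (x : ℝ) := lintegral_le_ofReal_stepanovNorm_pow hcont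
    (fun x => (abs_norm _).trans_le (norm_trigSum_le s c l x)) hp x
  simp only [enorm_norm] at hbound
  refine stepanovNorm_le_of_lintegral_le
    (continuous_squareSum _ fun j _ => continuous_truncatedPiece s c l _).sqrt hp
    (by positivity) fun x => ?_
  simp only [enorm_sqrt_pow_two_pow (squareSum_nonneg _ _ _)]
  calc _ ≤ ∫⁻ u in Set.Icc 0 1, ENNReal.ofReal
          (squareSum (Finset.range (J + 1)) (truncatedPiece ψ s c l) (u + x)) ^ 2 ^ m :=
        lintegral_mono fun u => pow_le_pow_left'
          (ENNReal.ofReal_le_ofReal (squareSum_range_succ_le (truncatedPiece ψ s c l) J _)) _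
    _ ≤ C * .ofReal (B ^ 2 ^ (m + 1)) := hmain s c l (J + 1) x hl hbound
    _ ≤ .ofReal ((C.toReal + 1) ^ 2 ^ (m + 1)) * .ofReal (B ^ 2 ^ (m + 1)) := by
        gcongr
        refine (ENNReal.ofReal_toReal hC).symm.trans_le (ENNReal.ofReal_le_ofReal ?_)
        exact (lt_add_one _).le.trans (le_self_pow₀ (by linarith [C.toReal_nonneg]) hp)
    _ = _ := by rw [← ENNReal.ofReal_mul (by positivity), mul_pow]

end Stepanov

theorem stmt_14_general (k : ℕ) (hk : 1 ≤ k) (α : ℝ) (hα : 0 < α) (φ : SchwartzMap ℝ ℂ)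
    (hsupp : Function.support (fun ξ : ℝ => myFourier (fun t => φ t) ξ) ⊆ Set.Icc (-1 : ℝ) 1)
    (hone : ∀ ξ ∈ Set.Icc (-(1 : ℝ) / 2) (1 / 2), myFourier (fun t => φ t) ξ = 1) :
    ∃ C : ℝ, 0 < C ∧ ∀ P : TrigPoly, P.sep α →
      stepanovNorm ((2 : ℝ) ^ k)
          (fun s => Real.sqrt (∑' j : ℕ,
            ‖P.sharpSum (j + 1) s - TrigPoly.smoothSum (fun t => φ t) P (j + 1) s‖ ^ 2))
        ≤ C * stepanovNorm ((2 : ℝ) ^ k) (fun s => ‖P.eval s‖) := by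
  obtain ⟨m, rfl⟩ := Nat.exists_eq_add_of_le' hk
  have hφone : ∀ ξ, |ξ| ≤ 1 / 2 → myFourier φ ξ = 1 := fun ξ hξ =>
    hone ξ (by rwa [neg_div, Set.mem_Icc, ← abs_le])
  have hφzero : ∀ ξ, 1 < |ξ| → myFourier φ ξ = 0 := fun ξ hξ => by
    by_contra hne
    exact hξ.not_ge (abs_le.mpr (hsupp hne))
  have hannulus := annulus_of_myFourier_annularBump_ne_zero hφone hφzero
  obtain ⟨C, hC, hmain⟩ :=
    exists_stepanovNorm_sqrt_squareSum_truncatedPiece_le m hα hφone hannulus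
  refine ⟨C, hC, fun P hP => ?_⟩
  obtain ⟨J, hJ⟩ := exists_tsum_sharpSum_sub_smoothSum_eq hφone hφzero P
  have hsep : ∀ n ∈ Finset.range P.N, ∀ n' ∈ Finset.range P.N, P.Λ n < P.Λ n' →
      α ≤ P.Λ n' - P.Λ n := fun n hn n' hn' =>
    hP.le_sub (Finset.mem_range.mp hn) (Finset.mem_range.mp hn')
  simp only [hJ]
  exact_mod_cast hmain (Finset.range P.N) P.c P.Λ J hsep

/-- Square function bound: with `φ` Schwartz, `φ̂` real-valued with values in `[0,1]`,
`supp φ̂ ⊆ [-1,1]` and `φ̂ = 1` on `[-1/2, 1/2]`, for every `k ≥ 1` and `α > 0` there is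
`C = C(k, α, φ) > 0` such that `‖(Σ_{j≥1} |S_j f - R_j f|²)^{1/2}‖_{S^{2^k}} ≤ C ‖f‖_{S^{2^k}}`
for every `α`-separated trigonometric polynomial `f`. -/
theorem stmt_14 (k : ℕ) (hk : 1 ≤ k) (α : ℝ) (hα : 0 < α) (φ : SchwartzMap ℝ ℂ)
    (hreal : ∀ ξ : ℝ, (myFourier (fun t => φ t) ξ).im = 0)
    (hrange : ∀ ξ : ℝ, 0 ≤ (myFourier (fun t => φ t) ξ).re
      ∧ (myFourier (fun t => φ t) ξ).re ≤ 1)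
    (hsupp : Function.support (fun ξ : ℝ => myFourier (fun t => φ t) ξ)
      ⊆ Set.Icc (-1 : ℝ) 1)
    (hone : ∀ ξ ∈ Set.Icc (-(1 : ℝ) / 2) (1 / 2), myFourier (fun t => φ t) ξ = 1) :
    ∃ C : ℝ, 0 < C ∧ ∀ P : TrigPoly, P.sep α →
      stepanovNorm ((2 : ℝ) ^ k)
          (fun s => Real.sqrt (∑' j : ℕ,
            ‖P.sharpSum (j + 1) s - TrigPoly.smoothSum (fun t => φ t) P (j + 1) s‖ ^ 2))
        ≤ C * stepanovNorm ((2 : ℝ) ^ k) (fun s => ‖P.eval s‖) :=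
  stmt_14_general k hk α hα φ hsupp hone
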